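/- arXiv:1912.05406 — 13 statements merged into one kernel-verified Lean document; each statement's English description precedes it below -/
import Mathlib

section
/- For every integer n ≥ 1, if G is an induced subgraph of the n-dimensional hypercube graph Q_n on exactly 2^(n-1) + 1 vertices, then the maximum degree of G is at least √n. -/
/-- The hypercube graph `Q_n` on vertex set `{0,1}^n`: two vertices are adjacent
iff they differ in exactly one coordinate. -/
def Qgraph (n : ℕ) : SimpleGraph (Fin n → Bool) where
  Adj x y := (Finset.univ.filter fun i => x i ≠ y i).card = 1
  symm := by
    constructor
    intro x y h
    have h' : (Finset.univ.filter fun i => y i ≠ x i) =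
        (Finset.univ.filter fun i => x i ≠ y i) :=
      Finset.filter_congr fun i _ => ne_comm
    rw [h']
    exact h
  loopless := by
    constructor
    intro x h
    simp at h

instance QgraphDecidableAdj (n : ℕ) : DecidableRel (Qgraph n).Adj := fun x y =>
  inferInstanceAs (Decidable ((Finset.univ.filter fun i => x i ≠ y i).card = 1))

instance QgraphInduceDecidableAdj (n : ℕ) (S : Finset (Fin n → Bool)) :
    DecidableRel ((Qgraph n).induce (↑S : Set (Fin n → Bool))).Adj := fun a b =>
  QgraphDecidableAdj n a b

namespace HuangAux

variable {n : ℕ}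

/-- Flip the `i`-th coordinate. -/
def fl (i : Fin n) (x : Fin n → Bool) : Fin n → Bool := Function.update x i (!x i)

/-- `±1` sign of a bit. -/
def sg (b : Bool) : ℝ := if b then -1 else 1

lemma sg_not (b : Bool) : sg (!b) = - sg b := by cases b <;> simp [sg]
lemma sg_sq (b : Bool) : sg b * sg b = 1 := by cases b <;> simp [sg]
lemma sg_abs (b : Bool) : |sg b| = 1 := by cases b <;> simp [sg]

/-- Sign of the edge in direction `i` at `x`. -/
def s (i : Fin n) (x : Fin n → Bool) : ℝ := ∏ j ∈ Finset.univ.filter (· < i), sg (x j)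

/-- Parity sign. -/
def p (x : Fin n → Bool) : ℝ := ∏ j, sg (x j)

lemma s_sq (i : Fin n) (x : Fin n → Bool) : s i x * s i x = 1 := by
  unfold s
  rw [← Finset.prod_mul_distrib]
  exact Finset.prod_eq_one fun j _ => sg_sq _

lemma p_sq (x : Fin n → Bool) : p x * p x = 1 := by
  unfold p
  rw [← Finset.prod_mul_distrib]
  exact Finset.prod_eq_one fun j _ => sg_sq _

lemma s_abs (i : Fin n) (x : Fin n → Bool) : |s i x| = 1 := by
  unfold s
  rw [Finset.abs_prod]
  exact Finset.prod_eq_one fun j _ => sg_abs _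

lemma prod_fl_of_mem (t : Finset (Fin n)) (i : Fin n) (hi : i ∈ t) (x : Fin n → Bool) :
    ∏ j ∈ t, sg (fl i x j) = - ∏ j ∈ t, sg (x j) := by
  rw [← Finset.mul_prod_erase t _ hi, ← Finset.mul_prod_erase t (fun j => sg (x j)) hi]
  have : ∏ j ∈ t.erase i, sg (fl i x j) = ∏ j ∈ t.erase i, sg (x j) := by
    refine Finset.prod_congr rfl fun j hj => ?_
    simp [fl, Function.update_of_ne (Finset.ne_of_mem_erase hj)]
  rw [this]
  simp [fl, sg_not]

lemma prod_fl_of_notMem (t : Finset (Fin n)) (i : Fin n) (hi : i ∉ t) (x : Fin n → Bool) :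
    ∏ j ∈ t, sg (fl i x j) = ∏ j ∈ t, sg (x j) := by
  refine Finset.prod_congr rfl fun j hj => ?_
  have : j ≠ i := fun h => hi (h ▸ hj)
  simp [fl, Function.update_of_ne this]

lemma s_fl_lt {i j : Fin n} (h : i < j) (x : Fin n → Bool) : s j (fl i x) = - s j x :=
  prod_fl_of_mem _ i (by simpa using h) x

lemma s_fl_ge {i j : Fin n} (h : j ≤ i) (x : Fin n → Bool) : s j (fl i x) = s j x :=
  prod_fl_of_notMem _ i (by simpa using h) x

lemma p_fl (i : Fin n) (x : Fin n → Bool) : p (fl i x) = - p x :=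
  prod_fl_of_mem _ i (by simp) x

lemma fl_fl (i : Fin n) (x : Fin n → Bool) : fl i (fl i x) = x := by
  simp [fl]

lemma fl_comm (i j : Fin n) (x : Fin n → Bool) : fl i (fl j x) = fl j (fl i x) := by
  rcases eq_or_ne i j with rfl | h
  · rfl
  · simp only [fl, Function.update_of_ne h, Function.update_of_ne h.symm]
    exact Function.update_comm h.symm _ _ _

/-- The signed adjacency operator. -/
def A (n : ℕ) : ((Fin n → Bool) → ℝ) →ₗ[ℝ] ((Fin n → Bool) → ℝ) where
  toFun f x := ∑ i, s i x * f (fl i x)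
  map_add' f g := by
    ext x; simp [mul_add, Finset.sum_add_distrib]
  map_smul' c f := by
    ext x
    simp only [Pi.smul_apply, smul_eq_mul, RingHom.id_apply, Finset.mul_sum]
    exact Finset.sum_congr rfl fun i _ => by ring

lemma A_apply (f : (Fin n → Bool) → ℝ) (x) : A n f x = ∑ i, s i x * f (fl i x) := rfl

lemma A_sq (f : (Fin n → Bool) → ℝ) : A n (A n f) = (n : ℝ) • f := by
  ext x
  simp only [A_apply, Pi.smul_apply, smul_eq_mul, Finset.mul_sum]
  set T : Fin n → Fin n → ℝ := fun i j => s i x * (s j (fl i x) * f (fl j (fl i x))) with hT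
  have hanti : ∀ i j, i < j → T i j = - T j i := by
    intro i j h
    simp only [hT]
    rw [s_fl_lt h, s_fl_ge h.le, fl_comm]
    ring
  have key : ∀ i j, T i j + T j i = if i = j then 2 * f x else 0 := by
    intro i j
    rcases lt_trichotomy i j with h | rfl | h
    · rw [hanti i j h, if_neg h.ne]; ring
    · simp only [hT, if_true]
      rw [s_fl_ge le_rfl, fl_fl]
      linear_combination (2 * f x) * s_sq i x
    · rw [hanti j i h, if_neg h.ne']; ring
  have h2 : ∑ i, ∑ j, T i j + ∑ i, ∑ j, T j i = 2 * ((n : ℝ) * f x) := by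
    simp only [← Finset.sum_add_distrib, key]
    simp
    ring
  rw [Finset.sum_comm (f := fun i j => T j i)] at h2
  linarith

/-- Multiplication by parity. -/
def D (n : ℕ) : ((Fin n → Bool) → ℝ) →ₗ[ℝ] ((Fin n → Bool) → ℝ) where
  toFun f x := p x * f x
  map_add' f g := by ext x; simp [mul_add]
  map_smul' c f := by ext x; simp; ring

lemma D_inj : Function.Injective (D n) := by
  intro f g h
  ext x
  have h1 : p x * f x = p x * g x := congrFun h x
  linear_combination p x * h1 - (f x - g x) * p_sq x

lemma A_D (f : (Fin n → Bool) → ℝ) : A n (D n f) = - D n (A n f) := by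
  ext x
  change ∑ i, s i x * (p (fl i x) * f (fl i x)) = - (p x * ∑ i, s i x * f (fl i x))
  rw [Finset.mul_sum, ← Finset.sum_neg_distrib]
  exact Finset.sum_congr rfl fun i _ => by rw [p_fl]; ring

/-- `A - √n`. -/
noncomputable def B (n : ℕ) : ((Fin n → Bool) → ℝ) →ₗ[ℝ] ((Fin n → Bool) → ℝ) :=
  A n - Real.sqrt n • LinearMap.id

lemma B_apply (f : (Fin n → Bool) → ℝ) : B n f = A n f - Real.sqrt n • f := rfl

lemma finrank_ker : 2 ^ n ≤ 2 * Module.finrank ℝ (LinearMap.ker (B n)) := by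
  have h1 := LinearMap.finrank_range_add_finrank_ker (B n)
  have h2 : Module.finrank ℝ ((Fin n → Bool) → ℝ) = 2 ^ n := by simp
  have h3 : (LinearMap.range (B n)).map (D n) ≤ LinearMap.ker (B n) := by
    rintro _ ⟨_, ⟨f, rfl⟩, rfl⟩
    rw [LinearMap.mem_ker, B_apply, A_D, ← map_smul, ← map_neg, ← map_sub]
    have : -(A n) (B n f) - Real.sqrt n • B n f = 0 := by
      rw [B_apply, map_sub, map_smul, A_sq, smul_sub, smul_smul,
        Real.mul_self_sqrt (Nat.cast_nonneg n)]
      abel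
    rw [this, map_zero]
  have h4 := Submodule.finrank_mono h3
  have h5 := (Submodule.equivMapOfInjective (D n) D_inj (LinearMap.range (B n))).finrank_eq
  omega

lemma exists_vec (hn : 1 ≤ n) (S : Finset (Fin n → Bool)) (hS : S.card = 2 ^ (n - 1) + 1) :
    ∃ f : (Fin n → Bool) → ℝ, f ≠ 0 ∧ A n f = Real.sqrt n • f ∧ ∀ x ∉ S, f x = 0 := by
  let R : LinearMap.ker (B n) →ₗ[ℝ] ((Sᶜ : Finset _) → ℝ) :=
    (LinearMap.funLeft ℝ ℝ (fun x : (Sᶜ : Finset (Fin n → Bool)) => (x : Fin n → Bool))).comp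
      (LinearMap.ker (B n)).subtype
  have hlt : Module.finrank ℝ ((Sᶜ : Finset (Fin n → Bool)) → ℝ)
      < Module.finrank ℝ (LinearMap.ker (B n)) := by
    have h := finrank_ker (n := n)
    obtain ⟨m, rfl⟩ : ∃ m, n = m + 1 := ⟨n - 1, by omega⟩
    have hc : (Sᶜ).card = 2 ^ (m + 1) - (2 ^ m + 1) := by
      rw [Finset.card_compl, hS]; simp
    rw [Module.finrank_fintype_fun_eq_card, Fintype.card_coe, hc]
    have : 0 < 2 ^ m := by positivity
    rw [pow_succ] at *
    omega
  obtain ⟨f, hf, hf0⟩ := Submodule.exists_mem_ne_zero_of_ne_bot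
    (LinearMap.ker_ne_bot_of_finrank_lt (f := R) hlt)
  refine ⟨f.1, fun h => hf0 (Subtype.ext h), ?_, fun x hx => ?_⟩
  · have := f.2
    rw [LinearMap.mem_ker, B_apply] at this
    exact sub_eq_zero.mp this
  · exact congrFun (LinearMap.mem_ker.mp hf) ⟨x, by simpa using hx⟩

lemma fl_inj (x : Fin n → Bool) : Function.Injective (fun i => fl i x) := by
  intro i j h
  by_contra hne
  have := congrFun h i
  simp [fl, Function.update_of_ne hne] at this

lemma adj_fl (i : Fin n) (x : Fin n → Bool) : (Qgraph n).Adj x (fl i x) := by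
  have h : (Finset.univ.filter fun j => x j ≠ fl i x j).card = 1 := by
    rw [Finset.card_eq_one]
    refine ⟨i, ?_⟩
    ext j
    rw [Finset.mem_filter, Finset.mem_singleton]
    rcases eq_or_ne j i with rfl | h
    · simp [fl]
    · simp [fl, Function.update_of_ne h, h]
  exact h

end HuangAux

open HuangAux in
theorem huang_sensitivity (n : ℕ) (hn : 1 ≤ n) (S : Finset (Fin n → Bool))
    (hS : S.card = 2 ^ (n - 1) + 1) :
    Real.sqrt n ≤ (((Qgraph n).induce (↑S : Set (Fin n → Bool))).maxDegree : ℝ) := by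
  obtain ⟨f, hf0, hA, hsupp⟩ := exists_vec hn S hS
  obtain ⟨x, hx⟩ := Finite.exists_max (fun x => |f x|)
  have hpos : 0 < |f x| := by
    obtain ⟨y, hy⟩ := Function.ne_iff.mp hf0
    exact lt_of_lt_of_le (abs_pos.mpr hy) (hx y)
  have hxS : x ∈ S := by
    by_contra h
    rw [hsupp x h] at hpos
    simp at hpos
  have h1 : Real.sqrt n * |f x| ≤
      ((Finset.univ.filter fun i => fl i x ∈ S).card : ℝ) * |f x| := by
    calc Real.sqrt n * |f x| = |(Real.sqrt n • f) x| := by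
          rw [Pi.smul_apply, smul_eq_mul, abs_mul, abs_of_nonneg (Real.sqrt_nonneg _)]
      _ = |∑ i, s i x * f (fl i x)| := by rw [← hA, A_apply]
      _ ≤ ∑ i, |s i x * f (fl i x)| := Finset.abs_sum_le_sum_abs _ _
      _ ≤ ∑ i, (if fl i x ∈ S then |f x| else 0) := by
          refine Finset.sum_le_sum fun i _ => ?_
          rw [abs_mul, s_abs, one_mul]
          split_ifs with h
          · exact hx _
          · rw [hsupp _ h, abs_zero]
      _ = _ := by rw [← Finset.sum_filter, Finset.sum_const, nsmul_eq_mul]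
  have h2 := le_of_mul_le_mul_right h1 hpos
  refine h2.trans ?_
  norm_cast
  refine le_trans ?_ (SimpleGraph.degree_le_maxDegree _ (⟨x, hxS⟩ : (↑S : Set (Fin n → Bool))))
  rw [← SimpleGraph.card_neighborFinset_eq_degree]
  refine Finset.card_le_card_of_injOn
    (fun i => if h : fl i x ∈ S then ⟨fl i x, h⟩ else ⟨x, hxS⟩) ?_ ?_
  · intro i hi
    have hi' : fl i x ∈ S := by simpa using hi
    simp only [hi', dif_pos, Finset.mem_coe, SimpleGraph.mem_neighborFinset]
    exact adj_fl i x
  · intro i hi j hj hij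
    have hi' : fl i x ∈ S := by simpa using hi
    have hj' : fl j x ∈ S := by simpa using hj
    simp only [hi', hj', dif_pos] at hij
    exact fl_inj x (congrArg Subtype.val hij)
end

section
/- For every Boolean function f : {0,1}^n → {0,1}, the block sensitivity satisfies bs(f) ≤ 2·s(f)^4. -/
/-- The real value of a bit: `true ↦ 1`, `false ↦ 0`. -/
def bval (b : Bool) : ℝ := if b then 1 else 0

/-- The sensitivity `s(f)` of a Boolean function `f : {0,1}^n → {0,1}`:
the maximum over inputs `x` of the number of coordinates `i` such that flipping
the `i`-th bit of `x` changes the value of `f`. -/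
def sens {n : ℕ} (f : (Fin n → Bool) → Bool) : ℕ :=
  Finset.univ.sup fun x : Fin n → Bool =>
    (Finset.univ.filter fun i : Fin n => f (Function.update x i (!x i)) ≠ f x).card

/-- The block sensitivity `bs(f)` of a Boolean function `f : {0,1}^n → {0,1}`:
the maximum `t` such that there are an input `x` and `t` pairwise disjoint nonempty
blocks `B₁, …, B_t` of coordinates, flipping any one of which changes the value of `f`. -/
noncomputable def blockSens {n : ℕ} (f : (Fin n → Bool) → Bool) : ℕ :=
  sSup {t : ℕ | ∃ x : Fin n → Bool, ∃ B : Fin t → Finset (Fin n),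
    (∀ i, (B i).Nonempty) ∧ (∀ i j, i ≠ j → Disjoint (B i) (B j)) ∧
    (∀ i, f (fun k => if k ∈ B i then !x k else x k) ≠ f x)}

/-- A multivariate polynomial is multilinear if each variable occurs with exponent
at most 1 in every monomial. -/
def Multilinear {n : ℕ} (p : MvPolynomial (Fin n) ℝ) : Prop :=
  ∀ m ∈ p.support, ∀ i : Fin n, m i ≤ 1

/-- A real polynomial `p` represents the Boolean function `f` if `p(x) = f(x)` for
all `x ∈ {0,1}^n`. -/
def Represents {n : ℕ} (p : MvPolynomial (Fin n) ℝ) (f : (Fin n → Bool) → Bool) : Prop :=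
  ∀ x : Fin n → Bool, MvPolynomial.eval (fun i => bval (x i)) p = bval (f x)

/-- A real polynomial `p` approximates the Boolean function `f` if
`|p(x) − f(x)| < 1/3` for all `x ∈ {0,1}^n`. -/
def Approximates {n : ℕ} (p : MvPolynomial (Fin n) ℝ) (f : (Fin n → Bool) → Bool) : Prop :=
  ∀ x : Fin n → Bool, |MvPolynomial.eval (fun i => bval (x i)) p - bval (f x)| < 1 / 3

namespace BS

open Finset Polynomial

section Mob
variable {α : Type*} [DecidableEq α]

noncomputable def mob (G : Finset α → ℝ) (S : Finset α) : ℝ :=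
  ∑ T ∈ S.powerset, (-1) ^ (S.card + T.card) * G T

lemma mob_insert (G : Finset α → ℝ) {a : α} {S : Finset α} (h : a ∉ S) :
    mob G (insert a S) = mob (fun T => G (insert a T)) S - mob G S := by
  unfold mob
  rw [sum_powerset_insert h, add_comm, sub_eq_add_neg, ← sum_neg_distrib]
  congr 1
  · refine sum_congr rfl fun T hT => ?_
    have : a ∉ T := fun h' => h (mem_powerset.1 hT h')
    rw [card_insert_of_notMem h, card_insert_of_notMem this]
    ring
  · refine sum_congr rfl fun T hT => ?_
    rw [card_insert_of_notMem h]
    ring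

lemma mob_eq_zero (G : Finset α → ℝ) {a : α} {S : Finset α} (h : a ∈ S)
    (hG : ∀ T, G (insert a T) = G T) : mob G S = 0 := by
  rw [← insert_erase h, mob_insert _ (notMem_erase a S)]
  simp [hG]

lemma L_insert (G : Finset α → ℝ) (t : ℝ) {a : α} {A : Finset α} (h : a ∉ A) :
    ∑ S ∈ (insert a A).powerset, mob G S * t ^ S.card =
      (1 - t) * ∑ S ∈ A.powerset, mob G S * t ^ S.card +
      t * ∑ S ∈ A.powerset, mob (fun T => G (insert a T)) S * t ^ S.card := by
  rw [sum_powerset_insert h, mul_sum, mul_sum, ← sum_add_distrib, ← sum_add_distrib]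
  refine sum_congr rfl fun T hT => ?_
  have : a ∉ T := fun h' => h (mem_powerset.1 hT h')
  rw [mob_insert _ this, card_insert_of_notMem this]
  ring

lemma L_bound (t : ℝ) (h0 : 0 ≤ t) (h1 : t ≤ 1) (A : Finset α) : ∀ (G : Finset α → ℝ),
    (∀ T, |G T| ≤ 1) → |∑ S ∈ A.powerset, mob G S * t ^ S.card| ≤ 1 := by
  induction A using Finset.induction_on with
  | empty => intro G hG; simpa [mob] using hG ∅
  | insert a A h ih =>
    intro G hG
    rw [L_insert G t h]
    have e1 := abs_le.1 (ih G hG)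
    have e2 := abs_le.1 (ih (fun T => G (insert a T)) (fun T => hG _))
    rw [abs_le]
    constructor <;> nlinarith

lemma mob_inv (A : Finset α) : ∀ (G : Finset α → ℝ),
    ∑ S ∈ A.powerset, mob G S = G A := by
  induction A using Finset.induction_on with
  | empty => intro G; simp [mob]
  | insert a A h ih =>
    intro G
    have := L_insert G 1 h
    simp only [one_pow, mul_one, sub_self, zero_mul, zero_add, one_mul] at this
    rw [this, ih]

lemma mob_biUnion {β : Type*} [DecidableEq β] [Fintype α] (F : Finset α → ℝ) (d : ℕ)
    (hF : ∀ U, d < U.card → mob F U = 0) (B : β → Finset α)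
    (hB : ∀ i j, i ≠ j → Disjoint (B i) (B j)) (S : Finset β) (hS : d < S.card) :
    mob (fun T => F (T.biUnion B)) S = 0 := by
  have key : mob (fun T => F (T.biUnion B)) S =
      ∑ U : Finset α, mob F U * mob (fun T => if U ⊆ T.biUnion B then 1 else 0) S := by
    have : ∀ A, F A = ∑ U : Finset α, mob F U * (if U ⊆ A then 1 else 0) := by
      intro A
      rw [← mob_inv A F]
      simp only [mul_ite, mul_one, mul_zero]
      rw [← sum_filter]
      refine sum_congr ?_ fun _ _ => rfl
      ext U; simp
    conv_lhs => unfold mob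
    simp_rw [this, mul_sum]
    rw [sum_comm]
    refine sum_congr rfl fun U _ => ?_
    unfold mob
    rw [mul_sum]
    refine sum_congr rfl fun T _ => ?_
    ring
  rw [key]
  refine sum_eq_zero fun U _ => ?_
  by_cases hU : d < U.card
  · rw [hF U hU, zero_mul]
  have : ∃ i ∈ S, Disjoint U (B i) := by
    by_contra! hc
    have : ∀ i ∈ S, ∃ k, k ∈ U ∧ k ∈ B i := fun i hi => Finset.not_disjoint_iff.1 (hc i hi)
    obtain ⟨i₀, hi₀⟩ : S.Nonempty := card_pos.1 (by omega)
    obtain ⟨k₀, -⟩ := this i₀ hi₀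
    haveI hne : Nonempty α := ⟨k₀⟩
    choose! k hk using this
    have : S.card ≤ U.card := by
      refine card_le_card_of_injOn k (fun i hi => (hk i hi).1) ?_
      intro i hi j hj hij
      by_contra hne
      exact Finset.disjoint_left.1 (hB i j hne) (hk i hi).2 (hij ▸ (hk j hj).2)
    omega
  obtain ⟨i, hi, hd⟩ := this
  rw [mob_eq_zero _ hi, mul_zero]
  intro T
  have : U ⊆ (insert i T).biUnion B ↔ U ⊆ T.biUnion B := by
    rw [biUnion_insert]
    constructor
    · intro h x hx
      rcases mem_union.1 (h hx) with h' | h'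
      · exact absurd h' (Finset.disjoint_left.1 hd hx)
      · exact h'
    · intro h; exact h.trans subset_union_right
  simp only [this]

/-- Markov at the endpoint applied to the diagonal of the multilinear extension. -/
lemma card_le_sq [Fintype α] (G : Finset α → ℝ) (d : ℕ) (hG : ∀ T, |G T| ≤ 1)
    (hd : ∀ S, d < S.card → mob G S = 0) (h0 : G ∅ = 1) (h1 : ∀ i, G {i} = -1) :
    Fintype.card α ≤ d ^ 2 := by
  set P : ℝ[X] := ∑ S : Finset α, C (mob G S) * (C (1/2) * (1 - X)) ^ S.card with hP
  have hdeg : P.degree ≤ d := by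
    rw [hP]
    refine (degree_sum_le _ _).trans (Finset.sup_le ?_)
    intro S _
    by_cases hS : d < S.card
    · simp [hd S hS]
    · have : (C (1/2) * (1 - X) : ℝ[X]).natDegree ≤ 1 := by compute_degree
      refine natDegree_le_iff_degree_le.1 ?_
      refine (natDegree_C_mul_le _ _).trans ?_
      refine (natDegree_pow_le).trans ?_
      nlinarith
  have hb : ∀ x ∈ Set.Icc (-1:ℝ) 1, |P.eval x| ≤ 1 := by
    intro x hx
    have := L_bound ((1-x)/2) (by linarith [hx.2]) (by linarith [hx.1]) univ G hG
    rw [powerset_univ] at this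
    rw [hP, eval_finsetSum]
    convert this using 3
    simp
    left
    congr 1
    ring
  have := Polynomial.Chebyshev.eval_iterate_derivative_le_of_forall_abs_le_one (k := 1)
    (le_refl 1) hdeg hb
  simp only [Function.iterate_one, Polynomial.Chebyshev.derivative_T_eval_one] at this
  have hder : (derivative P).eval 1 = Fintype.card α := by
    rw [hP, derivative_sum, eval_finsetSum]
    have : ∀ S : Finset α, eval 1 (derivative (C (mob G S) * (C (1/2) * (1 - X)) ^ S.card)) =
        if S.card = 1 then 1 else 0 := by
      intro S
      rw [derivative_C_mul, derivative_pow]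
      split_ifs with h
      · obtain ⟨a, rfl⟩ := card_eq_one.1 h
        have : mob G {a} = -2 := by
          have := mob_insert G (notMem_empty a)
          rw [insert_empty_eq] at this
          rw [this]
          simp [mob, h0, h1]
          norm_num
        rw [this]
        simp
      · rcases Nat.lt_or_gt_of_ne h with h | h
        · have : S.card = 0 := by omega
          simp [this]
        · have : S.card - 1 ≠ 0 := by omega
          simp [this]
    simp_rw [this]
    rw [← sum_filter, sum_const]
    have : (univ.filter fun S : Finset α => S.card = 1) = powersetCard 1 univ := by
      ext S; simp [mem_powersetCard]
    rw [this, card_powersetCard]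
    simp
  rw [hder] at this
  exact_mod_cast this

end Mob

section Huang
variable {α : Type*} [Fintype α] [LinearOrder α]

def flip (T : Finset α) (i : α) : Finset α := symmDiff T {i}

lemma mem_flip {T : Finset α} {i j : α} : j ∈ flip T i ↔ (j ∈ T ∧ j ≠ i) ∨ (j = i ∧ j ∉ T) := by
  simp [flip, mem_symmDiff]

lemma flip_flip (T : Finset α) (i : α) : flip (flip T i) i = T := by
  simp [flip, symmDiff_assoc]

lemma flip_comm (T : Finset α) (i j : α) : flip (flip T i) j = flip (flip T j) i := by
  unfold flip
  rw [symmDiff_assoc, symmDiff_comm ({i} : Finset α), ← symmDiff_assoc]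

def par (T : Finset α) : ℝ := (-1) ^ T.card

lemma par_flip (T : Finset α) (i : α) : par (flip T i) = - par T := by
  unfold par
  by_cases h : i ∈ T
  · have : flip T i = T.erase i := by
      ext j; rw [mem_flip, mem_erase]; constructor
      · rintro (h1 | h1)
        · exact ⟨h1.2, h1.1⟩
        · exact absurd (h1.1 ▸ h) h1.2
      · rintro h1; exact Or.inl ⟨h1.2, h1.1⟩
    rw [this, ← card_erase_add_one h]; ring
  · have : flip T i = insert i T := by
      ext j; rw [mem_flip, mem_insert]; constructor
      · rintro (h1 | h1)
        · exact Or.inr h1.1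
        · exact Or.inl h1.1
      · rintro (h1 | h1)
        · exact Or.inr ⟨h1, h1 ▸ h⟩
        · exact Or.inl ⟨h1, fun e => h (e ▸ h1)⟩
    rw [this, card_insert_of_notMem h]; ring

lemma par_sq (T : Finset α) : par T * par T = 1 := by
  unfold par; rw [← mul_pow]; simp

def sg (i : α) (T : Finset α) : ℝ := par (T.filter (· < i))

lemma sg_sq (i : α) (T : Finset α) : sg i T * sg i T = 1 := par_sq _

lemma sg_abs (i : α) (T : Finset α) : |sg i T| = 1 := by
  simp [sg, par]

lemma sg_flip_le {i j : α} (h : i ≤ j) (T : Finset α) : sg i (flip T j) = sg i T := by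
  unfold sg
  congr 1
  ext k
  simp only [mem_filter, mem_flip]
  constructor
  · rintro ⟨h1 | h1, h2⟩
    · exact ⟨h1.1, h2⟩
    · exact absurd (h1.1 ▸ h2) (not_lt.2 h)
  · rintro ⟨h1, h2⟩
    exact ⟨Or.inl ⟨h1, fun e => absurd (e ▸ h2) (not_lt.2 h)⟩, h2⟩

lemma sg_flip_lt {i j : α} (h : j < i) (T : Finset α) : sg i (flip T j) = - sg i T := by
  unfold sg
  rw [← par_flip _ j]
  congr 1
  ext k
  simp only [mem_filter, mem_flip]
  by_cases e : k = j
  · subst e; simp [h]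
  · simp [e]

noncomputable def A : (Finset α → ℝ) →ₗ[ℝ] (Finset α → ℝ) where
  toFun v T := ∑ i, sg i T * v (flip T i)
  map_add' v w := by ext T; simp [mul_add, sum_add_distrib]
  map_smul' c v := by
    ext T; simp only [Pi.smul_apply, smul_eq_mul, RingHom.id_apply, mul_sum]
    exact sum_congr rfl fun _ _ => by ring

lemma A_apply (v : Finset α → ℝ) (T) : A v T = ∑ i, sg i T * v (flip T i) := rfl

lemma A_A (v : Finset α → ℝ) : A (A v) = (Fintype.card α : ℝ) • v := by
  ext T
  simp only [A_apply, mul_sum, Pi.smul_apply, smul_eq_mul]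
  set g : α → α → ℝ := fun i j => sg i T * (sg j (flip T i) * v (flip (flip T i) j)) with hg
  have hanti : ∀ i j, i < j → g i j = - g j i := by
    intro i j h
    simp only [hg]
    rw [sg_flip_lt h, sg_flip_le h.le, flip_comm]; ring
  have hanti' : ∀ i j, i ≠ j → g i j = - g j i := by
    intro i j h
    rcases lt_or_gt_of_ne h with h | h
    · exact hanti i j h
    · rw [hanti j i h]; simp
  have hdiag : ∀ i, g i i = v T := by
    intro i
    simp only [hg]
    rw [sg_flip_le le_rfl, flip_flip, ← mul_assoc, sg_sq, one_mul]
  have h1 : ∀ i j, g i j + g j i = if i = j then 2 * v T else 0 := by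
    intro i j
    split_ifs with h
    · subst h; rw [hdiag]; ring
    · rw [hanti' i j h]; ring
  have h2 : (∑ i, ∑ j, g i j) + (∑ i, ∑ j, g i j) = 2 * (Fintype.card α * v T) := by
    nth_rewrite 2 [sum_comm]
    rw [← sum_add_distrib]
    simp_rw [← sum_add_distrib, h1]
    simp
    ring
  linarith

noncomputable def D : (Finset α → ℝ) →ₗ[ℝ] (Finset α → ℝ) where
  toFun v T := par T * v T
  map_add' v w := by ext T; simp [mul_add]
  map_smul' c v := by ext T; simp; ring

lemma A_D (v : Finset α → ℝ) : A (D v) = - D (A v) := by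
  ext T
  simp only [A_apply, D, LinearMap.coe_mk, AddHom.coe_mk, Pi.neg_apply, mul_sum, ← sum_neg_distrib]
  refine sum_congr rfl fun i _ => ?_
  rw [par_flip]; ring

lemma D_inj : Function.Injective (D : (Finset α → ℝ) →ₗ[ℝ] (Finset α → ℝ)) := by
  intro v w h
  ext T
  have := congrFun h T
  simp only [D, LinearMap.coe_mk, AddHom.coe_mk] at this
  have h2 := par_sq T
  have h3 : par T ≠ 0 := fun h => by simp [h] at h2
  exact mul_left_cancel₀ h3 this

noncomputable def E (r : ℝ) : Submodule ℝ (Finset α → ℝ) := LinearMap.ker (A - r • LinearMap.id)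

lemma mem_E {r : ℝ} {v : Finset α → ℝ} : v ∈ E r ↔ A v = r • v := by
  simp [E, sub_eq_zero]

lemma finrank_E {r : ℝ} (hr : 0 < r) (h : r * r = Fintype.card α) :
    2 ^ Fintype.card α ≤ 2 * Module.finrank ℝ (E r : Submodule ℝ (Finset α → ℝ)) := by
  have hle : Module.finrank ℝ (E (-r) : Submodule ℝ (Finset α → ℝ)) ≤
      Module.finrank ℝ (E r : Submodule ℝ (Finset α → ℝ)) := by
    have hm : ∀ v ∈ (E (-r) : Submodule ℝ (Finset α → ℝ)), D v ∈ (E r : Submodule ℝ _) := by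
      intro v hv
      rw [mem_E] at hv ⊢
      rw [A_D, hv]; simp
    refine LinearMap.finrank_le_finrank_of_injective (f := D.restrict hm) ?_
    intro v w hvw
    exact Subtype.ext (D_inj (congrArg Subtype.val hvw))
  have hsup : (E r ⊔ E (-r) : Submodule ℝ (Finset α → ℝ)) = ⊤ := by
    rw [eq_top_iff]
    intro v _
    have : v = (1 / (2 * r)) • (A v + r • v) + (1 / (2 * r)) • (r • v - A v) := by
      rw [← smul_add]
      have : A v + r • v + (r • v - A v) = (2 * r) • v := by
        rw [two_mul, add_smul]; abel
      rw [this, smul_smul]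
      rw [one_div_mul_cancel (by positivity), one_smul]
    rw [this]
    refine Submodule.add_mem_sup (Submodule.smul_mem _ _ ?_) (Submodule.smul_mem _ _ ?_)
    · rw [mem_E, map_add, map_smul, A_A, smul_add, smul_smul, h]; abel
    · rw [mem_E, map_sub, map_smul, A_A, smul_sub, smul_smul]
      rw [neg_mul, h, neg_smul, neg_smul]; abel
  have h1 := Submodule.finrank_add_le_finrank_add_finrank (E r : Submodule ℝ (Finset α → ℝ)) (E (-r))
  rw [hsup, finrank_top, Module.finrank_fintype_fun_eq_card, Fintype.card_finset] at h1
  omega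

/-- Huang's theorem. -/
lemma huang_aux (s : ℕ) (H : Finset (Finset α)) (hH : 2 * Hᶜ.card < 2 ^ Fintype.card α)
    (hs : ∀ T ∈ H, (univ.filter fun i => flip T i ∈ H).card ≤ s) : Fintype.card α ≤ s ^ 2 := by
  by_contra! hlt
  have hpos : (0:ℝ) < Fintype.card α := by exact_mod_cast (Nat.zero_le _).trans_lt hlt
  set r := Real.sqrt (Fintype.card α) with hr
  have hr0 : 0 < r := Real.sqrt_pos.2 hpos
  have hrr : r * r = Fintype.card α := Real.mul_self_sqrt hpos.le
  have hfin := finrank_E hr0 hrr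
  let R : (E r : Submodule ℝ (Finset α → ℝ)) →ₗ[ℝ] ((Hᶜ : Finset (Finset α)) → ℝ) :=
    (LinearMap.funLeft ℝ ℝ (fun x : (Hᶜ : Finset (Finset α)) => x.1)).comp (Submodule.subtype _)
  have hker : LinearMap.ker R ≠ ⊥ := by
    refine R.ker_ne_bot_of_finrank_lt ?_
    rw [Module.finrank_fintype_fun_eq_card, Fintype.card_coe]
    omega
  obtain ⟨⟨v, hvE⟩, hvR, hv0⟩ := (Submodule.ne_bot_iff _).1 hker
  have hv0' : v ≠ 0 := fun h => hv0 (Subtype.ext h)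
  have hsupp : ∀ T, T ∉ H → v T = 0 := by
    intro T hT
    have := congrFun (LinearMap.mem_ker.1 hvR) ⟨T, mem_compl.2 hT⟩
    exact this
  rw [mem_E] at hvE
  obtain ⟨T, -, hT⟩ := exists_max_image univ (fun T => |v T|) ⟨(∅ : Finset α), mem_univ _⟩
  have hvT : 0 < |v T| := by
    obtain ⟨T', hT'⟩ := Function.ne_iff.1 hv0'
    exact (abs_pos.2 hT').trans_le (hT T' (mem_univ _))
  have hTH : T ∈ H := by
    by_contra h
    rw [hsupp T h] at hvT; simp at hvT
  have h1 : r * |v T| ≤ s * |v T| := by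
    have e : r * |v T| = |A v T| := by
      rw [hvE]; simp [abs_mul, abs_of_pos hr0]
    rw [e, A_apply]
    calc |∑ i, sg i T * v (flip T i)| ≤ ∑ i, |sg i T * v (flip T i)| := abs_sum_le_sum_abs _ _
      _ = ∑ i, |v (flip T i)| := by simp [abs_mul, sg_abs]
      _ ≤ ∑ i, if flip T i ∈ H then |v T| else 0 := by
        refine sum_le_sum fun i _ => ?_
        split_ifs with h
        · exact hT _ (mem_univ _)
        · rw [hsupp _ h]; simp
      _ = (univ.filter fun i => flip T i ∈ H).card * |v T| := by
        rw [← sum_filter, sum_const, nsmul_eq_mul]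
      _ ≤ s * |v T| := by
        have := hs T hTH
        gcongr
  have h2 : r ≤ s := le_of_mul_le_mul_right h1 hvT
  have h3 : (Fintype.card α : ℝ) ≤ (s:ℝ) ^ 2 := by
    rw [← hrr, sq]; gcongr
  have : Fintype.card α ≤ s ^ 2 := by exact_mod_cast h3
  omega

lemma huang (s : ℕ) (F : Finset α → ℝ) (hF : ∀ T, F T = 1 ∨ F T = -1)
    (hs : ∀ T, (univ.filter fun i => F (flip T i) ≠ F T).card ≤ s)
    (hsum : ∑ T, par T * F T ≠ 0) : Fintype.card α ≤ s ^ 2 := by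
  have hG : ∀ T, par T * F T = 1 ∨ par T * F T = -1 := by
    intro T
    have : par T = 1 ∨ par T = -1 := neg_one_pow_eq_or ℝ _
    rcases this with h | h <;> rcases hF T with h' | h' <;> simp [h, h']
  have main : ∀ c : ℝ, (c = 1 ∨ c = -1) →
      2 * ((univ.filter fun T => par T * F T = c)ᶜ).card < 2 ^ Fintype.card α →
      Fintype.card α ≤ s ^ 2 := by
    intro c hc hcard
    refine huang_aux s _ hcard ?_
    intro T hT
    refine (card_le_card ?_).trans (hs T)
    intro i hi
    simp only [mem_filter, mem_univ, true_and] at hi hT ⊢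
    rw [par_flip, ← hT] at hi
    intro h
    rw [h] at hi
    have : par T * F T = 0 := by linarith
    rcases hG T with h | h <;> rw [this] at h <;> norm_num at h
  set p := (univ.filter fun T => par T * F T = 1) with hp
  set q := (univ.filter fun T => par T * F T = -1) with hq
  have hpq : pᶜ = q := by
    ext T
    simp only [hp, hq, mem_compl, mem_filter, mem_univ, true_and]
    rcases hG T with h | h <;> rw [h] <;> norm_num
  have hcard : p.card + q.card = 2 ^ Fintype.card α := by
    rw [← hpq, card_add_card_compl, Fintype.card_finset]
  have hqp : qᶜ = p := by rw [← hpq, compl_compl]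
  have hne : p.card ≠ q.card := by
    intro h
    apply hsum
    rw [← sum_add_sum_compl p, hpq,
      sum_congr rfl (fun T hT => (mem_filter.1 hT).2 : ∀ T ∈ p, par T * F T = 1),
      sum_congr rfl (fun T hT => (mem_filter.1 hT).2 : ∀ T ∈ q, par T * F T = -1)]
    simp [h]
  rcases Nat.lt_or_gt_of_ne hne with h | h
  · exact main (-1) (Or.inr rfl) (by rw [← hq, hqp]; omega)
  · exact main 1 (Or.inl rfl) (by rw [← hp, hpq]; omega)

/-- degree bound on a subcube -/
lemma huang_mob (s : ℕ) (F : Finset α → ℝ) (hF : ∀ T, F T = 1 ∨ F T = -1)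
    (hs : ∀ T, (univ.filter fun i => F (flip T i) ≠ F T).card ≤ s)
    (U : Finset α) (hU : s ^ 2 < U.card) : mob F U = 0 := by
  by_contra hne
  have := huang (α := U) s (fun T => F (T.map (Function.Embedding.subtype _))) (fun T => hF _) ?_ ?_
  · rw [Fintype.card_coe] at this; omega
  · intro T
    rw [← card_map (Function.Embedding.subtype _)]
    refine (card_le_card ?_).trans (hs (T.map (Function.Embedding.subtype _)))
    intro i hi
    obtain ⟨j, hj, rfl⟩ := mem_map.1 hi
    simp only [mem_filter, mem_univ, true_and] at hj ⊢
    convert hj using 3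
    ext k
    simp only [mem_flip, mem_map, Function.Embedding.subtype_apply, Subtype.exists,
      exists_and_right, exists_eq_right, Subtype.ext_iff]
    by_cases e : k = j.1
    · subst e; simp
    · have e' : ∀ h : k ∈ U, (⟨k, h⟩ : U) ≠ j := fun h h' => e (congrArg Subtype.val h')
      simp [e, e']
  · intro h0
    apply hne
    have : mob F U = (-1) ^ U.card * ∑ T ∈ U.powerset, par T * F T := by
      unfold mob par
      rw [mul_sum]
      exact sum_congr rfl fun T _ => by ring
    rw [this]
    convert mul_zero _
    rw [← h0]
    symm
    refine sum_bij (fun T _ => T.map (Function.Embedding.subtype _)) ?_ ?_ ?_ ?_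
    · intro T _
      rw [mem_powerset]
      intro x hx
      obtain ⟨y, _, rfl⟩ := mem_map.1 hx
      exact y.2
    · intro T _ T' _ h
      exact map_injective _ h
    · intro T hT
      refine ⟨T.subtype (· ∈ U), mem_univ _, ?_⟩
      exact subtype_map_of_mem (fun x hx => mem_powerset.1 hT hx)
    · intro T _
      simp [par]

end Huang

end BS

/-- For every Boolean function `f`, `bs(f) ≤ 2·s(f)⁴`. -/
theorem blockSens_le_two_mul_sens_pow_four (n : ℕ) (f : (Fin n → Bool) → Bool) :
    blockSens f ≤ 2 * sens f ^ 4 := by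
  unfold blockSens
  refine csSup_le' ?_
  rintro t ⟨x, B, -, hdisj, hflip⟩
  let y : Finset (Fin n) → (Fin n → Bool) := fun T k => if k ∈ T then !x k else x k
  let F : Finset (Fin n) → ℝ := fun T => if f (y T) = f x then 1 else -1
  have hF : ∀ T, F T = 1 ∨ F T = -1 := by
    intro T; simp only [F]; split_ifs <;> simp
  have hs : ∀ T, (Finset.univ.filter fun i => F (BS.flip T i) ≠ F T).card ≤ sens f := by
    intro T
    have h1 : (Finset.univ.filter fun i : Fin n =>
        f (Function.update (y T) i (!(y T) i)) ≠ f (y T)).card ≤ sens f :=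
      Finset.le_sup (f := fun x : Fin n → Bool => (Finset.univ.filter fun i : Fin n =>
        f (Function.update x i (!x i)) ≠ f x).card) (Finset.mem_univ (y T))
    refine (Finset.card_le_card ?_).trans h1
    intro i hi
    simp only [Finset.mem_filter, Finset.mem_univ, true_and] at hi ⊢
    intro h
    apply hi
    have : y (BS.flip T i) = Function.update (y T) i (!(y T) i) := by
      funext k
      by_cases e : k = i
      · subst e
        by_cases hk : k ∈ T <;> simp [y, BS.mem_flip, hk]
      · simp [y, BS.mem_flip, e]
    simp only [F, this, h]
  have hdeg := BS.huang_mob (sens f) F hF hs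
  have hB := BS.mob_biUnion F (sens f ^ 2) hdeg B hdisj
  have := BS.card_le_sq (fun T => F (T.biUnion B)) (sens f ^ 2) ?_ hB ?_ ?_
  · rw [Fintype.card_fin, ← pow_mul] at this
    norm_num at this
    omega
  · intro T
    rcases hF (T.biUnion B) with h | h <;> simp [h]
  · simp [F, y]
  · intro i
    simp only [F, Finset.singleton_biUnion]
    rw [if_neg (hflip i)]
end

section
/- For every Boolean function f : {0,1}^n → {0,1}, deg(f) ≥ √(bs(f)/2), i.e. 2·deg(f)^2 ≥ bs(f). -/
open MvPolynomial in
theorem ns_core {t : ℕ} (P : MvPolynomial (Fin t) ℝ)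
    (hb : ∀ S : Finset (Fin t), |eval (fun i => if i ∈ S then (1:ℝ) else 0) P| ≤ 1)
    (hd : ∀ i : Fin t, eval (fun j => if j ∈ ({i} : Finset (Fin t)) then (1:ℝ) else 0) P
      - eval (fun j => if j ∈ (∅ : Finset (Fin t)) then (1:ℝ) else 0) P = -1) :
    t ≤ 2 * P.totalDegree ^ 2 := by
  classical
  -- evaluation at indicators
  have hev : ∀ S : Finset (Fin t), eval (fun i => if i ∈ S then (1:ℝ) else 0) P
      = ∑ m ∈ P.support, P.coeff m * (if m.support ⊆ S then 1 else 0) := by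
    intro S
    rw [MvPolynomial.eval_eq]
    refine Finset.sum_congr rfl fun m _ => ?_
    congr 1
    split_ifs with h
    · refine Finset.prod_eq_one fun i hi => ?_
      simp [h hi]
    · obtain ⟨i, hi, hiS⟩ := Finset.not_subset.1 h
      refine Finset.prod_eq_zero hi ?_
      simp [hiS, Finsupp.mem_support_iff.1 hi]
  set q : Polynomial ℝ := ∑ m ∈ P.support, Polynomial.C (P.coeff m) * Polynomial.X ^ m.support.card with hq
  have hqdeg : q.natDegree ≤ P.totalDegree := by
    refine Polynomial.natDegree_sum_le_of_forall_le _ _ fun m hm => ?_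
    refine (Polynomial.natDegree_C_mul_X_pow_le _ _).trans ?_
    refine le_trans ?_ (MvPolynomial.le_totalDegree hm)
    rw [Finsupp.sum, Finset.card_eq_sum_ones]
    exact Finset.sum_le_sum fun i hi => Nat.one_le_iff_ne_zero.2 (Finsupp.mem_support_iff.1 hi)
  have hw : ∀ (s : ℝ) (T : Finset (Fin t)),
      s ^ T.card = ∑ S : Finset (Fin t), (s ^ S.card * (1 - s) ^ (Sᶜ).card) * (if T ⊆ S then 1 else 0) := by
    intro s T
    have h1 := Fintype.prod_add (fun _ : Fin t => s) (fun i => if i ∈ T then 0 else 1 - s)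
    have h2 : ∏ i : Fin t, (s + (if i ∈ T then 0 else 1 - s)) = s ^ T.card := by
      have : ∀ i : Fin t, (s + (if i ∈ T then 0 else 1 - s)) = if i ∈ T then s else 1 := by
        intro i; split_ifs <;> ring
      simp [this, Finset.prod_ite_mem]
    rw [← h2, h1]
    refine Finset.sum_congr rfl fun S _ => ?_
    rw [mul_assoc]
    simp only [Finset.prod_const]
    congr 1
    split_ifs with h
    · rw [mul_one, ← Finset.prod_const]
      refine Finset.prod_congr rfl fun i hi => ?_
      rw [if_neg fun hT => (Finset.mem_compl.1 hi) (h hT)]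
    · obtain ⟨i, hi, hiS⟩ := Finset.not_subset.1 h
      rw [mul_zero]
      exact Finset.prod_eq_zero (Finset.mem_compl.2 hiS) (by simp [hi])
  have hqe : ∀ s : ℝ, q.eval s = ∑ S : Finset (Fin t), (s ^ S.card * (1 - s) ^ (Sᶜ).card) *
      eval (fun i => if i ∈ S then (1:ℝ) else 0) P := by
    intro s
    simp_rw [hev, Finset.mul_sum]
    rw [Finset.sum_comm, hq, Polynomial.eval_finsetSum]
    refine Finset.sum_congr rfl fun m _ => ?_
    rw [Polynomial.eval_mul, Polynomial.eval_C, Polynomial.eval_pow, Polynomial.eval_X, hw s, Finset.mul_sum]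
    refine Finset.sum_congr rfl fun S _ => ?_
    ring
  have hqb : ∀ s : ℝ, 0 ≤ s → s ≤ 1 → |q.eval s| ≤ 1 := by
    intro s h0 h1
    have h1' : 0 ≤ 1 - s := by linarith
    rw [hqe]
    refine (Finset.abs_sum_le_sum_abs _ _).trans ?_
    have := hw s ∅
    simp only [Finset.card_empty, pow_zero, Finset.empty_subset, if_true, mul_one] at this
    refine le_trans ?_ this.symm.le
    refine Finset.sum_le_sum fun S _ => ?_
    have hp : 0 ≤ s ^ S.card * (1 - s) ^ (Sᶜ).card := by positivity
    rw [abs_mul, abs_of_nonneg hp]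
    exact mul_le_of_le_one_right hp (hb S)
  have hq0 : q.derivative.eval 0 = -t := by
    have e1 : (-t : ℝ) = ∑ i : Fin t, (-1 : ℝ) := by simp
    rw [e1, ← Finset.sum_congr rfl fun i _ => hd i]
    simp_rw [hev, ← Finset.sum_sub_distrib, ← mul_sub]
    rw [Finset.sum_comm, hq, Polynomial.derivative_sum, Polynomial.eval_finsetSum]
    refine Finset.sum_congr rfl fun m _ => ?_
    rw [← Finset.mul_sum]
    simp only [Polynomial.derivative_C_mul, Polynomial.eval_mul, Polynomial.eval_C]
    congr 1
    rw [Polynomial.derivative_X_pow]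
    simp only [Polynomial.eval_mul, Polynomial.eval_C, Polynomial.eval_pow, Polynomial.eval_X]
    generalize m.support = T
    rcases Nat.lt_trichotomy T.card 1 with h | h | h
    · have : T = ∅ := by rw [← Finset.card_eq_zero]; omega
      subst this; simp
    · obtain ⟨a, rfl⟩ := Finset.card_eq_one.1 h
      simp
    · have h0 : T ≠ ∅ := by rintro rfl; simp at h
      have h3 : ∀ i, ¬ T ⊆ {i} := fun i hi => by
        have := Finset.card_le_card hi
        simp at this; omega
      have h4 : T.card - 1 ≠ 0 := by omega
      simp [h0, h3, h4]
  set d := P.totalDegree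
  set l : Polynomial ℝ := Polynomial.C (1/2) * (1 - Polynomial.X) with hl
  have hldeg : l.natDegree ≤ 1 := by
    rw [hl]; compute_degree
  have hdeg : (q.comp l).degree ≤ d := by
    refine Polynomial.degree_le_of_natDegree_le ?_
    refine Polynomial.natDegree_comp_le.trans ?_
    calc _ ≤ d * 1 := Nat.mul_le_mul hqdeg hldeg
      _ = d := mul_one d
  have key := Polynomial.Chebyshev.eval_iterate_derivative_le_of_forall_abs_le_one (n := d)
    (P := q.comp l) (k := 1) (x := 1) le_rfl hdeg (by
      intro x hx
      rw [Polynomial.eval_comp]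
      apply hqb <;> simp [hl] <;> linarith [hx.1, hx.2])
  simp only [Function.iterate_one, Polynomial.derivative_comp, Polynomial.eval_mul,
    Polynomial.eval_comp, Polynomial.Chebyshev.T_derivative_eq_U, Polynomial.Chebyshev.U_eval_one] at key
  have l1 : l.eval 1 = 0 := by simp [hl]
  have l2 : l.derivative.eval 1 = -(1/2) := by simp [hl]
  rw [l1, l2, hq0] at key
  simp at key
  have : (t : ℝ) ≤ ((2 * d ^ 2 : ℕ) : ℝ) := by push_cast; nlinarith
  exact_mod_cast this

open MvPolynomial in
theorem ns_degree {n t : ℕ} (p : MvPolynomial (Fin n) ℝ) (L : Fin n → MvPolynomial (Fin t) ℝ)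
    (hL : ∀ k, (L k).totalDegree ≤ 1) : (aeval L p).totalDegree ≤ p.totalDegree := by
  rw [MvPolynomial.aeval_def, MvPolynomial.eval₂_eq]
  refine totalDegree_finsetSum_le fun m hm => ?_
  refine (totalDegree_mul _ _).trans ?_
  rw [MvPolynomial.algebraMap_eq, totalDegree_C, zero_add]
  refine (totalDegree_finsetProd _ _).trans ?_
  refine le_trans ?_ (le_totalDegree hm)
  refine Finset.sum_le_sum fun i _ => ?_
  refine (totalDegree_pow _ _).trans ?_
  calc _ ≤ m i * 1 := Nat.mul_le_mul le_rfl (hL i)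
    _ = m i := mul_one _

open MvPolynomial in
/-- Nisan–Szegedy: for every Boolean function `f`, `deg f ≥ √(bs(f)/2)`, i.e.
`2·(deg f)² ≥ bs(f)`, where `deg f` is the degree of the (unique) multilinear
real polynomial representing `f`. -/
theorem blockSens_le_two_mul_degree_sq (n : ℕ) (f : (Fin n → Bool) → Bool)
    (p : MvPolynomial (Fin n) ℝ) (hml : Multilinear p) (hrep : Represents p f) :
    blockSens f ≤ 2 * p.totalDegree ^ 2 := by
  classical
  refine csSup_le ⟨0, fun _ => false, fun i => i.elim0, fun i => i.elim0, fun i => i.elim0,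
    fun i => i.elim0⟩ ?_
  rintro t ⟨x, B, -, hdis, hB⟩
  set L : Fin n → MvPolynomial (Fin t) ℝ := fun k =>
    C (bval (x k)) + ∑ i : Fin t, C (if k ∈ B i then 1 - 2 * bval (x k) else 0) * X i with hLdef
  have hL : ∀ k, (L k).totalDegree ≤ 1 := by
    intro k
    refine (totalDegree_add _ _).trans (max_le (by simp) ?_)
    refine totalDegree_finsetSum_le fun i _ => ?_
    refine (totalDegree_mul _ _).trans ?_
    simp
  set z : Finset (Fin t) → Fin n → Bool := fun S k => if ∃ i ∈ S, k ∈ B i then !x k else x k with hz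
  have hval : ∀ S : Finset (Fin t),
      eval (fun i => if i ∈ S then (1:ℝ) else 0) (aeval L p) = bval (f (z S)) := by
    intro S
    rw [← hrep (z S)]
    have : eval (fun i => if i ∈ S then (1:ℝ) else 0) (aeval L p) =
        eval (fun k => eval (fun i => if i ∈ S then (1:ℝ) else 0) (L k)) p := by
      rw [MvPolynomial.aeval_def, MvPolynomial.eval₂_eq,
        MvPolynomial.eval_eq (fun k => eval (fun i => if i ∈ S then (1:ℝ) else 0) (L k)) p, map_sum]
      refine Finset.sum_congr rfl fun m _ => ?_
      rw [map_mul, MvPolynomial.algebraMap_eq, eval_C, map_prod]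
      simp only [map_pow]
    rw [this]
    congr 2
    funext k
    simp only [hLdef, hz, map_add, map_sum, map_mul, eval_C, eval_X]
    split_ifs with h
    · obtain ⟨i, hi, hk⟩ := h
      rw [Finset.sum_eq_single i]
      · simp only [hi, hk, if_true]
        cases x k <;> simp [bval] ; try norm_num
      · intro j _ hj
        have : k ∉ B j := fun hkj => Finset.disjoint_left.1 (hdis j i hj) hkj hk
        simp [this]
      · simp
    · rw [Finset.sum_eq_zero, add_zero]
      intro i _
      by_cases hi : i ∈ S
      · have : k ∉ B i := fun hk => h ⟨i, hi, hk⟩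
        simp [this]
      · simp [hi]
  have hz0 : z ∅ = x := by funext k; simp [hz]
  have hz1 : ∀ i, f (z {i}) = !f x := by
    intro i
    have h := hB i
    have : z {i} = fun k => if k ∈ B i then !x k else x k := by funext k; simp [hz]
    rw [this]
    revert h
    cases f (fun k => if k ∈ B i then !x k else x k) <;> cases f x <;> simp
  have hdeg := ns_degree p L hL
  have hbb : ∀ b : Bool, |bval b| ≤ 1 := by intro b; cases b <;> simp [bval]
  have main : t ≤ 2 * (aeval L p).totalDegree ^ 2 := by
    cases hfx : f x
    · rw [← totalDegree_neg]
      refine ns_core _ (fun S => ?_) (fun i => ?_)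
      · rw [map_neg, abs_neg, hval]; exact hbb _
      · rw [map_neg, map_neg, hval, hval, hz0, hz1, hfx]; simp [bval]
    · refine ns_core _ (fun S => ?_) (fun i => ?_)
      · rw [hval]; exact hbb _
      · rw [hval, hval, hz0, hz1, hfx]; simp [bval]
  exact main.trans (Nat.mul_le_mul le_rfl (Nat.pow_le_pow_left hdeg 2))
end

section
/- For every Boolean function f : {0,1}^n → {0,1}, the approximate degree satisfies deg̃(f) ≥ √(bs(f)/6), i.e. 6·deg̃(f)^2 ≥ bs(f). -/
open Polynomial in
theorem markov_end (d : ℕ) (Q : ℝ[X]) (hd : Q.natDegree ≤ d)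
    (hb : ∀ s : ℝ, 0 ≤ s → s ≤ 1 → |Q.eval s - 1 / 2| ≤ 5 / 6) (c : ℝ) (hc : |c| = 1) :
    c * (derivative Q).eval 0 ≤ 5 / 3 * (d : ℝ) ^ 2 := by
  set R : ℝ[X] := C (-c * (6 / 5)) * (Q - C (1 / 2)).comp (C (1 / 2) - C (1 / 2) * X) with hR
  have hdeg : R.degree ≤ d := by
    apply degree_le_of_natDegree_le
    refine (natDegree_C_mul_le _ _).trans ?_
    refine natDegree_comp_le.trans ?_
    have h1 : (Q - C (1 / 2)).natDegree ≤ d := by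
      rw [natDegree_sub_C]; exact hd
    have h2 : (C (1 / 2 : ℝ) - C (1 / 2) * X).natDegree ≤ 1 := by compute_degree
    calc _ ≤ d * 1 := Nat.mul_le_mul h1 h2
      _ = d := by simp
  have hbd : ∀ x ∈ Set.Icc (-1 : ℝ) 1, |R.eval x| ≤ 1 := by
    intro x hx
    have := hb (1 / 2 - 1 / 2 * x) (by linarith [hx.2]) (by linarith [hx.1])
    simp only [hR, eval_mul, eval_C, eval_comp, eval_sub, eval_X]
    rw [abs_mul, abs_mul, abs_neg, hc, abs_of_pos (by norm_num : (0 : ℝ) < 6 / 5)]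
    linarith
  have h := Chebyshev.eval_iterate_derivative_le_of_forall_abs_le_one (k := 1) (x := 1)
    le_rfl hdeg hbd
  simp only [Function.iterate_one, Chebyshev.derivative_T_eval_one] at h
  simp only [hR, derivative_mul, derivative_C, derivative_comp, derivative_sub, derivative_X,
    eval_add, eval_mul, eval_C, eval_comp, eval_sub, eval_X, eval_zero, eval_one] at h
  norm_num at h
  linarith

open Polynomial in
theorem monomial_sym {n t : ℕ} (x : Fin n → Bool) (B : Fin t → Finset (Fin n))
    (hB : ∀ i j, i ≠ j → Disjoint (B i) (B j)) (m : Fin n → ℕ) (Pm : Finset (Fin t) → ℝ)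
    (hP : ∀ T, Pm T = ∏ k, bval (if ∃ i ∈ T, k ∈ B i then !x k else x k) ^ m k) :
    ∃ q : ℝ[X], q.natDegree ≤ ∑ k, m k ∧
      (∀ s : ℝ, q.eval s = ∑ T : Finset (Fin t), s ^ T.card * (1 - s) ^ (Tᶜ).card * Pm T) ∧
      (derivative q).eval 0 = ∑ i, (Pm {i} - Pm ∅) := by
  classical
  set a : Fin t → ℝ := fun i => ∏ k ∈ B i, bval (x k) ^ m k with ha
  set b : Fin t → ℝ := fun i => ∏ k ∈ B i, bval (!x k) ^ m k with hb
  set c : ℝ := ∏ k ∈ (Finset.univ.biUnion B)ᶜ, bval (x k) ^ m k with hc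
  have hdisj : ((Finset.univ : Finset (Fin t)) : Set (Fin t)).PairwiseDisjoint B :=
    fun i _ j _ hij => hB i j hij
  have key : ∀ T, Pm T = c * ∏ i, (if i ∈ T then b i else a i) := by
    intro T
    rw [hP, ← Finset.prod_compl_mul_prod (Finset.univ.biUnion B), Finset.prod_biUnion hdisj]
    congr 1
    · refine Finset.prod_congr rfl fun k hk => ?_
      rw [if_neg]
      rintro ⟨i, -, hi⟩
      simp only [Finset.mem_compl, Finset.mem_biUnion, not_exists] at hk
      exact hk i ⟨Finset.mem_univ _, hi⟩
    · refine Finset.prod_congr rfl fun i _ => ?_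
      by_cases hi : i ∈ T
      · rw [if_pos hi]
        refine Finset.prod_congr rfl fun k hk => ?_
        rw [if_pos ⟨i, hi, hk⟩]
      · rw [if_neg hi]
        refine Finset.prod_congr rfl fun k hk => ?_
        rw [if_neg]
        rintro ⟨j, hj, hkj⟩
        have hne : i ≠ j := fun h => hi (h ▸ hj)
        exact Finset.disjoint_left.mp (hB i j hne) hk hkj
  refine ⟨C c * ∏ i, (C (b i) * X + C (a i) * (1 - X)), ?_, ?_, ?_⟩
  · refine (natDegree_C_mul_le _ _).trans ((natDegree_prod_le _ _).trans ?_)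
    calc _ ≤ ∑ i, ∑ k ∈ B i, m k := by
            refine Finset.sum_le_sum fun i _ => ?_
            by_cases h0 : ∑ k ∈ B i, m k = 0
            · have hz : ∀ k ∈ B i, m k = 0 := by simpa using h0
              have h1 : a i = 1 := Finset.prod_eq_one fun k hk => by simp [hz k hk]
              have h2 : b i = 1 := Finset.prod_eq_one fun k hk => by simp [hz k hk]
              rw [h1, h2]
              simp
            · have : (C (b i) * X + C (a i) * (1 - X)).natDegree ≤ 1 := by compute_degree
              omega
      _ = ∑ k ∈ Finset.univ.biUnion B, m k := (Finset.sum_biUnion hdisj).symm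
      _ ≤ _ := Finset.sum_le_sum_of_subset (Finset.subset_univ _)
  · intro s
    simp only [eval_mul, eval_C, eval_prod, eval_add, eval_X, eval_sub, eval_one]
    rw [Finset.prod_add, Finset.powerset_univ, Finset.mul_sum]
    refine Finset.sum_congr rfl fun T _ => ?_
    rw [key, Finset.prod_mul_distrib, Finset.prod_mul_distrib, Finset.prod_ite]
    simp only [Finset.prod_const]
    have e1 : Finset.univ.filter (fun i => i ∈ T) = T := by ext; simp
    have e2 : Finset.univ.filter (fun i => i ∉ T) = Finset.univ \ T := by ext; simp
    rw [e1, e2, Finset.compl_eq_univ_sdiff]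
    ring
  · rw [derivative_C_mul, derivative_prod_finset]
    simp only [eval_mul, eval_C, eval_finsetSum]
    rw [Finset.mul_sum]
    refine Finset.sum_congr rfl fun i _ => ?_
    rw [key, key, ← Finset.mul_prod_erase _ _ (Finset.mem_univ i),
      ← Finset.mul_prod_erase _ (fun j => if j ∈ (∅ : Finset (Fin t)) then b j else a j)
        (Finset.mem_univ i)]
    have : ∏ j ∈ Finset.univ.erase i, (if j ∈ ({i} : Finset (Fin t)) then b j else a j)
        = ∏ j ∈ Finset.univ.erase i, a j := by
      refine Finset.prod_congr rfl fun j hj => ?_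
      rw [if_neg]
      simpa using hj
    rw [this]
    simp [eval_prod]
    ring

open Polynomial in
theorem block_bound (n : ℕ) (f : (Fin n → Bool) → Bool)
    (p : MvPolynomial (Fin n) ℝ) (happrox : Approximates p f) (t : ℕ)
    (x : Fin n → Bool) (B : Fin t → Finset (Fin n))
    (hB : ∀ i j, i ≠ j → Disjoint (B i) (B j))
    (hf : ∀ i, f (fun k => if k ∈ B i then !x k else x k) ≠ f x) :
    t ≤ 6 * p.totalDegree ^ 2 := by
  classical
  set z : Finset (Fin t) → Fin n → Bool :=
    fun T k => if ∃ i ∈ T, k ∈ B i then !x k else x k with hz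
  choose q hq1 hq2 hq3 using fun m : Fin n →₀ ℕ =>
    monomial_sym x B hB m (fun T => ∏ k, bval (z T k) ^ m k) (fun T => rfl)
  set P : Finset (Fin t) → ℝ := fun T => MvPolynomial.eval (fun k => bval (z T k)) p with hPdef
  have hP : ∀ T, P T = ∑ m ∈ p.support, p.coeff m * ∏ k, bval (z T k) ^ m k := by
    intro T
    exact MvPolynomial.eval_eq' _ _
  set Q : ℝ[X] := ∑ m ∈ p.support, C (p.coeff m) * q m with hQ
  have hdeg : Q.natDegree ≤ p.totalDegree := by
    refine natDegree_sum_le_of_forall_le _ _ fun m hm => ?_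
    refine (natDegree_C_mul_le _ _).trans ((hq1 m).trans ?_)
    have := MvPolynomial.le_totalDegree hm
    rwa [Finsupp.sum_fintype _ _ (fun _ => rfl)] at this
  have heval : ∀ s : ℝ, Q.eval s =
      ∑ T : Finset (Fin t), s ^ T.card * (1 - s) ^ (Tᶜ).card * P T := by
    intro s
    simp only [hQ, eval_finsetSum, eval_mul, eval_C, hq2, hP, Finset.mul_sum]
    rw [Finset.sum_comm]
    refine Finset.sum_congr rfl fun T _ => Finset.sum_congr rfl fun m _ => ?_
    ring
  have hder : (derivative Q).eval 0 = ∑ i, (P {i} - P ∅) := by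
    simp only [hQ, derivative_sum, eval_finsetSum, derivative_C_mul, eval_mul, eval_C, hq3, hP,
      ← Finset.sum_sub_distrib, Finset.mul_sum, mul_sub]
    rw [Finset.sum_comm]
  have hPb : ∀ T, |P T - bval (f (z T))| < 1 / 3 := fun T => happrox (z T)
  have hP2 : ∀ T, |P T - 1 / 2| ≤ 5 / 6 := by
    intro T
    have h := abs_lt.mp (hPb T)
    rw [abs_le]
    cases hfz : f (z T) <;> simp only [hfz, bval] at h <;> norm_num at h <;>
      constructor <;> linarith [h.1, h.2]
  have hw : ∀ s : ℝ, ∑ T : Finset (Fin t), s ^ T.card * (1 - s) ^ (Tᶜ).card = 1 := by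
    intro s
    have := Finset.prod_add (fun _ : Fin t => s) (fun _ => 1 - s) Finset.univ
    simp only [Finset.prod_const, Finset.powerset_univ, ← Finset.compl_eq_univ_sdiff] at this
    rw [← this]; simp
  have hbd : ∀ s : ℝ, 0 ≤ s → s ≤ 1 → |Q.eval s - 1 / 2| ≤ 5 / 6 := by
    intro s h0 h1
    have h1' : 0 ≤ 1 - s := by linarith
    have e : Q.eval s - 1 / 2 =
        ∑ T : Finset (Fin t), s ^ T.card * (1 - s) ^ (Tᶜ).card * (P T - 1 / 2) := by
      simp only [mul_sub, Finset.sum_sub_distrib]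
      rw [← heval, ← Finset.sum_mul, hw, one_mul]
    rw [e]
    calc _ ≤ ∑ T : Finset (Fin t), |s ^ T.card * (1 - s) ^ (Tᶜ).card * (P T - 1 / 2)| :=
          Finset.abs_sum_le_sum_abs _ _
      _ ≤ ∑ T : Finset (Fin t), s ^ T.card * (1 - s) ^ (Tᶜ).card * (5 / 6) := by
          refine Finset.sum_le_sum fun T _ => ?_
          rw [abs_mul, abs_of_nonneg (by positivity)]
          exact mul_le_mul_of_nonneg_left (hP2 T) (by positivity)
      _ = 5 / 6 := by rw [← Finset.sum_mul, hw, one_mul]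
  have hze : z ∅ = x := by funext k; simp [hz]
  have hzi : ∀ i, z {i} = fun k => if k ∈ B i then !x k else x k := by
    intro i; funext k; simp [hz]
  have hP0 := hPb ∅
  rw [hze] at hP0
  have main : ∃ c : ℝ, |c| = 1 ∧ ∀ i, 1 / 3 ≤ c * (P {i} - P ∅) := by
    cases hfx : f x
    · refine ⟨1, by simp, fun i => ?_⟩
      have h1 := hPb {i}
      have h2 := hf i
      rw [← hzi, hfx] at h2
      have h3 : f (z {i}) = true := by simpa using h2
      rw [h3] at h1
      rw [hfx] at hP0
      simp only [bval] at h1 hP0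
      have h1 := abs_lt.mp h1
      have h0 := abs_lt.mp hP0
      norm_num at h1 h0
      linarith [h1.1, h0.2]
    · refine ⟨-1, by simp, fun i => ?_⟩
      have h1 := hPb {i}
      have h2 := hf i
      rw [← hzi, hfx] at h2
      have h3 : f (z {i}) = false := by simpa using h2
      rw [h3] at h1
      rw [hfx] at hP0
      simp only [bval] at h1 hP0
      have h1 := abs_lt.mp h1
      have h0 := abs_lt.mp hP0
      norm_num at h1 h0
      linarith [h1.2, h0.1]
  obtain ⟨c, hc, hci⟩ := main
  have hm := markov_end _ Q hdeg hbd c hc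
  rw [hder, Finset.mul_sum] at hm
  have hs : (t : ℝ) * (1 / 3) ≤ ∑ i, c * (P {i} - P ∅) := by
    have := Finset.card_nsmul_le_sum Finset.univ (fun i => c * (P {i} - P ∅)) (1 / 3)
      (fun i _ => hci i)
    simpa using this
  have : (t : ℝ) ≤ 6 * (p.totalDegree : ℝ) ^ 2 := by
    have : (0 : ℝ) ≤ (p.totalDegree : ℝ) ^ 2 := by positivity
    linarith
  exact_mod_cast this

/-- Nisan–Szegedy: for every Boolean function `f`, the approximate degree satisfies
`deg̃ f ≥ √(bs(f)/6)`, i.e. `6·(deg̃ f)² ≥ bs(f)`.  Since `deg̃ f` is the minimum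
degree over all polynomials approximating `f`, this is equivalent to:
every polynomial `p` approximating `f` satisfies `6·(deg p)² ≥ bs(f)`. -/
theorem blockSens_le_six_mul_approx_degree_sq (n : ℕ) (f : (Fin n → Bool) → Bool)
    (p : MvPolynomial (Fin n) ℝ) (happrox : Approximates p f) :
    blockSens f ≤ 6 * p.totalDegree ^ 2 := by
  refine csSup_le' ?_
  rintro t ⟨x, B, -, hB, hf⟩
  exact block_bound n f p happrox t x B hB hf
end

section
/- For every integer n ≥ 1 there exists an induced subgraph G of the n-dimensional hypercube graph Q_n on exactly 2^(n-1) + 1 vertices whose maximum degree satisfies Δ(G) ≤ ⌈√n⌉ (in particular Δ(G) < √n + 1). -/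
namespace CFGS

/-- flip one coordinate -/
def flip {n : ℕ} (x : Fin n → Bool) (i : Fin n) : Fin n → Bool := Function.update x i (!x i)

lemma flip_same {n : ℕ} (x : Fin n → Bool) (i : Fin n) : flip x i i = !x i := by
  simp [flip]

lemma flip_ne {n : ℕ} (x : Fin n → Bool) {i j : Fin n} (h : j ≠ i) : flip x i j = x j := by
  simp [flip, h]

lemma flip_flip {n : ℕ} (x : Fin n → Bool) (i : Fin n) : flip (flip x i) i = x := by
  simp [flip]

lemma flip_ne_self {n : ℕ} (x : Fin n → Bool) (i : Fin n) : flip x i ≠ x := by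
  intro h
  have := congrFun h i
  rw [flip_same] at this
  simp at this

/-- parity sign -/
def sgn {n : ℕ} (x : Fin n → Bool) : ℤ := ∏ i, if x i then -1 else 1

lemma sgn_flip {n : ℕ} (x : Fin n → Bool) (i : Fin n) : sgn (flip x i) = - sgn x := by
  unfold sgn
  rw [← Finset.mul_prod_erase _ _ (Finset.mem_univ i),
    ← Finset.mul_prod_erase Finset.univ (fun i => if x i then (-1 : ℤ) else 1) (Finset.mem_univ i)]
  have : ∏ j ∈ Finset.univ.erase i, (if flip x i j then (-1 : ℤ) else 1)
      = ∏ j ∈ Finset.univ.erase i, (if x j then (-1 : ℤ) else 1) := by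
    apply Finset.prod_congr rfl
    intro j hj
    rw [flip_ne x (Finset.ne_of_mem_erase hj)]
  rw [this, flip_same]
  cases x i <;> simp

lemma sgn_cases {n : ℕ} (x : Fin n → Bool) : sgn x = 1 ∨ sgn x = -1 := by
  unfold sgn
  refine Finset.prod_induction _ (fun z : ℤ => z = 1 ∨ z = -1) ?_ (Or.inl rfl) ?_
  · rintro a b (rfl | rfl) (rfl | rfl) <;> simp
  · intro i _
    split <;> simp

lemma sum_sgn {n : ℕ} (hn : 1 ≤ n) : ∑ x : Fin n → Bool, sgn x = 0 := by
  refine Finset.sum_involution (fun x _ => flip x ⟨0, hn⟩) ?_ ?_ ?_ ?_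
  · intro x _; rw [sgn_flip]; ring
  · intro x _ _; exact flip_ne_self _ _
  · intro x _; exact Finset.mem_univ _
  · intro x _; exact flip_flip _ _

/-- every block has a zero -/
def NB {n : ℕ} (m : ℕ) (x : Fin n → Bool) : Prop :=
  ∀ i : Fin n, ∃ j : Fin n, j.val / m = i.val / m ∧ x j = false

/-- representative of block -/
def rep {n : ℕ} (m : ℕ) (i : Fin n) : Fin n :=
  ⟨m * (i.val / m), lt_of_le_of_lt (Nat.mul_div_le _ _) i.2⟩

lemma rep_div {n m : ℕ} (hm : 1 ≤ m) (i : Fin n) : (rep m i).val / m = i.val / m := by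
  simp only [rep]
  exact Nat.mul_div_cancel_left _ hm

lemma rep_eq {n m : ℕ} {i j : Fin n} (h : i.val / m = j.val / m) : rep m i = rep m j := by
  simp only [rep, h]

lemma rep_rep {n m : ℕ} (hm : 1 ≤ m) (i : Fin n) : rep m (rep m i) = rep m i :=
  rep_eq (rep_div hm i)

/-- the exceptional point -/
def x0 (n m : ℕ) : Fin n → Bool := fun i => decide (i ≠ rep m i)

/-- the non-representative zeros -/
def Z {n : ℕ} (m : ℕ) (x : Fin n → Bool) : Finset (Fin n) :=
  Finset.univ.filter fun i => i ≠ rep m i ∧ x i = false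

lemma mem_Z {n m : ℕ} (x : Fin n → Bool) (i : Fin n) :
    i ∈ Z m x ↔ i ≠ rep m i ∧ x i = false := by simp [Z]

lemma Z_flip {n m : ℕ} (hm : 1 ≤ m) (x : Fin n → Bool) (i : Fin n) :
    Z m (flip x (rep m i)) = Z m x := by
  ext j
  rw [mem_Z, mem_Z]
  refine and_congr_right fun hj => ?_
  rw [flip_ne]
  rintro rfl
  exact hj (rep_rep hm i).symm

lemma NB_x0 {n m : ℕ} (hm : 1 ≤ m) : NB m (x0 n m) := by
  intro i
  refine ⟨rep m i, rep_div hm i, ?_⟩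
  simp [x0, rep_rep hm]

lemma Z_nonempty {n m : ℕ} {x : Fin n → Bool} (h : NB m x) (hx : x ≠ x0 n m) :
    (Z m x).Nonempty := by
  by_contra hZ
  rw [Finset.not_nonempty_iff_eq_empty] at hZ
  have hz : ∀ i, i ≠ rep m i → x i = true := by
    intro i hi
    by_contra hc
    have : i ∈ Z m x := (mem_Z x i).2 ⟨hi, by simpa using hc⟩
    rw [hZ] at this
    simp at this
  apply hx
  funext i
  by_cases hi : i = rep m i
  · obtain ⟨j, hj, hxj⟩ := h i
    have hjr : j = rep m j := by
      by_contra hc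
      rw [hz j hc] at hxj
      simp at hxj
    have : j = i := by rw [hjr, hi]; exact rep_eq hj
    subst this
    rw [hxj]
    simp only [x0]
    simpa using hi
  · rw [hz i hi]
    simp [x0, hi]

/-- involution -/
noncomputable def inv {n : ℕ} (m : ℕ) (x : Fin n → Bool) : Fin n → Bool :=
  open Classical in
  if h : (Z m x).Nonempty then flip x (rep m ((Z m x).min' h)) else x

lemma inv_of {n m : ℕ} {x : Fin n → Bool} (h : (Z m x).Nonempty) :
    inv m x = flip x (rep m ((Z m x).min' h)) := by
  simp [inv, h]

lemma inv_inv {n m : ℕ} (hm : 1 ≤ m) {x : Fin n → Bool} (h : (Z m x).Nonempty) :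
    inv m (inv m x) = x := by
  have e : Z m (inv m x) = Z m x := by rw [inv_of h, Z_flip hm]
  have h' : (Z m (inv m x)).Nonempty := by rw [e]; exact h
  rw [inv_of h']
  simp only [e]
  have e2 := inv_of h
  generalize hk : rep m ((Z m x).min' h) = k at e2 ⊢
  rw [e2, flip_flip]

lemma NB_inv {n m : ℕ} {x : Fin n → Bool} (hN : NB m x)
    (h : (Z m x).Nonempty) (hm : 1 ≤ m) : NB m (inv m x) := by
  rw [inv_of h]
  have hk := (mem_Z x _).1 ((Z m x).min'_mem h)
  generalize (Z m x).min' h = k at hk ⊢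
  intro i
  by_cases hi : i.val / m = k.val / m
  · exact ⟨k, hi.symm, by rw [flip_ne x hk.1]; exact hk.2⟩
  · obtain ⟨j, hj, hxj⟩ := hN i
    refine ⟨j, hj, ?_⟩
    rw [flip_ne]
    · exact hxj
    · rintro rfl
      rw [rep_div hm] at hj
      exact hi hj.symm

open Classical in
lemma sum_NB {n m : ℕ} (hm : 1 ≤ m) :
    ∑ x : Fin n → Bool with NB m x, sgn x = sgn (x0 n m) := by
  have hmem : x0 n m ∈ Finset.univ.filter (fun x : Fin n → Bool => NB m x) := by
    simp [NB_x0 hm]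
  rw [← Finset.add_sum_erase _ _ hmem]
  have : ∑ x ∈ (Finset.univ.filter (fun x : Fin n → Bool => NB m x)).erase (x0 n m), sgn x = 0 := by
    have key : ∀ x ∈ (Finset.univ.filter (fun x : Fin n → Bool => NB m x)).erase (x0 n m),
        NB m x ∧ (Z m x).Nonempty := by
      intro x hx
      rw [Finset.mem_erase, Finset.mem_filter] at hx
      exact ⟨hx.2.2, Z_nonempty hx.2.2 hx.1⟩
    refine Finset.sum_involution (fun x _ => inv m x) ?_ ?_ ?_ ?_
    · intro x hx; rw [inv_of (key x hx).2, sgn_flip]; ring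
    · intro x hx _; rw [inv_of (key x hx).2]; exact flip_ne_self _ _
    · intro x hx
      obtain ⟨h1, h2⟩ := key x hx
      rw [Finset.mem_erase, Finset.mem_filter]
      refine ⟨?_, Finset.mem_univ _, NB_inv h1 h2 hm⟩
      intro hc
      have e : Z m (inv m x) = Z m x := by rw [inv_of h2, Z_flip hm]
      rw [← e, hc] at h2
      obtain ⟨i, hi⟩ := h2
      rw [mem_Z] at hi
      simp [x0] at hi
    · intro x hx; exact inv_inv hm (key x hx).2
  rw [this, add_zero]

open Classical in
/-- signed indicator -/
noncomputable def val {n : ℕ} (m : ℕ) (x : Fin n → Bool) : ℤ :=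
  sgn x * if NB m x then 1 else -1

lemma val_cases {n : ℕ} (m : ℕ) (x : Fin n → Bool) : val m x = 1 ∨ val m x = -1 := by
  unfold val
  rcases sgn_cases x with h | h <;> rw [h] <;> split <;> simp

lemma sum_val {n m : ℕ} (hn : 1 ≤ n) (hm : 1 ≤ m) :
    ∑ x : Fin n → Bool, val m x = 2 * sgn (x0 n m) := by
  classical
  have h : ∀ x : Fin n → Bool, val m x = 2 * (if NB m x then sgn x else 0) - sgn x := by
    intro x
    unfold val
    split <;> ring
  simp_rw [h]
  rw [Finset.sum_sub_distrib, sum_sgn hn, ← Finset.mul_sum, ← Finset.sum_filter, sum_NB hm, sub_zero]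

lemma card_eq {n m : ℕ} (hn : 1 ≤ n) (hm : 1 ≤ m) :
    (Finset.univ.filter fun x : Fin n → Bool => val m x = sgn (x0 n m)).card = 2 ^ (n - 1) + 1 := by
  have h : ∀ x : Fin n → Bool,
      (if val m x = sgn (x0 n m) then (1 : ℤ) else 0) * 2 = 1 + sgn (x0 n m) * val m x := by
    intro x
    rcases val_cases m x with h | h <;> rcases sgn_cases (x0 n m) with h' | h' <;>
      rw [h, h'] <;> norm_num
  have h2 : ((Finset.univ.filter fun x : Fin n → Bool => val m x = sgn (x0 n m)).card : ℤ) * 2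
      = 2 ^ n + 2 := by
    rw [Finset.card_filter]
    push_cast
    rw [Finset.sum_mul, Finset.sum_congr rfl (fun x _ => h x), Finset.sum_add_distrib,
      ← Finset.mul_sum, sum_val hn hm]
    rcases sgn_cases (x0 n m) with h' | h' <;> rw [h'] <;> simp
  obtain ⟨k, rfl⟩ : ∃ k, n = k + 1 := ⟨n - 1, by omega⟩
  rw [pow_succ] at h2
  simp only [Nat.add_sub_cancel]
  zify
  linarith

open Classical in
lemma card_flip {n m : ℕ} (hm : 1 ≤ m) (hnm : n ≤ m * m) (x : Fin n → Bool) :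
    (Finset.univ.filter fun i : Fin n => ¬ (NB m (flip x i) ↔ NB m x)).card ≤ m := by
  by_cases hx : NB m x
  · have key : ∀ i : Fin n, ¬ NB m (flip x i) →
        x i = false ∧ ∀ j : Fin n, j.val / m = i.val / m → j ≠ i → x j = true := by
      intro i hi
      unfold NB at hi
      push Not at hi
      obtain ⟨k, hk⟩ := hi
      obtain ⟨j, hj, hxj⟩ := hx k
      have hji : j = i := by
        by_contra hc
        have := hk j hj
        rw [flip_ne x hc] at this
        exact this hxj
      subst hji
      refine ⟨hxj, fun l hl hlj => ?_⟩
      have := hk l (hl.trans hj)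
      rw [flip_ne x hlj] at this
      simpa using this
    have : (Finset.range m).card = m := Finset.card_range m
    conv_rhs => rw [← this]
    refine Finset.card_le_card_of_injOn (fun i : Fin n => i.val / m) ?_ ?_
    · intro i _
      simp only [Finset.coe_range, Set.mem_Iio]
      exact Nat.div_lt_of_lt_mul (lt_of_lt_of_le i.2 hnm)
    · intro i hi j hj hij
      simp only [Finset.coe_filter, Finset.mem_univ, true_and, Set.mem_ofPred_eq, hx, iff_true]
        at hi hj
      by_contra hc
      have h1 := (key i hi).1
      have h2 := (key j hj).2 i hij hc
      rw [h1] at h2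
      simp at h2
  · have hx' := hx
    unfold NB at hx'
    push Not at hx'
    obtain ⟨k, hk⟩ := hx'
    have key : ∀ i : Fin n, NB m (flip x i) → i.val / m = k.val / m := by
      intro i hi
      obtain ⟨j, hj, hxj⟩ := hi k
      by_cases hji : j = i
      · subst hji; exact hj
      · rw [flip_ne x hji] at hxj
        exact absurd hxj (hk j hj)
    have : (Finset.range m).card = m := Finset.card_range m
    conv_rhs => rw [← this]
    refine Finset.card_le_card_of_injOn (fun i : Fin n => i.val % m) ?_ ?_
    · intro i _
      simp only [Finset.coe_range, Set.mem_Iio]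
      exact Nat.mod_lt _ hm
    · intro i hi j hj hij
      simp only [Finset.coe_filter, Finset.mem_univ, true_and, Set.mem_ofPred_eq, hx, iff_false,
        not_not] at hi hj
      have h1 := key i hi
      have h2 := key j hj
      apply Fin.ext
      rw [← Nat.div_add_mod i.val m, ← Nat.div_add_mod j.val m, h1, h2]
      simp only at hij
      rw [hij]

lemma adj_flip {n : ℕ} {x y : Fin n → Bool} (h : (Qgraph n).Adj x y) : ∃ i, y = flip x i := by
  obtain ⟨i, hi⟩ := Finset.card_eq_one.1 h
  refine ⟨i, ?_⟩
  funext j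
  have hj : x j ≠ y j ↔ j = i := by
    have := Finset.ext_iff.1 hi j
    simpa using this
  by_cases hc : j = i
  · subst hc
    rw [flip_same]
    have := hj.2 rfl
    revert this
    cases x j <;> cases y j <;> simp
  · rw [flip_ne x hc]
    by_contra h'
    exact hc (hj.1 (Ne.symm h'))

end CFGS

/-- There exists an induced subgraph of `Q_n` on exactly `2^(n-1) + 1` vertices whose
maximum degree is at most `⌈√n⌉`. -/
theorem exists_induced_subgraph_maxDegree_le_ceil_sqrt (n : ℕ) (hn : 1 ≤ n) :
    ∃ S : Finset (Fin n → Bool), S.card = 2 ^ (n - 1) + 1 ∧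
      ((Qgraph n).induce (↑S : Set (Fin n → Bool))).maxDegree ≤ ⌈Real.sqrt n⌉₊ := by
  have hm : 1 ≤ ⌈Real.sqrt n⌉₊ := by
    rw [Nat.one_le_ceil_iff]
    exact Real.sqrt_pos.2 (by exact_mod_cast hn)
  have hnm : n ≤ ⌈Real.sqrt n⌉₊ * ⌈Real.sqrt n⌉₊ := by
    have h1 := Nat.le_ceil (Real.sqrt n)
    have h2 := Real.mul_self_sqrt (Nat.cast_nonneg (α := ℝ) n)
    have h3 := mul_self_le_mul_self (Real.sqrt_nonneg n) h1
    rw [h2] at h3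
    exact_mod_cast h3
  generalize ⌈Real.sqrt n⌉₊ = m at hm hnm ⊢
  refine ⟨_, CFGS.card_eq (m := m) hn hm, ?_⟩
  apply SimpleGraph.maxDegree_le_of_forall_degree_le
  rintro ⟨x, hx⟩
  classical
  refine le_trans ?_ (CFGS.card_flip hm hnm x)
  rw [← SimpleGraph.card_neighborFinset_eq_degree]
  rw [← Finset.card_map (Function.Embedding.subtype _)]
  refine le_trans (Finset.card_le_card ?_) (Finset.card_image_le (f := CFGS.flip x))
  intro y hy
  rw [Finset.mem_map] at hy
  obtain ⟨⟨y', hy'⟩, hadj, rfl⟩ := hy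
  rw [SimpleGraph.mem_neighborFinset] at hadj
  have hadj' : (Qgraph n).Adj x y' := hadj
  obtain ⟨i, rfl⟩ := CFGS.adj_flip hadj'
  rw [Finset.mem_image]
  refine ⟨i, ?_, rfl⟩
  simp only [Finset.mem_filter, Finset.mem_univ, true_and]
  intro hiff
  simp only [Finset.coe_filter, Finset.mem_univ, true_and, Set.mem_ofPred_eq] at hx hy'
  rw [← hx] at hy'
  unfold CFGS.val at hy'
  rw [CFGS.sgn_flip] at hy'
  simp only [hiff] at hy'
  rcases CFGS.sgn_cases x with h | h <;> rw [h] at hy' <;> split at hy' <;> norm_num at hy'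
end

section
/- For every integer n ≥ 2, if G is an induced subgraph of the n-dimensional hypercube graph Q_n on at least 2^(n-1) + 1 vertices, then G has a vertex v with deg_G(v) > (1/2)·log₂ n − (1/2)·log₂ log₂ n + 1/2. -/
namespace ChungAux

/-- Flip the `i`-th coordinate. -/
def flp {n : ℕ} (i : Fin n) (x : Fin n → Bool) : Fin n → Bool :=
  Function.update x i (!x i)

/-- The sign attached to a coordinate. -/
def sg (b : Bool) : ℝ := if b then -1 else 1

/-- The edge sign. -/
noncomputable def es {n : ℕ} (i : Fin n) (x : Fin n → Bool) : ℝ :=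
  ∏ j ∈ Finset.univ.filter (fun j => j < i), sg (x j)

/-- Parity sign. -/
noncomputable def par {n : ℕ} (x : Fin n → Bool) : ℝ := ∏ j, sg (x j)

lemma sg_not (b : Bool) : sg (!b) = - sg b := by cases b <;> simp [sg]

lemma sg_sq (b : Bool) : sg b * sg b = 1 := by cases b <;> simp [sg]

lemma sg_abs (b : Bool) : |sg b| = 1 := by cases b <;> simp [sg]

lemma flp_self {n : ℕ} (i : Fin n) (x : Fin n → Bool) : flp i (flp i x) = x := by
  simp [flp]

lemma flp_comm {n : ℕ} (i j : Fin n) (x : Fin n → Bool) :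
    flp i (flp j x) = flp j (flp i x) := by
  by_cases h : i = j
  · rw [h]
  · funext k
    simp only [flp, Function.update_apply]
    grind

lemma prod_flp_mem {n : ℕ} (s : Finset (Fin n)) (i : Fin n) (x : Fin n → Bool) (h : i ∈ s) :
    ∏ j ∈ s, sg (flp i x j) = - ∏ j ∈ s, sg (x j) := by
  rw [← Finset.mul_prod_erase s _ h, ← Finset.mul_prod_erase s (fun j => sg (x j)) h]
  have : ∏ j ∈ s.erase i, sg (flp i x j) = ∏ j ∈ s.erase i, sg (x j) := by
    refine Finset.prod_congr rfl fun j hj => ?_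
    rw [flp, Function.update_of_ne (Finset.ne_of_mem_erase hj)]
  rw [this]
  simp [flp, sg_not]

lemma prod_flp_notMem {n : ℕ} (s : Finset (Fin n)) (i : Fin n) (x : Fin n → Bool)
    (h : i ∉ s) : ∏ j ∈ s, sg (flp i x j) = ∏ j ∈ s, sg (x j) := by
  refine Finset.prod_congr rfl fun j hj => ?_
  have hne : j ≠ i := by
    rintro rfl
    exact h hj
  rw [flp, Function.update_of_ne hne]

lemma es_flp_lt {n : ℕ} {i j : Fin n} (x : Fin n → Bool) (h : i < j) :
    es j (flp i x) = - es j x := prod_flp_mem _ _ _ (by simpa using h)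

lemma es_flp_ge {n : ℕ} {i j : Fin n} (x : Fin n → Bool) (h : j ≤ i) :
    es j (flp i x) = es j x := prod_flp_notMem _ _ _ (by simpa using h)

lemma es_sq {n : ℕ} (i : Fin n) (x : Fin n → Bool) : es i x * es i x = 1 := by
  rw [es, ← Finset.prod_mul_distrib]
  exact Finset.prod_eq_one fun j _ => sg_sq _

lemma es_abs {n : ℕ} (i : Fin n) (x : Fin n → Bool) : |es i x| = 1 := by
  rw [es, Finset.abs_prod]
  exact Finset.prod_eq_one fun j _ => sg_abs _

lemma par_sq {n : ℕ} (x : Fin n → Bool) : par x * par x = 1 := by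
  rw [par, ← Finset.prod_mul_distrib]
  exact Finset.prod_eq_one fun j _ => sg_sq _

lemma par_flp {n : ℕ} (i : Fin n) (x : Fin n → Bool) : par (flp i x) = - par x :=
  prod_flp_mem _ _ _ (Finset.mem_univ i)

/-- Huang's signed adjacency operator. -/
noncomputable def A (n : ℕ) : ((Fin n → Bool) → ℝ) →ₗ[ℝ] ((Fin n → Bool) → ℝ) where
  toFun f x := ∑ i, es i x * f (flp i x)
  map_add' f g := by
    funext x
    simp [mul_add, Finset.sum_add_distrib]
  map_smul' c f := by
    funext x
    simp only [Pi.smul_apply, smul_eq_mul, RingHom.id_apply, Finset.mul_sum]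
    exact Finset.sum_congr rfl fun i _ => by ring

lemma A_apply {n : ℕ} (f : (Fin n → Bool) → ℝ) (x) :
    A n f x = ∑ i, es i x * f (flp i x) := rfl

lemma A_sq {n : ℕ} (f : (Fin n → Bool) → ℝ) : A n (A n f) = (n : ℝ) • f := by
  funext x
  let T : Fin n → Fin n → ℝ := fun i j => es i x * (es j (flp i x) * f (flp j (flp i x)))
  have h0 : A n (A n f) x = ∑ i, ∑ j, T i j := by
    simp only [A_apply, Finset.mul_sum, T]
  have hT : ∀ i j, T i j + T j i = if i = j then 2 * f x else 0 := by
    intro i j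
    simp only [T]
    rw [flp_comm i j]
    rcases lt_trichotomy i j with h | h | h
    · rw [es_flp_lt x h, es_flp_ge x h.le, if_neg h.ne]; ring
    · subst h
      rw [es_flp_ge x le_rfl, flp_self, if_pos rfl]
      linear_combination (2 * f x) * es_sq i x
    · rw [es_flp_lt x h, es_flp_ge x h.le, if_neg h.ne']; ring
  have h1 : (∑ i, ∑ j, T i j) + (∑ i, ∑ j, T i j) = n * (2 * f x) := by
    conv_lhs => arg 2; rw [Finset.sum_comm]
    simp only [← Finset.sum_add_distrib, hT]
    simp
  rw [h0, Pi.smul_apply, smul_eq_mul]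
  linarith

/-- Multiplication by parity. -/
noncomputable def P (n : ℕ) : ((Fin n → Bool) → ℝ) →ₗ[ℝ] ((Fin n → Bool) → ℝ) where
  toFun f x := par x * f x
  map_add' f g := by
    funext x
    simp [mul_add]
  map_smul' c f := by
    funext x
    simp only [Pi.smul_apply, smul_eq_mul, RingHom.id_apply]
    ring

lemma P_P {n : ℕ} (f : (Fin n → Bool) → ℝ) : P n (P n f) = f := by
  funext x
  change par x * (par x * f x) = f x
  rw [← mul_assoc, par_sq, one_mul]

lemma A_P {n : ℕ} (f : (Fin n → Bool) → ℝ) : A n (P n f) = - P n (A n f) := by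
  funext x
  change ∑ i, es i x * (par (flp i x) * f (flp i x)) = - (par x * ∑ i, es i x * f (flp i x))
  rw [Finset.mul_sum, ← Finset.sum_neg_distrib]
  refine Finset.sum_congr rfl fun i _ => ?_
  rw [par_flp]; ring

/-- The eigenspace of `A n`. -/
noncomputable def E (n : ℕ) (c : ℝ) : Submodule ℝ ((Fin n → Bool) → ℝ) :=
  LinearMap.ker (A n - c • LinearMap.id)

lemma mem_E {n : ℕ} {c : ℝ} {f : (Fin n → Bool) → ℝ} : f ∈ E n c ↔ A n f = c • f := by
  simp [E, sub_eq_zero]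

lemma finrank_E (n : ℕ) : 2 ^ n ≤ 2 * Module.finrank ℝ (E n √n) := by
  have h1 := LinearMap.finrank_range_add_finrank_ker (A n - (√n) • LinearMap.id)
  have h2 : LinearMap.range (A n - (√n) • LinearMap.id) ≤ E n (-√n) := by
    rintro _ ⟨f, rfl⟩
    rw [mem_E]
    simp only [LinearMap.sub_apply, LinearMap.smul_apply, LinearMap.id_apply, map_sub, map_smul,
      A_sq]
    have : (n : ℝ) = √n * √n := (Real.mul_self_sqrt (Nat.cast_nonneg n)).symm
    conv_lhs => arg 1; rw [this]
    module
  have h3 := Submodule.finrank_mono h2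
  have h4 : (E n (-√n)).map (P n) ≤ E n √n := by
    rintro _ ⟨f, hf, rfl⟩
    rw [SetLike.mem_coe, mem_E] at hf
    rw [mem_E, A_P, hf]
    simp
  have hinj : Function.Injective (P n) := Function.LeftInverse.injective P_P
  have h5 := Submodule.finrank_mono h4
  rw [(Submodule.equivMapOfInjective (P n) hinj (E n (-√n))).symm.finrank_eq] at h5
  have h6 : Module.finrank ℝ ((Fin n → Bool) → ℝ) = 2 ^ n := by simp
  rw [h6] at h1
  change _ + Module.finrank ℝ (E n √n) = _ at h1
  omega

lemma exists_vec (n : ℕ) (hn : 1 ≤ n) (S : Finset (Fin n → Bool))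
    (hS : 2 ^ (n - 1) + 1 ≤ S.card) :
    ∃ f : (Fin n → Bool) → ℝ, f ≠ 0 ∧ A n f = √n • f ∧ ∀ x, x ∉ S → f x = 0 := by
  let R : ((Fin n → Bool) → ℝ) →ₗ[ℝ] ({x // x ∉ S} → ℝ) :=
    LinearMap.funLeft ℝ ℝ Subtype.val
  have hk := finrank_E n
  have hp : 2 ^ n = 2 * 2 ^ (n - 1) := by
    rw [← pow_succ']; congr 1; omega
  have hlt : Module.finrank ℝ ({x // x ∉ S} → ℝ) < Module.finrank ℝ (E n √n) := by
    rw [Module.finrank_fintype_fun_eq_card, Fintype.card_subtype_compl]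
    have hp' : 0 < 2 ^ (n - 1) := by positivity
    simp
    omega
  have hne := LinearMap.ker_ne_bot_of_finrank_lt (f := R.comp (E n √n).subtype) hlt
  obtain ⟨⟨f, hf⟩, hf0, hfne⟩ := Submodule.exists_mem_ne_zero_of_ne_bot hne
  refine ⟨f, fun h => hfne (by simpa using h), mem_E.1 hf, fun x hx => ?_⟩
  exact congrFun (LinearMap.mem_ker.1 hf0) ⟨x, hx⟩

lemma adj_flp {n : ℕ} (i : Fin n) (x : Fin n → Bool) : (Qgraph n).Adj x (flp i x) := by
  change (Finset.univ.filter fun k => x k ≠ flp i x k).card = 1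
  rw [Finset.card_eq_one]
  refine ⟨i, ?_⟩
  ext k
  rw [Finset.mem_filter, Finset.mem_singleton]
  by_cases h : k = i
  · subst h; simp [flp]
  · simp [flp, h]

lemma flp_inj {n : ℕ} (x : Fin n → Bool) {i j : Fin n} (h : flp i x = flp j x) : i = j := by
  by_contra hne
  have := congrFun h i
  simp [flp, Function.update_of_ne hne] at this

lemma huang (n : ℕ) (hn : 1 ≤ n) (S : Finset (Fin n → Bool))
    (hS : 2 ^ (n - 1) + 1 ≤ S.card) :
    ∃ v : (↑S : Set (Fin n → Bool)),
      √n ≤ ((((Qgraph n).induce (↑S : Set (Fin n → Bool))).degree v : ℕ) : ℝ) := by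
  obtain ⟨f, hf0, hA, hsupp⟩ := exists_vec n hn S hS
  obtain ⟨x, hx⟩ := Finite.exists_max (fun x => |f x|)
  have hpos : 0 < |f x| := by
    by_contra h
    refine hf0 (funext fun y => ?_)
    exact abs_nonpos_iff.1 ((hx y).trans (not_lt.1 h))
  have hxS : x ∈ S := by
    by_contra h
    rw [hsupp x h] at hpos
    simp at hpos
  refine ⟨⟨x, hxS⟩, ?_⟩
  have h1 : √n * |f x| ≤ ((Finset.univ.filter fun i => flp i x ∈ S).card : ℝ) * |f x| := by
    calc √n * |f x| = |A n f x| := by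
          rw [hA, Pi.smul_apply, smul_eq_mul, abs_mul, abs_of_nonneg (Real.sqrt_nonneg _)]
      _ ≤ ∑ i, |es i x * f (flp i x)| := by
          rw [A_apply]
          exact Finset.abs_sum_le_sum_abs _ _
      _ ≤ ∑ i, if flp i x ∈ S then |f x| else 0 := by
          refine Finset.sum_le_sum fun i _ => ?_
          rw [abs_mul, es_abs, one_mul]
          split_ifs with h
          · exact hx _
          · rw [hsupp _ h]; simp
      _ = _ := by
          rw [← Finset.sum_filter, Finset.sum_const, nsmul_eq_mul]
  refine (le_of_mul_le_mul_right h1 hpos).trans ?_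
  rw [Nat.cast_le, ← SimpleGraph.card_neighborFinset_eq_degree]
  have hm : ∀ i ∈ Finset.univ.filter (fun i => flp i x ∈ S), flp i x ∈ S := by simp
  rw [← Finset.card_attach]
  refine Finset.card_le_card_of_injOn
    (fun i => (⟨flp i.1 x, hm i.1 i.2⟩ : (↑S : Set (Fin n → Bool)))) ?_ ?_
  · intro i _
    simp only [SetLike.mem_coe, SimpleGraph.mem_neighborFinset, SimpleGraph.comap_adj]
    exact adj_flp _ _
  · intro i _ j _ h
    exact Subtype.ext (flp_inj x (congrArg Subtype.val h))

lemma numeric (n : ℕ) (hn : 2 ≤ n) :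
    (1 / 2) * Real.logb 2 n - (1 / 2) * Real.logb 2 (Real.logb 2 n) + 1 / 2 < √n := by
  have hn' : (2 : ℝ) ≤ n := by exact_mod_cast hn
  have h1 : 1 ≤ Real.logb 2 n := by
    rw [Real.le_logb_iff_rpow_le (by norm_num) (by linarith)]
    simpa using hn'
  have h2 : 0 ≤ Real.logb 2 (Real.logb 2 n) := Real.logb_nonneg (by norm_num) h1
  have hl := Real.log_two_gt_d9
  have hl' := Real.log_two_lt_d9
  have hs : 0 < √(n : ℝ) := Real.sqrt_pos.2 (by linarith)
  have h3 : Real.logb 2 n = 2 * Real.log √n / Real.log 2 := by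
    rw [Real.logb, Real.log_sqrt (by linarith)]; ring
  have h4 : Real.log (√n / 2) ≤ √n / 2 - 1 := Real.log_le_sub_one_of_pos (by positivity)
  rw [Real.log_div hs.ne' (by norm_num)] at h4
  have h5 : Real.log √n < (√n - 1 / 2) * Real.log 2 := by
    have hs1 : 1 ≤ √(n : ℝ) := Real.one_le_sqrt.2 (by linarith)
    nlinarith [mul_nonneg (sub_nonneg.2 hs1) (sub_nonneg.2 hl.le)]
  have h6 : Real.log √n / Real.log 2 < √n - 1 / 2 := by
    rwa [div_lt_iff₀ (by linarith)]
  have h7 : Real.logb 2 n = 2 * (Real.log √n / Real.log 2) := by rw [h3]; ring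
  linarith

end ChungAux

/-- Any induced subgraph of `Q_n` with at least `2^(n-1) + 1` vertices has a vertex of
degree greater than `(1/2)·log₂ n − (1/2)·log₂ log₂ n + 1/2`. -/
theorem chung_lower_bound (n : ℕ) (hn : 2 ≤ n) (S : Finset (Fin n → Bool))
    (hS : 2 ^ (n - 1) + 1 ≤ S.card) :
    ∃ v : (↑S : Set (Fin n → Bool)),
      (1 / 2) * Real.logb 2 n - (1 / 2) * Real.logb 2 (Real.logb 2 n) + 1 / 2 <
        ((((Qgraph n).induce (↑S : Set (Fin n → Bool))).degree v : ℕ) : ℝ) := by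
  obtain ⟨v, hv⟩ := ChungAux.huang n (by omega) S hS
  exact ⟨v, (ChungAux.numeric n hn).trans_le hv⟩
end

section
/- Let G be a nonempty subgraph of the n-dimensional hypercube graph Q_n with vertex set V(G) and average degree d̄ = (Σ_{v ∈ V(G)} deg_G(v)) / |V(G)|. Then |V(G)| ≥ 2^d̄. -/
lemma entropy_ineq (a b : ℝ) (ha : 0 ≤ a) (hab : a ≤ b) :
    a * Real.log a + b * Real.log b + 2 * a * Real.log 2 ≤ (a + b) * Real.log (a + b) := by
  rcases ha.eq_or_lt with h0 | hpos
  · subst h0; simp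
  have hb : 0 < b := by linarith
  have hs : 0 < a + b := by linarith
  have hc := Real.strictConcave_binEntropy.concaveOn
  have hp : 2 * (a / (a + b)) ≤ 1 := by
    rw [← mul_div_assoc, div_le_one hs]; linarith
  have hp0 : 0 ≤ 2 * (a / (a + b)) := by positivity
  have h := hc.2 (x := 2⁻¹) (y := 0) (by constructor <;> norm_num) (by constructor <;> norm_num)
    hp0 (sub_nonneg.2 hp) (by ring)
  simp only [smul_eq_mul, Real.binEntropy_two_inv, Real.binEntropy_zero, mul_zero, add_zero] at h
  have e1 : 2 * (a / (a + b)) * 2⁻¹ = a / (a + b) := by ring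
  have e2 : 1 - a / (a + b) = b / (a + b) := by field_simp; ring
  rw [e1, Real.binEntropy, e2, Real.log_inv, Real.log_inv, Real.log_div hpos.ne' hs.ne',
    Real.log_div hb.ne' hs.ne'] at h
  have h2 := mul_le_mul_of_nonneg_left h hs.le
  have e3 : (a + b) * (2 * (a / (a + b)) * Real.log 2) = 2 * a * Real.log 2 := by
    field_simp
  have e4 : (a + b) * (a / (a + b) * -(Real.log a - Real.log (a + b)) +
      b / (a + b) * -(Real.log b - Real.log (a + b))) =
      (a + b) * Real.log (a + b) - a * Real.log a - b * Real.log b := by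
    field_simp; ring
  rw [e3, e4] at h2
  linarith

/-- Flip the `i`-th coordinate. -/
def cflip {n : ℕ} (i : Fin n) (x : Fin n → Bool) : Fin n → Bool := Function.update x i (!x i)

lemma cflip_cflip {n : ℕ} (i : Fin n) (x : Fin n → Bool) : cflip i (cflip i x) = x := by
  simp [cflip]

lemma cflip_same {n : ℕ} (i : Fin n) (x : Fin n → Bool) : cflip i x i = !x i := by
  simp [cflip]

lemma cflip_ne {n : ℕ} {i j : Fin n} (h : i ≠ j) (x : Fin n → Bool) : cflip j x i = x i := by
  simp [cflip, h]

/-- Number of vertices of `S` whose `i`-th neighbour is in `S`. -/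
def cnt {n : ℕ} (S : Finset (Fin n → Bool)) (i : Fin n) : ℕ :=
  (S.filter fun x => cflip i x ∈ S).card

lemma cnt_split {n : ℕ} (S : Finset (Fin n → Bool)) {i j : Fin n} (h : i ≠ j) :
    cnt S j = cnt (S.filter fun x => x i = true) j + cnt (S.filter fun x => ¬ x i = true) j := by
  unfold cnt
  rw [← Finset.card_filter_add_card_filter_not (s := S.filter fun x => cflip j x ∈ S)
    (fun x => x i = true)]
  congr 2
  · ext x; simp only [Finset.mem_filter, cflip_ne h]; tauto
  · ext x; simp only [Finset.mem_filter, cflip_ne h]; tauto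

lemma cnt_le {n : ℕ} (S : Finset (Fin n → Bool)) (i : Fin n) (c : Bool) :
    cnt S i ≤ 2 * (S.filter fun x => x i = c).card := by
  unfold cnt
  have hsub : (S.filter fun x => cflip i x ∈ S) ⊆
      (S.filter fun x => x i = c) ∪ (S.filter fun x => x i = c).image (cflip i) := by
    intro x hx
    simp only [Finset.mem_filter, Finset.mem_union, Finset.mem_image] at hx ⊢
    by_cases hc : x i = c
    · exact Or.inl ⟨hx.1, hc⟩
    · refine Or.inr ⟨cflip i x, ⟨hx.2, ?_⟩, cflip_cflip i x⟩
      rw [cflip_same]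
      cases c <;> cases hxi : x i <;> simp_all
  have h1 := Finset.card_le_card hsub
  have h2 := Finset.card_union_le (S.filter fun x => x i = c)
    ((S.filter fun x => x i = c).image (cflip i))
  have h3 := Finset.card_image_le (s := S.filter fun x => x i = c) (f := cflip i)
  omega

lemma sum_cnt_le {n : ℕ} (T : Finset (Fin n)) : ∀ S : Finset (Fin n → Bool),
    ((∑ i ∈ T, cnt S i : ℕ) : ℝ) * Real.log 2 ≤ (S.card : ℝ) * Real.log S.card := by
  induction T using Finset.induction_on with
  | empty =>
    intro S
    simp only [Finset.sum_empty, Nat.cast_zero, zero_mul]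
    exact mul_nonneg (Nat.cast_nonneg _) (Real.log_natCast_nonneg _)
  | insert i T hi ih =>
    intro S
    rw [Finset.sum_insert hi]
    have hT : ∑ j ∈ T, cnt S j = ∑ j ∈ T, cnt (S.filter fun x => x i = true) j +
        ∑ j ∈ T, cnt (S.filter fun x => ¬ x i = true) j := by
      rw [← Finset.sum_add_distrib]
      refine Finset.sum_congr rfl fun j hj => cnt_split S ?_
      rintro rfl; exact hi hj
    have hcard := Finset.card_filter_add_card_filter_not (s := S) (fun x => x i = true)
    have hA := ih (S.filter fun x => x i = true)
    have hB := ih (S.filter fun x => ¬ x i = true)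
    have c1 := cnt_le S i true
    have c2 := cnt_le S i false
    have he : (S.filter fun x => x i = false) = S.filter fun x => ¬ x i = true := by
      ext x; simp
    rw [he] at c2
    rw [hT, ← hcard]
    generalize (S.filter fun x => x i = true).card = a at *
    generalize (S.filter fun x => ¬ x i = true).card = b at *
    push_cast at *
    have hl : 0 < Real.log 2 := Real.log_pos (by norm_num)
    have c1' : (cnt S i : ℝ) ≤ 2 * a := by exact_mod_cast c1
    have c2' : (cnt S i : ℝ) ≤ 2 * b := by exact_mod_cast c2
    rcases le_total a b with h | h
    · have := entropy_ineq a b (Nat.cast_nonneg _) (by exact_mod_cast h)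
      have := mul_le_mul_of_nonneg_right c1' hl.le
      linarith
    · have := entropy_ineq b a (Nat.cast_nonneg _) (by exact_mod_cast h)
      have := mul_le_mul_of_nonneg_right c2' hl.le
      rw [add_comm (b : ℝ) a] at *
      linarith

lemma adj_cflip {n : ℕ} {x y : Fin n → Bool} (h : (Qgraph n).Adj x y) :
    ∃ i, y = cflip i x := by
  change (Finset.univ.filter fun i => x i ≠ y i).card = 1 at h
  obtain ⟨i, hi⟩ := Finset.card_eq_one.1 h
  refine ⟨i, ?_⟩
  ext1 j
  have hj : x j ≠ y j ↔ j = i := by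
    have := Finset.ext_iff.1 hi j
    simpa using this
  by_cases hji : j = i
  · have := hj.2 hji
    subst hji
    rw [cflip_same]
    cases hx : x j <;> cases hy : y j <;> simp_all
  · rw [cflip_ne hji]
    by_contra hne
    exact hji (hj.1 (Ne.symm hne))

/-- Any nonempty subgraph `G` of `Q_n` with average degree `d̄` has at least `2^d̄`
vertices. -/
theorem card_ge_two_pow_avg_degree (n : ℕ) (G : (Qgraph n).Subgraph)
    (hne : G.verts.Nonempty) :
    (2 : ℝ) ^ ((∑ v ∈ (Set.toFinite G.verts).toFinset,
          (Nat.card (G.neighborSet v) : ℝ)) / (Nat.card G.verts : ℝ)) ≤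
      (Nat.card G.verts : ℝ) := by
  set S := (Set.toFinite G.verts).toFinset with hS
  have hmem : ∀ x, x ∈ S ↔ x ∈ G.verts := fun x => by simp [hS]
  have hcard : Nat.card G.verts = S.card := by
    rw [Nat.card_coe_set_eq, Set.ncard_eq_toFinset_card G.verts]
  have hSpos : 0 < S.card := by
    obtain ⟨x, hx⟩ := hne
    exact Finset.card_pos.2 ⟨x, (hmem x).2 hx⟩
  have hdeg : ∀ v ∈ S, Nat.card (G.neighborSet v) ≤
      (Finset.univ.filter fun i => cflip i v ∈ S).card := by
    intro v _
    rw [Nat.card_coe_set_eq]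
    have hsub : G.neighborSet v ⊆
        (((Finset.univ.filter fun i => cflip i v ∈ S).image fun i => cflip i v :
          Finset (Fin n → Bool)) : Set (Fin n → Bool)) := by
      intro w hw
      have hw' : G.Adj v w := hw
      obtain ⟨i, rfl⟩ := adj_cflip hw'.adj_sub
      simp only [Finset.coe_image, Set.mem_image, Finset.mem_coe, Finset.mem_filter,
        Finset.mem_univ, true_and]
      exact ⟨i, (hmem _).2 hw'.snd_mem, rfl⟩
    have h1 := Set.ncard_le_ncard hsub (Finset.finite_toSet _)
    rw [Set.ncard_coe_finset] at h1
    exact h1.trans Finset.card_image_le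
  have hsum : ∑ v ∈ S, Nat.card (G.neighborSet v) ≤ ∑ i, cnt S i := by
    refine (Finset.sum_le_sum hdeg).trans (le_of_eq ?_)
    simp only [cnt, Finset.card_filter]
    exact Finset.sum_comm
  have hmain := sum_cnt_le Finset.univ S
  have hl : 0 < Real.log 2 := Real.log_pos (by norm_num)
  have hsum' : ∑ v ∈ S, (Nat.card (G.neighborSet v) : ℝ) ≤ ((∑ i, cnt S i : ℕ) : ℝ) := by
    exact_mod_cast hsum
  have hpos : (0 : ℝ) < S.card := by exact_mod_cast hSpos
  rw [hcard]
  rw [Real.rpow_def_of_pos (by norm_num), ← Real.le_log_iff_exp_le hpos, ← mul_div_assoc,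
    div_le_iff₀ hpos]
  have := mul_le_mul_of_nonneg_right hsum' hl.le
  linarith
end

section
/- For every integer n ≥ 2, if G is an induced subgraph of the n-dimensional hypercube graph Q_n on exactly 2^(n-1) vertices such that for every direction i ∈ {1,…,n} there exist adjacent vertices x, x^(i) both in G (where x^(i) flips coordinate i), then Δ(G) > (1/2)·log₂ n − (1/2)·log₂ log₂ n + 1/2. -/
namespace HalfCube

/-- flip coordinate `i`. -/
def fl {n : ℕ} (x : Fin n → Bool) (i : Fin n) : Fin n → Bool := Function.update x i (!x i)

lemma fl_fl {n : ℕ} (x : Fin n → Bool) (i : Fin n) : fl (fl x i) i = x := by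
  simp [fl]

lemma fl_comm {n : ℕ} (x : Fin n → Bool) (i j : Fin n) : fl (fl x i) j = fl (fl x j) i := by
  funext k
  simp only [fl, Function.update_apply]
  grind

lemma fl_same {n : ℕ} (x : Fin n → Bool) (i : Fin n) : fl x i i = !x i := by
  simp [fl]

lemma fl_ne {n : ℕ} (x : Fin n → Bool) (i j : Fin n) (h : j ≠ i) : fl x i j = x j := by
  simp [fl, h]

lemma fl_inj {n : ℕ} (x : Fin n → Bool) (i j : Fin n) (h : fl x i = fl x j) : i = j := by
  by_contra hne
  have := congrFun h i
  rw [fl_same, fl_ne x j i hne] at this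
  simp at this

lemma real_ineq (a b : ℝ) (ha : 0 < a) (hab : a ≤ b) :
    a * Real.logb 2 a + b * Real.logb 2 b + 2 * a ≤ (a + b) * Real.logb 2 (a + b) := by
  have hb : 0 < b := by linarith
  have h1 : Real.logb 2 a + 1 ≤ Real.logb 2 (a + b) := by
    have : Real.logb 2 (2 * a) = 1 + Real.logb 2 a := by
      rw [Real.logb_mul (by norm_num) ha.ne', Real.logb_self_eq_one (by norm_num)]
    have h2 : Real.logb 2 (2 * a) ≤ Real.logb 2 (a + b) :=
      Real.logb_le_logb_of_le (by norm_num) (by linarith) (by linarith)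
    linarith
  have h2 : a ≤ b * (Real.logb 2 (a + b) - Real.logb 2 b) := by
    rw [← Real.logb_div (by linarith) hb.ne']
    have ht : a / b ≤ Real.logb 2 ((a + b) / b) := by
      rw [Real.le_logb_iff_rpow_le (by norm_num) (by positivity)]
      have := rpow_one_add_le_one_add_mul_self (s := 1) (p := a / b) (by norm_num)
        (by positivity) (by rw [div_le_one hb]; exact hab)
      have e : (a + b) / b = 1 + a / b * 1 := by field_simp; ring
      rw [e]
      norm_num at this ⊢
      exact this
    calc a = b * (a / b) := by field_simp
      _ ≤ _ := by gcongr
  nlinarith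

lemma real_ineq' (a b m : ℕ) (ha : m ≤ a) (hb : m ≤ b) :
    (a : ℝ) * Real.logb 2 a + b * Real.logb 2 b + 2 * m ≤
      ((a + b : ℕ) : ℝ) * Real.logb 2 ((a + b : ℕ) : ℝ) := by
  rcases Nat.eq_zero_or_pos a with h0 | h0
  · subst h0
    have : m = 0 := by omega
    subst this
    simp
  rcases Nat.eq_zero_or_pos b with h1 | h1
  · subst h1
    have : m = 0 := by omega
    subst this
    simp
  have h0' : (0 : ℝ) < a := by exact_mod_cast h0
  have h1' : (0 : ℝ) < b := by exact_mod_cast h1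
  have ha' : (m : ℝ) ≤ a := by exact_mod_cast ha
  have hb' : (m : ℝ) ≤ b := by exact_mod_cast hb
  push_cast
  rcases le_total (a : ℝ) b with h | h
  · have := real_ineq a b h0' h
    linarith
  · have := real_ineq b a h1' h
    rw [add_comm (b : ℝ) a] at this
    linarith

/-- Edge-isoperimetric inequality in the cube. -/
lemma iso {n : ℕ} (J : Finset (Fin n)) : ∀ T : Finset (Fin n → Bool),
    ((∑ j ∈ J, (T.filter fun x => fl x j ∈ T).card : ℕ) : ℝ) ≤
      (T.card : ℝ) * Real.logb 2 T.card := by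
  classical
  induction J using Finset.induction_on with
  | empty =>
    intro T
    simp only [Finset.sum_empty, Nat.cast_zero]
    rcases Nat.eq_zero_or_pos T.card with h | h
    · simp [h]
    · have : (1 : ℝ) ≤ T.card := by exact_mod_cast h
      exact mul_nonneg (by positivity) (Real.logb_nonneg (by norm_num) this)
  | insert j J hj ih =>
    intro T
    set T0 := T.filter fun x => x j = true with hT0
    set T1 := T.filter fun x => ¬ (x j = true) with hT1
    have hc : T0.card + T1.card = T.card := Finset.card_filter_add_card_filter_not _
    have hk : ∀ k ∈ J, (T.filter fun x => fl x k ∈ T).card =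
        (T0.filter fun x => fl x k ∈ T0).card + (T1.filter fun x => fl x k ∈ T1).card := by
      intro k hk
      have hne : j ≠ k := fun h => hj (h ▸ hk)
      rw [← Finset.card_filter_add_card_filter_not
        (s := T.filter fun x => fl x k ∈ T) (fun x => x j = true)]
      congr 2
      · ext x
        simp only [hT0, Finset.mem_filter, fl_ne x k j hne]
        tauto
      · ext x
        simp only [hT1, Finset.mem_filter, fl_ne x k j hne]
        tauto
    set M0 := T0.filter fun x => fl x j ∈ T1 with hM0
    have hm0 : M0.card ≤ T0.card := Finset.card_filter_le _ _
    have hM1 : (T1.filter fun x => fl x j ∈ T0).card = M0.card := by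
      apply Finset.card_bij' (fun x _ => fl x j) (fun x _ => fl x j)
      · intro x hx
        simp only [hM0, Finset.mem_filter, fl_fl] at hx ⊢
        tauto
      · intro x hx
        simp only [hM0, Finset.mem_filter, fl_fl] at hx ⊢
        tauto
      · intro x _; exact fl_fl x j
      · intro x _; exact fl_fl x j
    have hm1 : M0.card ≤ T1.card := by
      rw [← hM1]; exact Finset.card_filter_le _ _
    have hjc : (T.filter fun x => fl x j ∈ T).card = 2 * M0.card := by
      rw [← Finset.card_filter_add_card_filter_not
        (s := T.filter fun x => fl x j ∈ T) (fun x => x j = true), two_mul]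
      nth_rewrite 2 [← hM1]
      congr 2
      · ext x
        simp only [hM0, hT0, hT1, Finset.mem_filter, fl_same]
        cases x j <;> simp
      · ext x
        simp only [hT0, hT1, Finset.mem_filter, fl_same]
        cases x j <;> simp
    rw [Finset.sum_insert hj, Finset.sum_congr rfl hk, Finset.sum_add_distrib, hjc]
    have h0 := ih T0
    have h1 := ih T1
    have h2 := real_ineq' T0.card T1.card M0.card hm0 hm1
    rw [hc] at h2
    push_cast at h0 h1 ⊢
    linarith

/-- The number of edges in direction `i` is large. -/
lemma dir_count {n : ℕ} (hn : 1 ≤ n) (S : Finset (Fin n → Bool)) (hS : S.card = 2 ^ (n - 1))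
    (s : ℕ) (hs : ∀ x ∈ S, (Finset.univ.filter fun j => fl x j ∈ S).card ≤ s)
    (i : Fin n) (hi : ∃ x ∈ S, fl x i ∈ S) :
    2 * 2 ^ n ≤ (S.filter fun x => fl x i ∈ S).card * 4 ^ s := by
  classical
  set A := S.filter fun x => fl x i ∈ S with hA
  set B := Sᶜ.filter fun x => fl x i ∉ S with hB
  have hpow : 2 ^ n = 2 * 2 ^ (n - 1) := by
    rw [← pow_succ']; congr 1; omega
  have hSc : Sᶜ.card = 2 ^ (n - 1) := by
    rw [Finset.card_compl, hS]; simp; omega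
  -- balance
  have hAB : A.card = B.card := by
    have h1 := Finset.card_filter_add_card_filter_not (s := S) (fun x => fl x i ∈ S)
    have h2 := Finset.card_filter_add_card_filter_not (s := Sᶜ) (fun x => fl x i ∉ S)
    have h3 : (S.filter fun x => ¬ fl x i ∈ S).card = (Sᶜ.filter fun x => ¬ fl x i ∉ S).card := by
      apply Finset.card_bij' (fun x _ => fl x i) (fun x _ => fl x i)
      · intro x hx
        simp only [Finset.mem_filter, Finset.mem_compl, fl_fl] at hx ⊢
        tauto
      · intro x hx
        simp only [Finset.mem_filter, Finset.mem_compl, fl_fl] at hx ⊢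
        tauto
      · intro x _; exact fl_fl x i
      · intro x _; exact fl_fl x i
    rw [← hA] at h1
    rw [← hB] at h2
    omega
  have hdisj : Disjoint A B := by
    rw [Finset.disjoint_left]
    intro x hx hx'
    simp only [hA, hB, Finset.mem_filter, Finset.mem_compl] at hx hx'
    tauto
  set T := A ∪ B with hT
  have hTc : T.card = 2 * A.card := by
    rw [hT, Finset.card_union_of_disjoint hdisj]; omega
  have hAi : ∀ x, x ∈ A → fl x i ∈ A := by
    intro x hx
    simp only [hA, Finset.mem_filter, fl_fl] at hx ⊢
    tauto
  have hBi : ∀ x, x ∈ B → fl x i ∈ B := by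
    intro x hx
    simp only [hB, Finset.mem_filter, Finset.mem_compl, fl_fl] at hx ⊢
    tauto
  -- per direction
  have hj : ∀ j, 2 * (A.filter fun x => fl x j ∈ B).card + (if j = i then 2 * A.card else 0) ≤
      (T.filter fun x => fl x j ∈ T).card := by
    intro j
    by_cases hji : j = i
    · subst hji
      have h0 : (A.filter fun x => fl x j ∈ B) = ∅ := by
        rw [Finset.filter_eq_empty_iff]
        intro x hx hx'
        exact Finset.disjoint_left.1 hdisj (hAi x hx) hx'
      have h1 : (T.filter fun x => fl x j ∈ T) = T := by
        rw [Finset.filter_eq_self]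
        intro x hx
        rw [hT, Finset.mem_union] at hx ⊢
        exact hx.imp (hAi x) (hBi x)
      rw [h0, h1, hTc]
      simp
    · simp only [hji, if_false, add_zero]
      have hM : (B.filter fun x => fl x j ∈ A).card = (A.filter fun x => fl x j ∈ B).card := by
        apply Finset.card_bij' (fun x _ => fl x j) (fun x _ => fl x j)
        · intro x hx
          simp only [Finset.mem_filter, fl_fl] at hx ⊢
          tauto
        · intro x hx
          simp only [Finset.mem_filter, fl_fl] at hx ⊢
          tauto
        · intro x _; exact fl_fl x j
        · intro x _; exact fl_fl x j
      rw [two_mul]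
      nth_rewrite 2 [← hM]
      rw [← Finset.card_union_of_disjoint (Finset.disjoint_filter_filter hdisj)]
      apply Finset.card_le_card
      intro x hx
      simp only [hT, Finset.mem_union, Finset.mem_filter] at hx ⊢
      tauto
  -- degrees
  have hdeg : ∀ x ∈ A, n + 1 ≤ (Finset.univ.filter fun j => fl x j ∈ B).card + 2 * s := by
    intro x hx
    have hx' := hx
    simp only [hA, Finset.mem_filter] at hx'
    set N := Finset.univ.filter fun j => fl x j ∈ S with hN
    set N' := Finset.univ.filter fun j => fl (fl x i) j ∈ S with hN'
    have c1 : N.card ≤ s := hs x hx'.1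
    have c2 : N'.card ≤ s := hs _ hx'.2
    have c3 : 1 ≤ (N ∩ N').card := by
      apply Finset.card_pos.2
      refine ⟨i, ?_⟩
      simp only [hN, hN', Finset.mem_inter, Finset.mem_filter, Finset.mem_univ, true_and, fl_fl]
      exact ⟨hx'.2, hx'.1⟩
    have c4 := Finset.card_union_add_card_inter N N'
    have c5 : (N ∪ N')ᶜ ⊆ Finset.univ.filter fun j => fl x j ∈ B := by
      intro j hj
      simp only [hN, hN', hB, Finset.mem_compl, Finset.mem_union, Finset.mem_filter,
        Finset.mem_univ, true_and] at hj ⊢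
      rw [fl_comm x j i]
      tauto
    have c6 := Finset.card_le_card c5
    rw [Finset.card_compl, Fintype.card_fin] at c6
    omega
  have hsum : ∑ j, (A.filter fun x => fl x j ∈ B).card =
      ∑ x ∈ A, (Finset.univ.filter fun j => fl x j ∈ B).card := by
    simp only [Finset.card_filter]
    exact Finset.sum_comm
  have hlow : A.card * (n + 1) ≤ ∑ j, (A.filter fun x => fl x j ∈ B).card + A.card * (2 * s) := by
    rw [hsum, ← smul_eq_mul, ← smul_eq_mul, ← Finset.sum_const, ← Finset.sum_const,
      ← Finset.sum_add_distrib]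
    exact Finset.sum_le_sum hdeg
  have htot := Finset.sum_le_sum (s := Finset.univ) (fun j _ => hj j)
  rw [Finset.sum_add_distrib, ← Finset.mul_sum, Finset.sum_ite_eq' Finset.univ i] at htot
  simp only [Finset.mem_univ, if_true] at htot
  have hiso := iso Finset.univ T
  have hApos : 0 < A.card := by
    obtain ⟨x, hx, hx'⟩ := hi
    exact Finset.card_pos.2 ⟨x, by simp [hA, hx, hx']⟩
  have hApos' : (0 : ℝ) < A.card := by exact_mod_cast hApos
  have hR1 : (A.card : ℝ) * (n + 1) ≤
      ((∑ j, (A.filter fun x => fl x j ∈ B).card : ℕ) : ℝ) + A.card * (2 * s) := by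
    exact_mod_cast hlow
  have hR2 : 2 * ((∑ j, (A.filter fun x => fl x j ∈ B).card : ℕ) : ℝ) + 2 * A.card ≤
      ((∑ j, (T.filter fun x => fl x j ∈ T).card : ℕ) : ℝ) := by
    exact_mod_cast htot
  rw [hTc] at hiso
  push_cast at hiso hR1 hR2
  have hlog : (n : ℝ) + 2 - 2 * s ≤ Real.logb 2 (2 * (A.card : ℝ)) := by
    have : (2 * (A.card : ℝ)) * ((n : ℝ) + 2 - 2 * s) ≤
      (2 * (A.card : ℝ)) * Real.logb 2 (2 * (A.card : ℝ)) := by linarith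
    exact le_of_mul_le_mul_left this (by positivity)
  rw [Real.le_logb_iff_rpow_le (by norm_num) (by positivity)] at hlog
  have h4 : (2 : ℝ) ^ ((n : ℝ) + 2 - 2 * s) * 4 ^ s = 4 * 2 ^ n := by
    have e : (4 : ℝ) ^ s = 2 ^ (2 * (s : ℝ)) := by
      rw [Real.rpow_mul (by norm_num), Real.rpow_natCast]; norm_num
    rw [e, ← Real.rpow_add (by norm_num)]
    rw [sub_add_cancel, Real.rpow_add (by norm_num), Real.rpow_natCast]
    norm_num
    ring
  have h5 : (4 : ℝ) * 2 ^ n ≤ 2 * (A.card : ℝ) * 4 ^ s := by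
    rw [← h4]; gcongr
  have h6 : 4 * 2 ^ n ≤ 2 * A.card * 4 ^ s := by exact_mod_cast h5
  nlinarith

lemma main_nat {n : ℕ} (hn : 1 ≤ n) (S : Finset (Fin n → Bool)) (hS : S.card = 2 ^ (n - 1))
    (s : ℕ) (hs : ∀ x ∈ S, (Finset.univ.filter fun j => fl x j ∈ S).card ≤ s)
    (hi : ∀ i, ∃ x ∈ S, fl x i ∈ S) : 4 * n ≤ s * 4 ^ s := by
  classical
  have hsum : ∑ j, (S.filter fun x => fl x j ∈ S).card =
      ∑ x ∈ S, (Finset.univ.filter fun j => fl x j ∈ S).card := by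
    simp only [Finset.card_filter]
    exact Finset.sum_comm
  have hup : ∑ j, (S.filter fun x => fl x j ∈ S).card ≤ 2 ^ (n - 1) * s := by
    rw [hsum, ← hS, ← smul_eq_mul, ← Finset.sum_const]
    exact Finset.sum_le_sum hs
  have hlow : ∑ _j : Fin n, 2 * 2 ^ n ≤ ∑ j, (S.filter fun x => fl x j ∈ S).card * 4 ^ s :=
    Finset.sum_le_sum fun i _ => dir_count hn S hS s hs i (hi i)
  rw [← Finset.sum_mul (Finset.univ) (fun j => (S.filter fun x => fl x j ∈ S).card)] at hlow
  simp only [Finset.sum_const, Finset.card_univ, Fintype.card_fin, smul_eq_mul] at hlow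
  have hpow : 2 ^ n = 2 * 2 ^ (n - 1) := by
    rw [← pow_succ']; congr 1; omega
  have h1 : n * (2 * 2 ^ n) ≤ 2 ^ (n - 1) * s * 4 ^ s :=
    hlow.trans (Nat.mul_le_mul_right _ hup)
  rw [hpow] at h1
  have h2 : 2 ^ (n - 1) * (4 * n) ≤ 2 ^ (n - 1) * (s * 4 ^ s) := by
    calc _ = n * (2 * (2 * 2 ^ (n - 1))) := by ring
      _ ≤ _ := h1
      _ = _ := by ring
  exact Nat.le_of_mul_le_mul_left h2 (by positivity)

lemma final (n s : ℕ) (hn : 2 ≤ n) (h : 4 * n ≤ s * 4 ^ s) :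
    (1 / 2) * Real.logb 2 n - (1 / 2) * Real.logb 2 (Real.logb 2 n) + 1 / 2 < (s : ℝ) := by
  by_contra hc
  push Not at hc
  have hs : 0 < s := by
    rcases Nat.eq_zero_or_pos s with h0 | h0
    · subst h0; omega
    · exact h0
  have hs' : (0 : ℝ) < s := by exact_mod_cast hs
  have hn' : (2 : ℝ) ≤ n := by exact_mod_cast hn
  have hL : 1 ≤ Real.logb 2 n := by
    rw [Real.le_logb_iff_rpow_le (by norm_num) (by linarith)]; simpa using hn'
  have hLL : 0 ≤ Real.logb 2 (Real.logb 2 n) := Real.logb_nonneg (by norm_num) hL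
  have hR : (4 : ℝ) * n ≤ s * 4 ^ s := by exact_mod_cast h
  have hlog := Real.logb_le_logb_of_le (b := 2) (by norm_num) (by linarith) hR
  have l4 : Real.logb 2 4 = 2 := by
    rw [show (4 : ℝ) = 2 ^ (2 : ℕ) by norm_num, Real.logb_pow,
      Real.logb_self_eq_one (by norm_num)]; norm_num
  rw [Real.logb_mul (by norm_num) (by linarith), Real.logb_mul hs'.ne' (by positivity),
    Real.logb_pow, l4] at hlog
  have hsL : (s : ℝ) ≤ Real.logb 2 n := by linarith
  have := Real.logb_le_logb_of_le (b := 2) (by norm_num) hs' hsL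
  linarith

lemma deg_le {n : ℕ} (S : Finset (Fin n → Bool)) (x : Fin n → Bool) (hx : x ∈ S) :
    (Finset.univ.filter fun j => fl x j ∈ S).card ≤
      ((Qgraph n).induce (↑S : Set (Fin n → Bool))).maxDegree := by
  classical
  refine le_trans ?_ (SimpleGraph.degree_le_maxDegree _ ⟨x, hx⟩)
  rw [← SimpleGraph.card_neighborFinset_eq_degree]
  apply Finset.card_le_card_of_forall_subsingleton
    (fun j (y : (↑S : Set (Fin n → Bool))) => y.1 = fl x j)
  · intro j hj
    simp only [Finset.mem_filter, Finset.mem_univ, true_and] at hj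
    refine ⟨⟨fl x j, hj⟩, ?_, rfl⟩
    rw [SimpleGraph.mem_neighborFinset]
    show (Finset.univ.filter fun i => x i ≠ fl x j i).card = 1
    rw [Finset.card_eq_one]
    refine ⟨j, ?_⟩
    ext k
    simp only [Finset.mem_filter, Finset.mem_univ, true_and, Finset.mem_singleton]
    by_cases hk : k = j
    · subst hk; simp [fl_same]
    · simp [fl_ne x j k hk, hk]
  · intro y _ j hj k hk
    exact fl_inj x j k (hj.2.symm.trans hk.2)

end HalfCube

/-- If `G` is an induced subgraph of `Q_n` on exactly `2^(n-1)` vertices containing an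
edge in every direction `i`, then `Δ(G) > (1/2)·log₂ n − (1/2)·log₂ log₂ n + 1/2`. -/
theorem chung_half_cube_lower_bound (n : ℕ) (hn : 2 ≤ n) (S : Finset (Fin n → Bool))
    (hS : S.card = 2 ^ (n - 1))
    (hdir : ∀ i : Fin n, ∃ x : Fin n → Bool,
      x ∈ S ∧ Function.update x i (!x i) ∈ S) :
    (1 / 2) * Real.logb 2 n - (1 / 2) * Real.logb 2 (Real.logb 2 n) + 1 / 2 <
      (((Qgraph n).induce (↑S : Set (Fin n → Bool))).maxDegree : ℝ) := by
  exact HalfCube.final n _ hn (HalfCube.main_nat (by omega) S hS _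
    (fun x hx => HalfCube.deg_le S x hx) hdir)
end

section
/- Let f : {-1,1}^n → {-1,1} be a Boolean function that depends on all n variables, i.e. for every i ∈ {1,…,n} there exists x with f(x^(i)) ≠ f(x), where x^(i) flips the sign of coordinate i. Then n ≤ deg(f) · 2^(deg(f)). -/
/-- The `±1` value of a bit: `true ↦ 1`, `false ↦ -1`. -/
noncomputable def sgnv (b : Bool) : ℝ := if b then 1 else -1

/-- The Fourier coefficient `f̂(S)` of a Boolean function `f : {-1,1}^n → {-1,1}`
(encoded via bits), i.e. `f̂(S) = 2^(-n) · Σ_x f(x) · ∏_{i ∈ S} x_i`. -/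
noncomputable def boolFourier {n : ℕ} (f : (Fin n → Bool) → Bool) (S : Finset (Fin n)) : ℝ :=
  (∑ x : Fin n → Bool, sgnv (f x) * ∏ i ∈ S, sgnv (x i)) / 2 ^ n

/-- The degree of a Boolean function `f : {-1,1}^n → {-1,1}`:
`deg f = max {|S| : f̂(S) ≠ 0}`, the degree of the unique multilinear real
polynomial representing `f`. -/
noncomputable def boolDeg {n : ℕ} (f : (Fin n → Bool) → Bool) : ℕ :=
  sSup {k : ℕ | ∃ S : Finset (Fin n), boolFourier f S ≠ 0 ∧ S.card = k}

/-- The influence `Inf_i(f)` of variable `i` on `f`: the probability over a uniformly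
random input `x` that flipping coordinate `i` changes the value of `f`. -/
noncomputable def influence {n : ℕ} (f : (Fin n → Bool) → Bool) (i : Fin n) : ℝ :=
  ((Finset.univ.filter fun x : Fin n → Bool =>
      f (Function.update x i (!x i)) ≠ f x).card : ℝ) / 2 ^ n

theorem ns_prod_flip {n : ℕ} (S : Finset (Fin n)) (x : Fin n → Bool) (i : Fin n) :
    ∏ j ∈ S, sgnv (Function.update x i (!x i) j)
      = (if i ∈ S then -1 else 1) * ∏ j ∈ S, sgnv (x j) := by
  have hne : ∀ T : Finset (Fin n), i ∉ T →
      ∏ j ∈ T, sgnv (Function.update x i (!x i) j) = ∏ j ∈ T, sgnv (x j) := by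
    intro T hT
    refine Finset.prod_congr rfl fun j hj => ?_
    rw [Function.update_of_ne]
    rintro rfl
    exact hT hj
  by_cases h : i ∈ S
  · rw [← Finset.mul_prod_erase S _ h, ← Finset.mul_prod_erase S (fun j => sgnv (x j)) h,
      hne _ (Finset.notMem_erase i S)]
    simp only [h, if_true, Function.update_self]
    cases x i <;> simp [sgnv]
  · rw [hne S h]
    simp [h]

theorem ns_sgnv_sq (b : Bool) : sgnv b * sgnv b = 1 := by
  cases b <;> simp [sgnv]

theorem ns_prod_sq {n : ℕ} (S : Finset (Fin n)) (x : Fin n → Bool) :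
    (∏ j ∈ S, sgnv (x j)) * ∏ j ∈ S, sgnv (x j) = 1 := by
  rw [← Finset.prod_mul_distrib]
  exact Finset.prod_eq_one fun j _ => ns_sgnv_sq _

theorem ns_flip_invol {n : ℕ} (i : Fin n) :
    Function.Involutive (fun x : Fin n → Bool => Function.update x i (!x i)) := by
  intro x
  ext j
  by_cases h : j = i
  · subst h; simp
  · simp [h]

/-- a sum of an odd function over a flip-closed set vanishes -/
theorem ns_sum_odd {n : ℕ} (i : Fin n) (A : Finset (Fin n → Bool)) (g : (Fin n → Bool) → ℝ)
    (hA : ∀ x, x ∈ A → Function.update x i (!x i) ∈ A)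
    (hg : ∀ x ∈ A, g (Function.update x i (!x i)) = - g x) : ∑ x ∈ A, g x = 0 := by
  have h : ∑ x ∈ A, g x = ∑ x ∈ A, - g x := by
    refine Finset.sum_nbij' (fun x => Function.update x i (!x i))
      (fun x => Function.update x i (!x i)) (fun x hx => hA x hx) (fun x hx => hA x hx)
      (fun x _ => ns_flip_invol i x) (fun x _ => ns_flip_invol i x) ?_
    intro x hx
    rw [hg x hx, neg_neg]
  rw [Finset.sum_neg_distrib] at h
  linarith

theorem ns_orth {n : ℕ} (S T : Finset (Fin n)) :
    ∑ x : Fin n → Bool, (∏ j ∈ S, sgnv (x j)) * ∏ j ∈ T, sgnv (x j)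
      = if S = T then 2 ^ n else 0 := by
  split_ifs with h
  · subst h
    simp [ns_prod_sq]
  · have : ∃ i, ¬ (i ∈ S ↔ i ∈ T) := by
      by_contra hc
      push Not at hc
      exact h (Finset.ext hc)
    obtain ⟨i, hi⟩ := this
    refine ns_sum_odd i _ _ (fun _ _ => Finset.mem_univ _) fun x _ => ?_
    rw [ns_prod_flip, ns_prod_flip]
    by_cases h1 : i ∈ S <;> by_cases h2 : i ∈ T <;> simp_all

theorem ns_orth' {n : ℕ} (x y : Fin n → Bool) :
    ∑ S : Finset (Fin n), (∏ j ∈ S, sgnv (x j)) * ∏ j ∈ S, sgnv (y j)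
      = if x = y then 2 ^ n else 0 := by
  have h : ∑ S : Finset (Fin n), (∏ j ∈ S, sgnv (x j)) * ∏ j ∈ S, sgnv (y j)
      = ∏ j, (1 + sgnv (x j) * sgnv (y j)) := by
    rw [Finset.prod_one_add]
    simp [Finset.prod_mul_distrib]
  rw [h]
  split_ifs with hxy
  · subst hxy
    simp only [ns_sgnv_sq]
    norm_num
  · obtain ⟨i, hi⟩ := Function.ne_iff.mp hxy
    refine Finset.prod_eq_zero (Finset.mem_univ i) ?_
    revert hi
    cases x i <;> cases y i <;> simp [sgnv]

theorem ns_inversion {n : ℕ} (f : (Fin n → Bool) → Bool) (x : Fin n → Bool) :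
    ∑ S : Finset (Fin n), boolFourier f S * ∏ j ∈ S, sgnv (x j) = sgnv (f x) := by
  have h : ∀ S : Finset (Fin n), boolFourier f S * ∏ j ∈ S, sgnv (x j)
      = ∑ y : Fin n → Bool, sgnv (f y) / 2 ^ n *
          ((∏ j ∈ S, sgnv (y j)) * ∏ j ∈ S, sgnv (x j)) := by
    intro S
    rw [boolFourier, Finset.sum_div, Finset.sum_mul]
    exact Finset.sum_congr rfl fun y _ => by ring
  simp_rw [h]
  rw [Finset.sum_comm]
  simp_rw [← Finset.mul_sum, ns_orth']
  simp

theorem ns_parseval {n : ℕ} (c : Finset (Fin n) → ℝ) :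
    ∑ x : Fin n → Bool, (∑ S : Finset (Fin n), c S * ∏ j ∈ S, sgnv (x j)) ^ 2
      = 2 ^ n * ∑ S, c S ^ 2 := by
  have h : ∀ x : Fin n → Bool, (∑ S : Finset (Fin n), c S * ∏ j ∈ S, sgnv (x j)) ^ 2
      = ∑ S : Finset (Fin n), ∑ T : Finset (Fin n),
        c S * c T * ((∏ j ∈ S, sgnv (x j)) * ∏ j ∈ T, sgnv (x j)) := by
    intro x
    rw [sq, Finset.sum_mul_sum]
    exact Finset.sum_congr rfl fun S _ => Finset.sum_congr rfl fun T _ => by ring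
  simp_rw [h]
  rw [Finset.sum_comm, Finset.mul_sum]
  refine Finset.sum_congr rfl fun S _ => ?_
  rw [Finset.sum_comm]
  simp_rw [← Finset.mul_sum, ns_orth]
  simp
  ring

theorem ns_sum_sq {n : ℕ} (f : (Fin n → Bool) → Bool) :
    ∑ S : Finset (Fin n), boolFourier f S ^ 2 = 1 := by
  have h := ns_parseval (boolFourier f)
  simp_rw [ns_inversion, sq (sgnv _), ns_sgnv_sq] at h
  simp at h
  have : (2:ℝ) ^ n ≠ 0 := by positivity
  exact h

theorem ns_diff {n : ℕ} (f : (Fin n → Bool) → Bool) (i : Fin n) (x : Fin n → Bool) :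
    ∑ S : Finset (Fin n), (if i ∈ S then boolFourier f S else 0) * ∏ j ∈ S, sgnv (x j)
      = (sgnv (f x) - sgnv (f (Function.update x i (!x i)))) / 2 := by
  rw [← ns_inversion f x, ← ns_inversion f (Function.update x i (!x i)),
    ← Finset.sum_sub_distrib, Finset.sum_div]
  refine Finset.sum_congr rfl fun S _ => ?_
  rw [ns_prod_flip]
  split_ifs <;> ring

theorem ns_card_sens {n : ℕ} (f : (Fin n → Bool) → Bool) (i : Fin n) :
    ((Finset.univ.filter fun x : Fin n → Bool =>
      f (Function.update x i (!x i)) ≠ f x).card : ℝ)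
      = 2 ^ n * ∑ S : Finset (Fin n), if i ∈ S then boolFourier f S ^ 2 else 0 := by
  have h := ns_parseval (fun S => if i ∈ S then boolFourier f S else 0)
  simp_rw [ns_diff, ite_pow] at h
  rw [Finset.card_filter]
  push_cast
  simp only [ne_eq, OfNat.ofNat_ne_zero, not_false_eq_true, zero_pow] at h
  rw [← h]
  refine Finset.sum_congr rfl fun x _ => ?_
  cases f x <;> cases f (Function.update x i (!x i)) <;> norm_num [sgnv]

theorem ns_card_le_deg {n : ℕ} (f : (Fin n → Bool) → Bool) (S : Finset (Fin n))
    (hS : boolFourier f S ≠ 0) : S.card ≤ boolDeg f := by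
  refine le_csSup ⟨n, ?_⟩ ⟨S, hS, rfl⟩
  rintro k ⟨T, _, rfl⟩
  simpa using Finset.card_le_univ T

theorem ns_total {n : ℕ} (f : (Fin n → Bool) → Bool) :
    ∑ i : Fin n, ((Finset.univ.filter fun x : Fin n → Bool =>
      f (Function.update x i (!x i)) ≠ f x).card : ℝ) ≤ 2 ^ n * boolDeg f := by
  simp_rw [ns_card_sens]
  rw [← Finset.mul_sum, Finset.sum_comm]
  refine mul_le_mul_of_nonneg_left ?_ (by positivity)
  calc _ ≤ ∑ S : Finset (Fin n), (boolDeg f : ℝ) * boolFourier f S ^ 2 := by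
        refine Finset.sum_le_sum fun S _ => ?_
        rw [← Finset.sum_filter]
        simp only [Finset.filter_univ_mem, Finset.sum_const, nsmul_eq_mul]
        by_cases h : boolFourier f S = 0
        · simp [h]
        · exact mul_le_mul_of_nonneg_right (by exact_mod_cast ns_card_le_deg f S h) (sq_nonneg _)
    _ = boolDeg f := by rw [← Finset.mul_sum, ns_sum_sq, mul_one]

theorem ns_exists_max {n : ℕ} (f : (Fin n → Bool) → Bool) (i : Fin n)
    (h : ∃ x : Fin n → Bool, f (Function.update x i (!x i)) ≠ f x) :
    ∃ S : Finset (Fin n), i ∈ S ∧ boolFourier f S ≠ 0 ∧ ∀ T, S ⊂ T → boolFourier f T = 0 := by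
  classical
  have hne : (Finset.univ.filter fun S : Finset (Fin n) =>
      i ∈ S ∧ boolFourier f S ≠ 0).Nonempty := by
    by_contra hc
    rw [Finset.not_nonempty_iff_eq_empty, Finset.filter_eq_empty_iff] at hc
    obtain ⟨x, hx⟩ := h
    have hd := ns_diff f i x
    rw [Finset.sum_eq_zero] at hd
    · revert hx hd
      cases f x <;> cases f (Function.update x i (!x i)) <;> norm_num [sgnv]
    · intro S _
      have := hc (Finset.mem_univ S)
      clear hd
      by_cases hi : i ∈ S <;> simp_all
  obtain ⟨S, hS, hmax⟩ := Finset.exists_max_image _ Finset.card hne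
  simp only [Finset.mem_filter, Finset.mem_univ, true_and] at hS hmax
  refine ⟨S, hS.1, hS.2, fun T hT => ?_⟩
  by_contra hc
  exact absurd (hmax T ⟨hT.1 hS.1, hc⟩) (not_le.mpr (Finset.card_lt_card hT))

theorem ns_exists_sens {n : ℕ} (f : (Fin n → Bool) → Bool) (i : Fin n) (S : Finset (Fin n))
    (hi : i ∈ S) (hS : boolFourier f S ≠ 0) (hmax : ∀ T, S ⊂ T → boolFourier f T = 0)
    (x : Fin n → Bool) :
    ∃ y, f (Function.update y i (!y i)) ≠ f y ∧ ∀ j ∉ S, y j = x j := by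
  classical
  by_contra hc
  push Not at hc
  set A : Finset (Fin n → Bool) := Finset.univ.filter fun y => ∀ j ∉ S, y j = x j with hA
  have hmem : ∀ y, y ∈ A ↔ ∀ j ∉ S, y j = x j := by simp [hA]
  have hcl : ∀ k ∈ S, ∀ y ∈ A, Function.update y k (!y k) ∈ A := by
    intro k hk y hy
    rw [hmem] at hy ⊢
    intro j hj
    rw [Function.update_of_ne (by rintro rfl; exact hj hk)]
    exact hy j hj
  have h0 : ∑ y ∈ A, sgnv (f y) * ∏ j ∈ S, sgnv (y j) = 0 := by
    refine ns_sum_odd i A _ (hcl i hi) fun y hy => ?_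
    have hfy : f (Function.update y i (!y i)) = f y := by
      by_contra hne
      obtain ⟨j, hj, hj'⟩ := hc y hne
      exact hj' ((hmem y).1 hy j hj)
    rw [ns_prod_flip, hfy]
    simp [hi]
  have h1 : ∑ y ∈ A, sgnv (f y) * ∏ j ∈ S, sgnv (y j) = boolFourier f S * A.card := by
    simp_rw [← ns_inversion f, Finset.sum_mul]
    rw [Finset.sum_comm, Finset.sum_eq_single S]
    · simp_rw [mul_assoc, ns_prod_sq]
      simp [mul_comm]
    · intro T _ hT
      by_cases hST : S ⊆ T
      · rw [hmax T (lt_of_le_of_ne hST (Ne.symm hT))]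
        simp
      · obtain ⟨k, hk, hk'⟩ := Finset.not_subset.mp hST
        refine ns_sum_odd k A _ (hcl k hk) fun y _ => ?_
        rw [ns_prod_flip, ns_prod_flip]
        simp [hk, hk']
    · simp
  rw [h0] at h1
  have hx : x ∈ A := (hmem x).2 fun _ _ => rfl
  have : (A.card : ℝ) ≠ 0 := by
    exact_mod_cast (Finset.card_pos.mpr ⟨x, hx⟩).ne'
  exact mul_ne_zero hS this h1.symm

theorem ns_lower {n : ℕ} (f : (Fin n → Bool) → Bool) (i : Fin n)
    (h : ∃ x : Fin n → Bool, f (Function.update x i (!x i)) ≠ f x) :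
    2 ^ n ≤ (Finset.univ.filter fun x : Fin n → Bool =>
      f (Function.update x i (!x i)) ≠ f x).card * 2 ^ boolDeg f := by
  classical
  obtain ⟨S, hi, hS, hmax⟩ := ns_exists_max f i h
  set A := Finset.univ.filter fun x : Fin n → Bool => f (Function.update x i (!x i)) ≠ f x with hA
  have hle : (Finset.univ : Finset (Fin n → Bool)).card ≤ (A ×ˢ S.powerset).card := by
    refine Finset.card_le_card_of_surjOn
      (fun p : (Fin n → Bool) × Finset (Fin n) => fun j => if j ∈ p.2 then !p.1 j else p.1 j) ?_
    intro x _
    obtain ⟨y, hy, hyx⟩ := ns_exists_sens f i S hi hS hmax x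
    refine ⟨(y, S.filter fun j => y j ≠ x j), ?_, ?_⟩
    · rw [Finset.mem_coe, Finset.mem_product, Finset.mem_powerset]
      exact ⟨by simp [hA, hy], Finset.filter_subset _ _⟩
    · funext j
      by_cases hj : j ∈ S
      · cases hyj : y j <;> cases hxj : x j <;> simp [hj, hyj, hxj]
      · simp [hj, hyx j hj]
  rw [Finset.card_product, Finset.card_powerset] at hle
  simp only [Finset.card_univ, Fintype.card_pi, Fintype.card_bool, Finset.prod_const,
    Fintype.card_fin] at hle
  exact hle.trans (Nat.mul_le_mul_left _
    (Nat.pow_le_pow_right (by norm_num) (ns_card_le_deg f S hS)))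

/-- Nisan–Szegedy: if a Boolean function `f : {-1,1}^n → {-1,1}` depends on all `n`
variables, then `n ≤ deg(f) · 2^(deg f)` (hence `deg f ≥ log₂ n − O(log log n)`). -/
theorem n_le_degree_mul_two_pow_degree (n : ℕ) (f : (Fin n → Bool) → Bool)
    (hdep : ∀ i : Fin n, ∃ x : Fin n → Bool, f (Function.update x i (!x i)) ≠ f x) :
    n ≤ boolDeg f * 2 ^ boolDeg f := by
  have h1 := ns_total f
  have h2 : ∑ i : Fin n, (Finset.univ.filter fun x : Fin n → Bool =>
      f (Function.update x i (!x i)) ≠ f x).card ≤ 2 ^ n * boolDeg f := by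
    exact_mod_cast h1
  have h3 : n * 2 ^ n ≤ (∑ i : Fin n, (Finset.univ.filter fun x : Fin n → Bool =>
      f (Function.update x i (!x i)) ≠ f x).card) * 2 ^ boolDeg f := by
    rw [Finset.sum_mul]
    calc n * 2 ^ n = ∑ i : Fin n, 2 ^ n := by simp
      _ ≤ _ := Finset.sum_le_sum fun i _ => ns_lower f i (hdep i)
  have h4 := h3.trans (Nat.mul_le_mul_right (2 ^ boolDeg f) h2)
  have h5 : 2 ^ n * n ≤ 2 ^ n * (boolDeg f * 2 ^ boolDeg f) := by
    calc 2 ^ n * n = n * 2 ^ n := mul_comm _ _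
      _ ≤ _ := h4
      _ = _ := by ring
  exact Nat.le_of_mul_le_mul_left h5 (by positivity)
end

section
/- Let p ∈ ℝ[x₁,…,xₙ] be a polynomial. Then there exists a univariate polynomial q ∈ ℝ[z] with deg(q) ≤ deg(p) such that for all x = (x₁,…,xₙ) ∈ {0,1}^n, (1/n!)·Σ_{σ ∈ S_n} p(x_{σ(1)},…,x_{σ(n)}) = q(x₁ + ⋯ + xₙ), where S_n is the symmetric group on {1,…,n}. -/
lemma bval_sq (b : Bool) : bval b * bval b = bval b := by
  cases b <;> simp [bval]

lemma bval_pow (b : Bool) (k : ℕ) (hk : k ≠ 0) : bval b ^ k = bval b := by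
  cases b <;> simp [bval, hk]

lemma symF_step (n : ℕ) (S : Finset (Fin n)) (j : Fin n) (hj : j ∉ S) (x : Fin n → Bool) :
    ((n : ℝ) - S.card) * (∑ σ : Equiv.Perm (Fin n), ∏ i ∈ insert j S, bval (x (σ i))) =
      ((∑ i, bval (x i)) - S.card) * (∑ σ : Equiv.Perm (Fin n), ∏ i ∈ S, bval (x (σ i))) := by
  have h1 : ∀ l ∈ Sᶜ, (∑ σ : Equiv.Perm (Fin n), ∏ i ∈ insert l S, bval (x (σ i))) =
      (∑ σ : Equiv.Perm (Fin n), ∏ i ∈ insert j S, bval (x (σ i))) := by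
    intro l hl
    have hl' : l ∉ S := by simpa using hl
    refine Fintype.sum_equiv (Equiv.mulRight (Equiv.swap l j)) _ _ ?_
    intro σ
    rw [Finset.prod_insert hl', Finset.prod_insert hj]
    congr 1
    · simp
    · refine Finset.prod_congr rfl fun i hi => ?_
      have : Equiv.swap l j i = i := Equiv.swap_apply_of_ne_of_ne
        (fun h => hl' (h ▸ hi)) (fun h => hj (h ▸ hi))
      simp [this]
  have h2 := Finset.sum_congr (rfl : Sᶜ = Sᶜ) h1
  rw [Finset.sum_const, nsmul_eq_mul, Finset.card_compl, Fintype.card_fin,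
    Nat.cast_sub (by simpa using Finset.card_le_univ S)] at h2
  rw [← h2, Finset.sum_comm, Finset.mul_sum]
  refine Finset.sum_congr rfl fun σ _ => ?_
  have h3 : ∑ i, bval (x i) = ∑ i ∈ S, bval (x (σ i)) + ∑ i ∈ Sᶜ, bval (x (σ i)) := by
    rw [Finset.sum_add_sum_compl]
    exact (Equiv.sum_comp σ (fun i => bval (x i))).symm
  have h4 : (∑ i ∈ S, bval (x (σ i))) * ∏ i ∈ S, bval (x (σ i)) =
      S.card * ∏ i ∈ S, bval (x (σ i)) := by
    rw [Finset.sum_mul, ← nsmul_eq_mul, ← Finset.sum_const]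
    refine Finset.sum_congr rfl fun i hi => ?_
    rw [← Finset.mul_prod_erase S _ hi, ← mul_assoc, bval_sq]
  have h5 : ∑ l ∈ Sᶜ, ∏ i ∈ insert l S, bval (x (σ i)) =
      (∑ l ∈ Sᶜ, bval (x (σ l))) * ∏ i ∈ S, bval (x (σ i)) := by
    rw [Finset.sum_mul]
    refine Finset.sum_congr rfl fun l hl => ?_
    rw [Finset.prod_insert (by simpa using hl)]
  rw [h5, h3]
  linear_combination -h4

lemma symF_poly (n : ℕ) (S : Finset (Fin n)) :
    ∃ q : Polynomial ℝ, q.natDegree ≤ S.card ∧ ∀ x : Fin n → Bool,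
      (∑ σ : Equiv.Perm (Fin n), ∏ i ∈ S, bval (x (σ i))) = q.eval (∑ i, bval (x i)) := by
  induction S using Finset.induction_on with
  | empty => exact ⟨Polynomial.C (Nat.factorial n : ℝ), by simp, by simp [Fintype.card_perm]⟩
  | insert j S hj ih =>
    obtain ⟨q, hq, h⟩ := ih
    have hlt : S.card < n := by
      have := Finset.card_le_univ (insert j S)
      rw [Finset.card_insert_of_notMem hj, Fintype.card_fin] at this
      omega
    have hne : (n : ℝ) - S.card ≠ 0 := by
      have : (S.card : ℝ) < n := by exact_mod_cast hlt
      linarith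
    refine ⟨Polynomial.C ((n : ℝ) - S.card)⁻¹ *
      ((Polynomial.X - Polynomial.C (S.card : ℝ)) * q), ?_, fun x => ?_⟩
    · rw [Finset.card_insert_of_notMem hj]
      refine (Polynomial.natDegree_C_mul_le _ _).trans (Polynomial.natDegree_mul_le.trans ?_)
      rw [Polynomial.natDegree_X_sub_C]
      omega
    · have := symF_step n S j hj x
      rw [h x] at this
      simp only [Polynomial.eval_mul, Polynomial.eval_C, Polynomial.eval_sub, Polynomial.eval_X]
      rw [← this, inv_mul_cancel_left₀ hne]

/-- Symmetrization: for any real polynomial `p` in `n` variables, there is a univariate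
polynomial `q` with `deg q ≤ deg p` such that for all `x ∈ {0,1}^n`,
`(1/n!)·Σ_{σ ∈ Sₙ} p(x_{σ(1)}, …, x_{σ(n)}) = q(x₁ + ⋯ + xₙ)`. -/
theorem symmetrization_univariate (n : ℕ) (p : MvPolynomial (Fin n) ℝ) :
    ∃ q : Polynomial ℝ, q.natDegree ≤ p.totalDegree ∧
      ∀ x : Fin n → Bool,
        (∑ σ : Equiv.Perm (Fin n),
            MvPolynomial.eval (fun i => bval (x (σ i))) p) / (Nat.factorial n : ℝ) =
          q.eval (∑ i : Fin n, bval (x i)) := by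
  choose q hq h using symF_poly n
  refine ⟨∑ d ∈ p.support, Polynomial.C (p.coeff d / (Nat.factorial n : ℝ)) * q d.support,
    ?_, fun x => ?_⟩
  · refine Polynomial.natDegree_sum_le_of_forall_le _ _ fun d hd => ?_
    refine (Polynomial.natDegree_C_mul_le _ _).trans ((hq _).trans ?_)
    refine le_trans ?_ (MvPolynomial.le_totalDegree hd)
    rw [Finset.card_eq_sum_ones, Finsupp.sum]
    refine Finset.sum_le_sum fun i hi => ?_
    exact Nat.one_le_iff_ne_zero.mpr (Finsupp.mem_support_iff.mp hi)
  · simp only [MvPolynomial.eval_eq, Polynomial.eval_finsetSum, Polynomial.eval_mul,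
      Polynomial.eval_C, ← h]
    rw [Finset.sum_comm, Finset.sum_div]
    refine Finset.sum_congr rfl fun d _ => ?_
    rw [← Finset.mul_sum, div_mul_eq_mul_div]
    congr 2
    refine Finset.sum_congr rfl fun σ _ => Finset.prod_congr rfl fun i hi => ?_
    exact bval_pow _ _ (Finsupp.mem_support_iff.mp hi)
end

section
/- Let n ≥ 1 be an integer, let b₁ ≤ b₂ and c > 0 be reals, and let p ∈ ℝ[x] be a univariate real polynomial such that b₁ ≤ p(i) ≤ b₂ for every integer 0 ≤ i ≤ n, and such that |p′(x₀)| ≥ c for some real 0 ≤ x₀ ≤ n. Then deg(p) ≥ √(c·n/(c + b₂ − b₁)). -/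
open Polynomial in
lemma aux_schur_one (d : ℕ) (B : ℝ[X]) (hB : (X * B).natDegree ≤ d)
    (h : ∀ x : ℝ, x ∈ Set.Icc (-1 : ℝ) 1 → (1 - x ^ 2) * (B.eval x) ^ 2 ≤ 1) :
    (B.eval 1) ^ 2 ≤ (d : ℝ) ^ 2 := by
  have hB0 : B.natDegree ≤ d := by
    by_cases h0 : B = 0
    · simp [h0]
    · rw [natDegree_X_mul h0] at hB; omega
  set Q : ℝ[X] := 1 - C 2 * (B ^ 2 - (X * B) ^ 2) with hQ
  have hdeg : Q.natDegree ≤ 2 * d := by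
    have h1 : (B ^ 2).natDegree ≤ 2 * d := natDegree_pow_le_of_le 2 hB0
    have h2 : ((X * B) ^ 2).natDegree ≤ 2 * d := natDegree_pow_le_of_le 2 hB
    refine natDegree_sub_le_of_le (by simp) ?_ |>.trans (max_self _).le
    refine (natDegree_C_mul_le _ _).trans ?_
    exact (natDegree_sub_le_of_le h1 h2).trans (max_self _).le
  have hdeg' : Q.degree ≤ ((2 * d : ℕ) : WithBot ℕ) := natDegree_le_iff_degree_le.mp hdeg
  have hb : ∀ x ∈ Set.Icc (-1 : ℝ) 1, |Q.eval x| ≤ 1 := by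
    intro x hx
    have h1 := h x hx
    have h2 : 0 ≤ (1 - x ^ 2) * (B.eval x) ^ 2 := by
      apply mul_nonneg _ (sq_nonneg _)
      nlinarith [hx.1, hx.2]
    have h3 : Q.eval x = 1 - 2 * ((1 - x ^ 2) * (B.eval x) ^ 2) := by
      simp [hQ]; ring
    rw [h3, abs_le]; constructor <;> linarith
  have key := Chebyshev.eval_iterate_derivative_le_of_forall_abs_le_one (k := 1) (x := 1)
    le_rfl hdeg' hb
  have hT := Chebyshev.derivative_T_eval_one (R := ℝ) ((2 * d : ℕ) : ℤ)
  simp only [Function.iterate_one] at key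
  rw [hT] at key
  have h4 : Q.derivative.eval 1 = 4 * (B.eval 1) ^ 2 := by
    simp [hQ, derivative_pow, derivative_mul]; ring
  rw [h4] at key
  push_cast at key
  nlinarith

open Polynomial in
lemma aux_schur (d : ℕ) (K : ℝ) (hK : 0 < K) (B : ℝ[X]) (hB : (X * B).natDegree ≤ d)
    (h : ∀ x : ℝ, x ∈ Set.Icc (-1 : ℝ) 1 → (1 - x ^ 2) * (B.eval x) ^ 2 ≤ K ^ 2)
    (y : ℝ) (hy : y ∈ Set.Icc (-1 : ℝ) 1) :
    (B.eval y) ^ 2 ≤ (d * K) ^ 2 := by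
  have hB0 : B = 0 ∨ B.natDegree + 1 ≤ d := by
    by_cases h0 : B = 0
    · simp [h0]
    · rw [natDegree_X_mul h0] at hB; right; omega
  rcases hB0 with rfl | hB0
  · simp; positivity
  have key := aux_schur_one d (C K⁻¹ * B.comp (C y * X)) ?_ ?_
  · simp at key
    rw [mul_pow] at key ⊢
    rw [inv_pow, inv_mul_le_iff₀ (by positivity)] at key
    linarith
  · refine natDegree_mul_le.trans ?_
    have h1 : (C K⁻¹ * B.comp (C y * X)).natDegree ≤ B.natDegree := by
      refine (natDegree_C_mul_le _ _).trans ?_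
      refine natDegree_comp_le.trans ?_
      have : (C y * X : ℝ[X]).natDegree ≤ 1 := (natDegree_C_mul_le _ _).trans natDegree_X_le
      nlinarith
    simp only [natDegree_X]; omega
  · intro x hx
    have hyx : y ^ 2 ≤ 1 := by nlinarith [hy.1, hy.2]
    have hxx : x ^ 2 ≤ 1 := by nlinarith [hx.1, hx.2]
    have hm : (y * x) ^ 2 ≤ x ^ 2 := by rw [mul_pow]; nlinarith [sq_nonneg x]
    have h1 := h (y * x) (abs_le.mp ((sq_le_one_iff_abs_le_one _).mp (hm.trans hxx)))
    simp only [eval_mul, eval_C, eval_comp, eval_X]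
    rw [mul_pow, inv_pow, mul_left_comm, inv_mul_le_iff₀ (by positivity), mul_one]
    refine le_trans ?_ h1
    gcongr

open Polynomial in
lemma aux_split (y v : ℝ) (d : ℕ) : ∀ P : ℝ[X], P.natDegree ≤ d →
    ∃ A B : ℝ[X], A.natDegree ≤ d ∧ B.natDegree ≤ d ∧ (X * B).natDegree ≤ d ∧
      A.eval 1 = P.eval y ∧ B.eval 1 = - v * P.derivative.eval y ∧
      ∀ x u : ℝ, x ^ 2 + u ^ 2 = 1 → P.eval (x * y - u * v) = A.eval x + u * B.eval x := by
  induction d with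
  | zero =>
    intro P hP
    obtain ⟨a, rfl⟩ := natDegree_eq_zero.mp (Nat.le_zero.mp hP)
    exact ⟨C a, 0, by simp⟩
  | succ d ih =>
    intro P hP
    obtain ⟨A, B, hA, hB, hXB, hA1, hB1, hAB⟩ := ih P.divX (by
      rw [natDegree_divX_eq_natDegree_tsub_one]; omega)
    have hPe : P = P.divX * X + C (P.coeff 0) := (divX_mul_X_add P).symm
    set Q := P.divX
    set a := P.coeff 0
    have hX : ∀ F : ℝ[X], F.natDegree ≤ d → (X * F).natDegree ≤ d + 1 := by
      intro F hF
      refine natDegree_mul_le.trans ?_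
      simp only [natDegree_X]; omega
    have hC : ∀ (r : ℝ) (F : ℝ[X]) (e : ℕ), F.natDegree ≤ e → (C r * F).natDegree ≤ e :=
      fun r F e hF => (natDegree_C_mul_le _ _).trans hF
    have hsub : ∀ (F G : ℝ[X]) (e : ℕ), F.natDegree ≤ e → G.natDegree ≤ e →
      (F - G).natDegree ≤ e :=
      fun F G e hF hG => (natDegree_sub_le_of_le hF hG).trans (max_self _).le
    refine ⟨C y * (X * A) - C v * (B - X * (X * B)) + C a, C y * (X * B) - C v * A,
      ?_, ?_, ?_, ?_, ?_, ?_⟩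
    · rw [natDegree_add_C]
      exact hsub _ _ _ (hC _ _ _ (hX _ hA)) (hC _ _ _ (hsub _ _ _ (hB.trans d.le_succ) (hX _ hXB)))
    · exact hsub _ _ _ (hC _ _ _ (hXB.trans d.le_succ)) (hC _ _ _ (hA.trans d.le_succ))
    · exact hX _ (hsub _ _ _ (hC _ _ _ hXB) (hC _ _ _ hA))
    · rw [hPe]; simp [hA1]; ring
    · rw [hPe]; simp [hA1, hB1]; ring
    · intro x u hxu
      rw [hPe]
      simp only [eval_add, eval_mul, eval_X, eval_C, eval_sub, hAB x u hxu]
      linear_combination (- v * eval x B) * hxu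

open Polynomial in
lemma aux_markov (d : ℕ) (P : ℝ[X]) (hP : P.natDegree ≤ d)
    (h : ∀ x ∈ Set.Icc (-1 : ℝ) 1, |P.eval x| ≤ 1) (y : ℝ) (hy : y ∈ Set.Icc (-1 : ℝ) 1) :
    |P.derivative.eval y| ≤ (d : ℝ) ^ 2 := by
  rcases Nat.eq_zero_or_pos d with rfl | hd
  · obtain ⟨a, rfl⟩ := natDegree_eq_zero.mp (Nat.le_zero.mp hP)
    simp
  have hdR : (0 : ℝ) < d := by exact_mod_cast hd
  have key := aux_schur d d hdR P.derivative ?_ ?_ y hy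
  · rw [sq (d : ℝ)]; exact abs_le_of_sq_le_sq key (by positivity)
  · refine natDegree_mul_le.trans ?_
    have := natDegree_derivative_le P
    simp only [natDegree_X]; omega
  · intro z hz
    have hz1 : 0 ≤ 1 - z ^ 2 := by nlinarith [hz.1, hz.2]
    set v := √(1 - z ^ 2) with hv
    have hv2 : v ^ 2 = 1 - z ^ 2 := Real.sq_sqrt hz1
    obtain ⟨A, B, -, -, hXB, -, hB1, hAB⟩ := aux_split z v d P hP
    have := aux_schur_one d B hXB ?_
    · rw [hB1] at this
      rw [← hv2]; linarith
    · intro x hx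
      have hx1 : 0 ≤ 1 - x ^ 2 := by nlinarith [hx.1, hx.2]
      have hu2 : (√(1 - x ^ 2)) ^ 2 = 1 - x ^ 2 := Real.sq_sqrt hx1
      set u := √(1 - x ^ 2)
      have e1 := hAB x u (by linarith)
      have e2 := hAB x (-u) (by linarith [neg_sq u])
      have m1 : (x * z - u * v) ^ 2 ≤ 1 := by
        nlinarith [sq_nonneg (x * v + u * z)]
      have m2 : (x * z - (-u) * v) ^ 2 ≤ 1 := by
        nlinarith [sq_nonneg (x * v - u * z)]
      have b1 := abs_le.mp (h _ (abs_le.mp ((sq_le_one_iff_abs_le_one _).mp m1)))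
      have b2 := abs_le.mp (h _ (abs_le.mp ((sq_le_one_iff_abs_le_one _).mp m2)))
      rw [e1] at b1
      rw [e2] at b2
      rw [← hu2, ← mul_pow]
      rw [sq_le_one_iff_abs_le_one, abs_le]
      constructor <;> linarith [b1.1, b1.2, b2.1, b2.2]

/-- A consequence of the Markov brothers' inequality: if a univariate real polynomial
`p` satisfies `b₁ ≤ p(i) ≤ b₂` at every integer `0 ≤ i ≤ n` and `|p′(x₀)| ≥ c > 0` at
some real `0 ≤ x₀ ≤ n`, then `deg p ≥ √(c·n/(c + b₂ − b₁))`. -/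
theorem degree_ge_sqrt_of_bounded_values_of_large_derivative
    (n : ℕ) (hn : 1 ≤ n) (b₁ b₂ c : ℝ) (hb : b₁ ≤ b₂) (hc : 0 < c)
    (p : Polynomial ℝ)
    (hbound : ∀ i : ℕ, i ≤ n → b₁ ≤ p.eval (i : ℝ) ∧ p.eval (i : ℝ) ≤ b₂)
    (x₀ : ℝ) (hx₀ : 0 ≤ x₀) (hx₀' : x₀ ≤ n)
    (hder : c ≤ |p.derivative.eval x₀|) :
    Real.sqrt (c * n / (c + b₂ - b₁)) ≤ (p.natDegree : ℝ) := by
  have hnR : (0 : ℝ) < n := by exact_mod_cast hn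
  obtain ⟨x₁, hx₁, hmax⟩ := isCompact_Icc.exists_isMaxOn (s := Set.Icc (0 : ℝ) n)
    ⟨x₀, hx₀, hx₀'⟩ (p.derivative.continuous.abs.continuousOn)
  have hmax' : ∀ x ∈ Set.Icc (0 : ℝ) n, |p.derivative.eval x| ≤ |p.derivative.eval x₁| :=
    fun x hx => hmax hx
  set k := |p.derivative.eval x₁| with hk
  have hck : c ≤ k := hder.trans (hmax' x₀ ⟨hx₀, hx₀'⟩)
  have hk0 : 0 < k := hc.trans_le hck
  set M := (b₂ - b₁ + k) / 2 with hM
  have hM0 : 0 < M := by rw [hM]; linarith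
  set m := (b₁ + b₂) / 2 with hm
  have hbd : ∀ x ∈ Set.Icc (0 : ℝ) n, |p.eval x - m| ≤ M := by
    intro x hx
    have hx0 : 0 ≤ x + 1 / 2 := by linarith [hx.1]
    set i := ⌊x + 1 / 2⌋₊ with hi
    have h1 : (i : ℝ) ≤ x + 1 / 2 := Nat.floor_le hx0
    have h2 : x + 1 / 2 < i + 1 := Nat.lt_floor_add_one _
    have hin : i ≤ n := by
      have : (i : ℝ) < n + 1 := by linarith [hx.2]
      have : i < n + 1 := by exact_mod_cast this
      omega
    have himem : (i : ℝ) ∈ Set.Icc (0 : ℝ) n := ⟨by positivity, by exact_mod_cast hin⟩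
    have hmv := (convex_Icc (0 : ℝ) n).norm_image_sub_le_of_norm_deriv_le
      (f := fun t => p.eval t) (C := k) (fun t _ => p.differentiableAt)
      (fun t ht => by rw [Polynomial.deriv]; exact hmax' t ht) himem hx
    rw [Real.norm_eq_abs, Real.norm_eq_abs] at hmv
    have h3 : |x - i| ≤ 1 / 2 := by rw [abs_le]; constructor <;> linarith
    have h4 : |p.eval x - p.eval (i : ℝ)| ≤ k / 2 := hmv.trans (by nlinarith)
    have h5 := hbound i hin
    rw [abs_le] at h4 ⊢
    constructor <;> linarith [h4.1, h4.2, h5.1, h5.2]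
  have hmk := aux_markov p.natDegree
    (Polynomial.C M⁻¹ * (p.comp (Polynomial.C ((n : ℝ) / 2) * Polynomial.X
      + Polynomial.C ((n : ℝ) / 2)) - Polynomial.C m)) ?_ ?_ (2 * x₁ / n - 1) ?_
  · have e : (n : ℝ) / 2 * (2 * x₁ / n - 1) + n / 2 = x₁ := by field_simp; ring
    simp only [Polynomial.derivative_mul, Polynomial.derivative_C, Polynomial.derivative_comp,
      Polynomial.derivative_sub, Polynomial.derivative_add, Polynomial.derivative_X,
      Polynomial.eval_mul, Polynomial.eval_C, Polynomial.eval_add, Polynomial.eval_sub,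
      Polynomial.eval_comp, Polynomial.eval_X, Polynomial.eval_zero, Polynomial.eval_one, e,
      zero_mul, zero_add, mul_one, add_zero, sub_zero] at hmk
    rw [abs_mul, abs_mul, ← hk, abs_of_pos (inv_pos.mpr hM0), abs_of_pos (by positivity : (0 : ℝ) < n / 2),
      inv_mul_le_iff₀ hM0] at hmk
    refine Real.sqrt_le_iff.mpr ⟨by positivity, ?_⟩
    have h6 : c * n / (c + b₂ - b₁) ≤ k * n / (k + b₂ - b₁) := by
      rw [div_le_div_iff₀ (by linarith) (by linarith)]
      nlinarith [mul_nonneg hnR.le (mul_nonneg (sub_nonneg.mpr hck) (sub_nonneg.mpr hb))]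
    refine h6.trans ?_
    rw [div_le_iff₀ (by linarith)]
    rw [hM] at hmk
    linarith
  · refine (Polynomial.natDegree_C_mul_le _ _).trans ?_
    rw [Polynomial.natDegree_sub_C]
    refine Polynomial.natDegree_comp_le.trans ?_
    have := Polynomial.natDegree_linear_le (a := (n : ℝ) / 2) (b := (n : ℝ) / 2)
    nlinarith
  · intro x hx
    have h7 := hbd ((n : ℝ) / 2 * x + n / 2) ⟨by nlinarith [hx.1], by nlinarith [hx.2]⟩
    simp only [Polynomial.eval_mul, Polynomial.eval_C, Polynomial.eval_add, Polynomial.eval_sub,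
      Polynomial.eval_comp, Polynomial.eval_X]
    rw [abs_mul, abs_of_pos (inv_pos.mpr hM0), inv_mul_le_iff₀ hM0]
    linarith
  · constructor
    · have : 0 ≤ 2 * x₁ / n := div_nonneg (by linarith [hx₁.1]) hnR.le
      linarith
    · have : 2 * x₁ / n ≤ 2 := by rw [div_le_iff₀ hnR]; linarith [hx₁.2]
      linarith
end

section
/- Let f : {0,1}^n → {0,1} be a Boolean function with f(0,…,0) = 0 and f(x) = 1 for every x ∈ {0,1}^n of Hamming weight exactly 1. Then deg(f) ≥ √(n/2). -/
open Polynomial in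
lemma aux_deriv_T (d : ℕ) : (derivative (Chebyshev.T ℝ d)).eval 1 = (d : ℝ) ^ 2 := by
  rw [Chebyshev.T_derivative_eq_U]
  simp [Chebyshev.U_eval_one]
  ring

/-- indicator of a finset as bits -/
lemma aux_expand {n : ℕ} (p : MvPolynomial (Fin n) ℝ) (hml : Multilinear p) (t : ℝ) :
    MvPolynomial.eval (fun _ => t) p =
      ∑ s ∈ (Finset.univ : Finset (Fin n)).powerset,
        (t ^ s.card * (1 - t) ^ (Finset.univ \ s).card) *
          MvPolynomial.eval (fun i => bval (decide (i ∈ s))) p := by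
  simp only [MvPolynomial.eval_eq']
  simp only [Finset.mul_sum]
  rw [Finset.sum_comm]
  refine Finset.sum_congr rfl fun m hm => ?_
  have h : ∏ i, t ^ m i = ∏ i, (t * 1 ^ m i + (1 - t) * 0 ^ m i) := by
    refine Finset.prod_congr rfl fun i _ => ?_
    have := hml m hm i
    interval_cases (m i) <;> simp
  rw [h, Finset.prod_add, Finset.mul_sum]
  refine Finset.sum_congr rfl fun s hs => ?_
  rw [Finset.prod_mul_distrib, Finset.prod_mul_distrib, Finset.prod_const, Finset.prod_const,
    ← Finset.prod_sdiff (Finset.subset_univ s) (f := fun i => bval (decide (i ∈ s)) ^ m i)]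
  have h1 : ∏ i ∈ s, bval (decide (i ∈ s)) ^ m i = ∏ i ∈ s, (1 : ℝ) ^ m i :=
    Finset.prod_congr rfl fun i hi => by simp [bval, hi]
  have h2 : ∏ i ∈ Finset.univ \ s, bval (decide (i ∈ s)) ^ m i
      = ∏ i ∈ Finset.univ \ s, (0 : ℝ) ^ m i :=
    Finset.prod_congr rfl fun i hi => by
      have : i ∉ s := (Finset.mem_sdiff.mp hi).2
      simp [bval, this]
  rw [h1, h2]
  ring

lemma aux_bound {n : ℕ} (f : (Fin n → Bool) → Bool) (p : MvPolynomial (Fin n) ℝ)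
    (hml : Multilinear p) (hrep : Represents p f) (t : ℝ) (h0 : 0 ≤ t) (h1 : t ≤ 1) :
    0 ≤ MvPolynomial.eval (fun _ => t) p ∧ MvPolynomial.eval (fun _ => t) p ≤ 1 := by
  have h1' : 0 ≤ 1 - t := by linarith
  have hb : ∀ b, 0 ≤ bval b ∧ bval b ≤ 1 := by intro b; cases b <;> simp [bval]
  rw [aux_expand p hml t]
  constructor
  · refine Finset.sum_nonneg fun s _ => ?_
    rw [hrep fun i => decide (i ∈ s)]
    have := (hb (f fun i => decide (i ∈ s))).1
    positivity
  · calc _ ≤ ∑ s ∈ (Finset.univ : Finset (Fin n)).powerset,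
        (t ^ s.card * (1 - t) ^ (Finset.univ \ s).card) := by
          refine Finset.sum_le_sum fun s _ => ?_
          rw [hrep fun i => decide (i ∈ s)]
          exact mul_le_of_le_one_right (by positivity) (hb _).2
      _ = ∏ i : Fin n, (t + (1 - t)) := by
          rw [Finset.prod_add]
          simp
      _ = 1 := by simp
      _ ≤ 1 := le_rfl

open Polynomial in
lemma aux_aeval {n : ℕ} (p : MvPolynomial (Fin n) ℝ) (q : ℝ[X]) :
    MvPolynomial.aeval (fun _ => q) p = ∑ m ∈ p.support, C (p.coeff m) * ∏ i, q ^ m i := by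
  rw [MvPolynomial.aeval_def, MvPolynomial.eval₂_eq']
  rfl

open Polynomial in
lemma aux_deg {n : ℕ} (p : MvPolynomial (Fin n) ℝ) (q : ℝ[X]) (hq : q.natDegree ≤ 1) :
    (MvPolynomial.aeval (fun _ => q) p : ℝ[X]).natDegree ≤ p.totalDegree := by
  rw [aux_aeval]
  refine natDegree_sum_le_of_forall_le _ _ fun m hm => ?_
  rw [Finset.prod_pow_eq_pow_sum]
  refine (natDegree_C_mul_le _ _).trans ?_
  refine natDegree_pow_le.trans ?_
  have := MvPolynomial.le_totalDegree hm
  rw [Finsupp.sum_fintype _ _ (by simp)] at this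
  nlinarith

open Polynomial in
lemma aux_deriv {n : ℕ} (p : MvPolynomial (Fin n) ℝ) (hml : Multilinear p) (q : ℝ[X])
    (hq : q.eval 1 = 0) :
    (derivative (MvPolynomial.aeval (fun _ => q) p : ℝ[X])).eval 1 =
      (∑ i, (MvPolynomial.eval (fun j => bval (decide (j = i))) p
        - MvPolynomial.eval (fun _ => 0) p)) * (derivative q).eval 1 := by
  rw [aux_aeval]
  simp only [MvPolynomial.eval_eq', derivative_sum, eval_finsetSum, ← Finset.sum_sub_distrib]
  rw [Finset.sum_comm, Finset.sum_mul]
  refine Finset.sum_congr rfl fun m hm => ?_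
  rw [derivative_C_mul, derivative_prod_finset, eval_C_mul, eval_finsetSum, Finset.mul_sum,
    Finset.sum_mul]
  refine Finset.sum_congr rfl fun i _ => ?_
  rw [← Finset.prod_erase_mul _ _ (Finset.mem_univ i),
    ← Finset.prod_erase_mul _ (fun j => (0 : ℝ) ^ m j) (Finset.mem_univ i)]
  have h2 : ∏ j ∈ Finset.univ.erase i, bval (decide (j = i)) ^ m j
      = ∏ j ∈ Finset.univ.erase i, (0 : ℝ) ^ m j :=
    Finset.prod_congr rfl fun j hj => by
      have : j ≠ i := (Finset.mem_erase.mp hj).1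
      simp [bval, this]
  rw [h2, eval_mul, eval_prod]
  simp only [eval_pow, hq]
  have := hml m hm i
  generalize m i = k at *
  interval_cases k <;> simp [bval] <;> ring

/-- If `f(0,…,0) = 0` and `f(x) = 1` for every `x` of Hamming weight 1, then
`deg f ≥ √(n/2)`, where `deg f` is the degree of the (unique) multilinear real
polynomial representing `f`. -/
theorem degree_ge_sqrt_half_n (n : ℕ) (f : (Fin n → Bool) → Bool)
    (h0 : f (fun _ => false) = false)
    (h1 : ∀ x : Fin n → Bool,
      (Finset.univ.filter fun i => x i = true).card = 1 → f x = true)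
    (p : MvPolynomial (Fin n) ℝ) (hml : Multilinear p) (hrep : Represents p f) :
    Real.sqrt ((n : ℝ) / 2) ≤ (p.totalDegree : ℝ) := by
  have h00 : MvPolynomial.eval (fun _ => 0) p = 0 := by
    have := hrep (fun _ => false)
    simpa [h0, bval] using this
  have h11 : ∀ i, MvPolynomial.eval (fun j => bval (decide (j = i))) p = 1 := by
    intro i
    rw [hrep fun j => decide (j = i), h1]
    · simp [bval]
    · simp [Finset.filter_eq']
  set q : Polynomial ℝ := Polynomial.C (1 / 2) * (1 - Polynomial.X) with hq
  have hq1 : q.eval 1 = 0 := by simp [hq]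
  have hqd : q.natDegree ≤ 1 := by
    rw [hq]
    refine (Polynomial.natDegree_C_mul_le _ _).trans ?_
    compute_degree
  set P : Polynomial ℝ := MvPolynomial.aeval (fun _ => q) p with hP
  have hPe : ∀ x, P.eval x = MvPolynomial.eval (fun _ => (1 - x) / 2) p := by
    intro x
    rw [hP, aux_aeval, MvPolynomial.eval_eq', Polynomial.eval_finsetSum]
    refine Finset.sum_congr rfl fun m _ => ?_
    simp only [Polynomial.eval_mul, Polynomial.eval_C, Polynomial.eval_prod, Polynomial.eval_pow]
    congr 1
    refine Finset.prod_congr rfl fun i _ => ?_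
    congr 1
    simp [hq]
    ring
  have hPd : (Polynomial.derivative P).eval 1 = -(n : ℝ) / 2 := by
    rw [hP, aux_deriv p hml q hq1]
    simp only [h11, h00]
    simp [hq]
    ring
  set Q : Polynomial ℝ := Polynomial.C 1 - Polynomial.C 2 * P with hQ
  have hQd : Q.degree ≤ (p.totalDegree : ℕ) := by
    refine Polynomial.natDegree_le_iff_degree_le.mp ?_
    refine (Polynomial.natDegree_sub_le _ _).trans (max_le ?_ ?_)
    · simp
    · exact (Polynomial.natDegree_C_mul_le _ _).trans (aux_deg p q hqd)
  have key := Polynomial.Chebyshev.eval_iterate_derivative_le_of_forall_abs_le_one (P := Q)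
    (k := 1) (x := 1) le_rfl hQd (by
      intro x hx
      have := aux_bound f p hml hrep ((1 - x) / 2) (by linarith [hx.2]) (by linarith [hx.1])
      rw [← hPe] at this
      rw [hQ, abs_le]
      simp only [Polynomial.eval_sub, Polynomial.eval_mul, Polynomial.eval_C]
      constructor <;> linarith [this.1, this.2])
  simp only [Function.iterate_one] at key
  rw [aux_deriv_T, hQ, Polynomial.derivative_sub, Polynomial.derivative_C_mul,
    Polynomial.derivative_C, Polynomial.eval_sub, Polynomial.eval_C_mul, hPd,
    Polynomial.eval_zero] at key
  have hn : (0 : ℝ) ≤ n := Nat.cast_nonneg n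
  exact Real.sqrt_le_iff.mpr ⟨Nat.cast_nonneg _, by linarith⟩
end

section
/- Let f : {0,1}^n → {0,1} be a Boolean function with f(0,…,0) = 0 and f(x) = 1 for every x ∈ {0,1}^n of Hamming weight exactly 1. Then the approximate degree satisfies deg̃(f) ≥ √(n/6). -/
open Polynomial in
theorem markov_zero (Q : ℝ[X]) (d : ℕ) (hd : Q.natDegree ≤ d)
    (hb : ∀ t ∈ Set.Icc (0:ℝ) 1, |Q.eval t - 1/2| ≤ 5/6) :
    (3/5) * (derivative Q).eval 0 ≤ (d:ℝ)^2 := by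
  set P : ℝ[X] := C (6/5) * (C (1/2) - Q.comp (C (1/2) - C (1/2) * X)) with hP
  have hlin : (C (1/2) - C (1/2) * X : ℝ[X]).natDegree ≤ 1 := by compute_degree
  have hPdeg : P.natDegree ≤ d := by
    refine (natDegree_C_mul_le _ _).trans ((natDegree_sub_le _ _).trans ?_)
    refine max_le (by simp) (natDegree_comp_le.trans ?_)
    calc _ ≤ d * 1 := Nat.mul_le_mul hd hlin
      _ = d := mul_one d
  have hPb : ∀ x ∈ Set.Icc (-1:ℝ) 1, |P.eval x| ≤ 1 := by
    intro x hx
    have := hb (1/2 - 1/2 * x) ⟨by linarith [hx.2], by linarith [hx.1]⟩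
    rw [abs_le] at this ⊢
    simp only [hP, eval_mul, eval_C, eval_sub, eval_comp, eval_X]
    constructor <;> linarith [this.1, this.2]
  have key := Chebyshev.eval_iterate_derivative_le_of_forall_abs_le_one (n := d) (P := P) (k := 1)
    (x := 1) le_rfl (natDegree_le_iff_degree_le.mp hPdeg) hPb
  simp only [Function.iterate_one, Chebyshev.T_derivative_eq_U] at key
  have h1 : (derivative P).eval 1 = (3/5) * (derivative Q).eval 0 := by
    simp [hP, derivative_comp]
    ring
  rw [h1] at key
  simpa [sq] using key

/-- the univariate polynomial -/
noncomputable def bernPoly {n : ℕ} (p : MvPolynomial (Fin n) ℝ) : Polynomial ℝ :=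
  ∑ m ∈ p.support, Polynomial.C (p.coeff m) * Polynomial.X ^ m.support.card

theorem bernPoly_natDegree {n : ℕ} (p : MvPolynomial (Fin n) ℝ) :
    (bernPoly p).natDegree ≤ p.totalDegree := by
  refine Polynomial.natDegree_sum_le_of_forall_le _ _ fun m hm => ?_
  refine (Polynomial.natDegree_C_mul_X_pow_le _ _).trans ?_
  refine le_trans ?_ (MvPolynomial.le_totalDegree hm)
  rw [Finsupp.sum, Finset.card_eq_sum_ones]
  refine Finset.sum_le_sum fun i hi => ?_
  have := Finsupp.mem_support_iff.mp hi
  omega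

theorem bernPoly_eval {n : ℕ} (p : MvPolynomial (Fin n) ℝ) (t : ℝ) :
    (bernPoly p).eval t = ∑ x : Fin n → Bool, (∏ i, (if x i then t else 1 - t)) *
      MvPolynomial.eval (fun i => bval (x i)) p := by
  simp only [MvPolynomial.eval_eq', Finset.mul_sum]
  rw [Finset.sum_comm, bernPoly, Polynomial.eval_finsetSum]
  refine Finset.sum_congr rfl fun m _ => ?_
  have h : ∀ x : Fin n → Bool, (∏ i, (if x i then t else 1 - t)) *
      (p.coeff m * ∏ i, bval (x i) ^ m i) =
      p.coeff m * ∏ i, ((if x i then t else 1 - t) * bval (x i) ^ m i) := by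
    intro x; rw [Finset.prod_mul_distrib]; ring
  simp only [h, ← Finset.mul_sum]
  have h2 := Finset.prod_univ_sum (fun _ : Fin n => (Finset.univ : Finset Bool))
    (fun i b => (if b then t else 1 - t) * bval b ^ m i)
  rw [Fintype.piFinset_univ] at h2
  rw [← h2]
  simp only [Polynomial.eval_mul, Polynomial.eval_C, Polynomial.eval_pow, Polynomial.eval_X]
  congr 1
  rw [← Finset.prod_const, ← Finset.prod_subset (Finset.subset_univ m.support)]
  · refine Finset.prod_congr rfl fun i hi => ?_
    have := Finsupp.mem_support_iff.mp hi
    simp [bval, this]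
  · intro i _ hi
    have := Finsupp.notMem_support_iff.mp hi
    simp [this]

theorem weight_sum (n : ℕ) (t : ℝ) :
    ∑ x : Fin n → Bool, (∏ i, (if x i then t else 1 - t)) = 1 := by
  have h2 := Finset.prod_univ_sum (fun _ : Fin n => (Finset.univ : Finset Bool))
    (fun _ b => (if b then t else 1 - t))
  rw [Fintype.piFinset_univ] at h2
  rw [← h2]
  simp

theorem eval_basis {n : ℕ} (p : MvPolynomial (Fin n) ℝ) (s : Finset (Fin n)) :
    MvPolynomial.eval (fun j => bval (decide (j ∈ s))) p =
      ∑ m ∈ p.support, p.coeff m * (if m.support ⊆ s then 1 else 0) := by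
  rw [MvPolynomial.eval_eq']
  refine Finset.sum_congr rfl fun m _ => ?_
  congr 1
  split_ifs with h
  · refine Finset.prod_eq_one fun i _ => ?_
    by_cases hi : i ∈ s
    · simp [bval, hi]
    · have : m i = 0 := Finsupp.notMem_support_iff.mp fun h' => hi (h h')
      simp [this]
  · obtain ⟨i, hi, his⟩ := Finset.not_subset.mp h
    refine Finset.prod_eq_zero (Finset.mem_univ i) ?_
    have := Finsupp.mem_support_iff.mp hi
    simp [bval, his, this]

theorem count_aux {n : ℕ} (S : Finset (Fin n)) :
    ∑ i : Fin n, ((if S ⊆ {i} then (1:ℝ) else 0) - (if S ⊆ ∅ then 1 else 0)) =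
      if S.card = 1 then 1 else 0 := by
  rcases S.eq_empty_or_nonempty with rfl | hS
  · simp
  · have he : ¬ S ⊆ ∅ := by
      rw [Finset.subset_empty]; exact hS.ne_empty
    simp only [he, if_false, sub_zero, hS.subset_singleton_iff]
    split_ifs with h
    · obtain ⟨a, rfl⟩ := Finset.card_eq_one.mp h
      simp
    · refine Finset.sum_eq_zero fun i _ => if_neg ?_
      rintro rfl
      simp at h

theorem bernPoly_deriv {n : ℕ} (p : MvPolynomial (Fin n) ℝ) :
    (Polynomial.derivative (bernPoly p)).eval 0 =
      ∑ i : Fin n, (MvPolynomial.eval (fun j => bval (decide (j ∈ ({i} : Finset (Fin n))))) p -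
        MvPolynomial.eval (fun j => bval (decide (j ∈ (∅ : Finset (Fin n))))) p) := by
  simp only [eval_basis, ← Finset.sum_sub_distrib, ← mul_sub]
  rw [Finset.sum_comm]
  simp only [← Finset.mul_sum, count_aux]
  rw [← Polynomial.coeff_zero_eq_eval_zero, Polynomial.coeff_derivative]
  simp [bernPoly, Polynomial.coeff_X_pow, eq_comm]

theorem approx_degree_ge_sqrt_sixth_n (n : ℕ) (f : (Fin n → Bool) → Bool)
    (h0 : f (fun _ => false) = false)
    (h1 : ∀ x : Fin n → Bool,
      (Finset.univ.filter fun i => x i = true).card = 1 → f x = true)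
    (p : MvPolynomial (Fin n) ℝ) (happrox : Approximates p f) :
    Real.sqrt ((n : ℝ) / 6) ≤ (p.totalDegree : ℝ) := by
  have hb : ∀ t ∈ Set.Icc (0:ℝ) 1, |(bernPoly p).eval t - 1/2| ≤ 5/6 := by
    intro t ht
    have e : (bernPoly p).eval t - 1/2 = ∑ x : Fin n → Bool, (∏ i, (if x i then t else 1 - t)) *
        (MvPolynomial.eval (fun i => bval (x i)) p - 1/2) := by
      simp only [mul_sub, Finset.sum_sub_distrib, ← Finset.sum_mul, weight_sum, bernPoly_eval,
        one_mul]
    have hw : ∀ x : Fin n → Bool, 0 ≤ ∏ i, (if x i then t else 1 - t) := fun x =>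
      Finset.prod_nonneg fun i _ => by split_ifs <;> linarith [ht.1, ht.2]
    rw [e]
    refine (Finset.abs_sum_le_sum_abs _ _).trans ?_
    calc _ ≤ ∑ x : Fin n → Bool, (∏ i, (if x i then t else 1 - t)) * (5/6 : ℝ) := by
          refine Finset.sum_le_sum fun x _ => ?_
          rw [abs_mul, abs_of_nonneg (hw x)]
          refine mul_le_mul_of_nonneg_left ?_ (hw x)
          have := abs_lt.mp (happrox x)
          rw [abs_le]
          cases hfx : f x <;> simp [hfx, bval] at this <;> constructor <;>
            simp only [bval] <;> linarith [this.1, this.2]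
      _ = 5/6 := by rw [← Finset.sum_mul, weight_sum, one_mul]
  have hm := markov_zero _ _ (bernPoly_natDegree p) hb
  have hd : (n : ℝ) / 3 ≤ (Polynomial.derivative (bernPoly p)).eval 0 := by
    rw [bernPoly_deriv]
    calc (n : ℝ) / 3 = ∑ i : Fin n, (1/3 : ℝ) := by simp; ring
      _ ≤ _ := by
        refine Finset.sum_le_sum fun i _ => ?_
        have a := (abs_lt.mp (happrox (fun j => decide (j ∈ ({i} : Finset (Fin n)))))).1
        have b := (abs_lt.mp (happrox (fun j => decide (j ∈ (∅ : Finset (Fin n)))))).2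
        rw [h1 _ (Finset.card_eq_one.mpr ⟨i, by ext; simp⟩)] at a
        have h0' : f (fun j => decide (j ∈ (∅ : Finset (Fin n)))) = false := by simpa using h0
        rw [h0'] at b
        have e1 : bval true = 1 := by simp [bval]
        have e0 : bval false = 0 := by simp [bval]
        rw [e1] at a
        rw [e0] at b
        linarith
  rw [Real.sqrt_le_left (by positivity)]
  have : (0:ℝ) ≤ n := by positivity
  linarith
end
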